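/- For every integer k ≥ 1 there exists a finite simple graph G_k with n_k = 8k vertices that admits an IC-planar straight-line drawing, such that every straight-line drawing of G_k that is simultaneously IC-planar and RAC and in which every edge segment has length at least 1 has a bounding box of area at least (1.09)^{n_k}. Hence IC-planar straight-line RAC drawings may require area exponential in the number of vertices. -/

import Mathlib

/-- The open straight-line segment representing an edge (an unordered pair of
vertices) in a straight-line drawing `ρ`. -/
def edgeSeg {V : Type*} (ρ : V → ℝ × ℝ) : Sym2 V → Set (ℝ × ℝ) :=
  Sym2.lift ⟨fun u v => openSegment ℝ (ρ u) (ρ v),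
    fun u v => openSegment_symm ℝ (ρ u) (ρ v)⟩

/-- Two edges *cross* in the drawing `ρ`: they share no endpoint and
their open segments meet. -/
def Crosses {V : Type*} (ρ : V → ℝ × ℝ) (e f : Sym2 V) : Prop :=
  (∀ v : V, v ∈ e → v ∉ f) ∧ (edgeSeg ρ e ∩ edgeSeg ρ f).Nonempty

/-- `ρ` is a straight-line drawing of the simple graph `G`. -/
structure IsStraightLineDrawing {V : Type*} (G : SimpleGraph V) (ρ : V → ℝ × ℝ) : Prop where
  inj : Function.Injective ρ
  no_vertex_on_edge : ∀ e ∈ G.edgeSet, ∀ v : V, v ∉ e → ρ v ∉ edgeSeg ρ e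
  meet_at_most_once : ∀ e ∈ G.edgeSet, ∀ f ∈ G.edgeSet, (∀ v : V, v ∈ e → v ∉ f) →
    (edgeSeg ρ e ∩ edgeSeg ρ f).Subsingleton

/-- `ρ` is an IC-planar straight-line drawing of `G`: it is a straight-line drawing,
each edge crosses at most one other edge, and the crossed edges form a matching. -/
def IsICPlanarDrawing {V : Type*} (G : SimpleGraph V) (ρ : V → ℝ × ℝ) : Prop :=
  IsStraightLineDrawing G ρ ∧
  (∀ e ∈ G.edgeSet, ∀ f ∈ G.edgeSet, ∀ g ∈ G.edgeSet,
    Crosses ρ e f → Crosses ρ e g → f = g) ∧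
  (∀ e ∈ G.edgeSet, ∀ f ∈ G.edgeSet,
    (∃ e' ∈ G.edgeSet, Crosses ρ e e') → (∃ f' ∈ G.edgeSet, Crosses ρ f f') →
    e ≠ f → ∀ v : V, v ∈ e → v ∉ f)

/-- All vertices are placed at integer coordinates. -/
def IsGridDrawing {V : Type*} (ρ : V → ℝ × ℝ) : Prop :=
  ∀ v : V, ∃ a b : ℤ, ρ v = ((a : ℝ), (b : ℝ))

/-- `ρ` is a RAC drawing of `G`: any two crossing edges are perpendicular. -/
def IsRACDrawing {V : Type*} (G : SimpleGraph V) (ρ : V → ℝ × ℝ) : Prop :=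
  ∀ e ∈ G.edgeSet, ∀ f ∈ G.edgeSet, Crosses ρ e f →
    ∀ a b c d : V, e = s(a, b) → f = s(c, d) →
      ((ρ b).1 - (ρ a).1) * ((ρ d).1 - (ρ c).1)
        + ((ρ b).2 - (ρ a).2) * ((ρ d).2 - (ρ c).2) = 0

/-!
An IC-planar drawing of `K₅` has exactly one crossing and looks like a kite: two of its edges cross,
and the fifth vertex, the apex, completes two end points of these edges to an outer triangle
containing the other two. The graph consists of two chains of copies of `K₄`, each of which spans a
`K₅` together with a vertex of the preceding copy. Since the last copies of the two chains are
joined to each other, one of the chains lies outside all outer triangles of the other, and the edges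
between successive copies of that other chain then determine which vertices form each kite and
nest the kites in one another.

If the crossings are right angles, consider the angle spanned at the apex of a kite by the two
inner vertices, and measure it by the potential `tan θ * (p² + q²) / 4`, where `p` and `q` are the
lengths of its legs. The angle `θ'` of the outer triangle at the apex has at least twice this
potential, and passing from this angle to the one inside the next kite does not decrease the
potential. As the edges at the innermost crossing have length at least `1`, the potential starts
at `2` at least; so it is at least `2 ^ k` after `k` copies, where it bounds from below the area of
the bounding box, and `1.09 ^ 8 < 2`.

An IC-planar drawing is obtained by repeating one affine expansion, which maps every copy of `K₄`
but the innermost to the next one, so that only finitely many positions have to be examined. The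
second chain is a mirror image of the first. For `k = 1` the graph is `K₅` with isolated vertices.
-/

open Set Function

section PlaneGeometry

/-! ### Triangles and segments -/

/-- Twice the signed area of the triangle `ABC`. Its sign says on which side of the line `AB` the
point `C` lies. -/
def orient {R : Type*} [CommRing R] (A B C : R × R) : R :=
  (B.1 - A.1) * (C.2 - A.2) - (B.2 - A.2) * (C.1 - A.1)

/-- The point `P` lies in the interior of the nondegenerate triangle `ABC`, whichever way the
triangle is oriented: `P` is on the same side of each edge as the opposite corner. -/
def InsideTriangle (A B C P : ℝ × ℝ) : Prop :=
  0 < orient A B C * orient A B P ∧ 0 < orient A B C * orient B C P ∧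
    0 < orient A B C * orient C A P

section CommRing

variable {R : Type*} [CommRing R]

lemma orient_add_orient_add_orient (A B C P : R × R) :
    orient A B P + orient B C P + orient C A P = orient A B C := by
  simp only [orient]; ring

lemma orient_rotate (A B C : R × R) : orient B C A = orient A B C := by
  simp only [orient]; ring

lemma orient_swap (A B C : R × R) : orient B A C = -orient A B C := by
  simp only [orient]; ring

lemma orient_swap_right (A B C : R × R) : orient A C B = -orient A B C := by
  simp only [orient]; ring

@[simp] lemma orient_self_left (A B : R × R) : orient A A B = 0 := by
  simp only [orient]; ring

@[simp] lemma orient_self_right (A B : R × R) : orient A B B = 0 := by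
  simp only [orient]; ring

@[simp] lemma orient_self_outer (A B : R × R) : orient A B A = 0 := by
  simp only [orient]; ring

end CommRing

variable {A B C D E F P Q S Z : ℝ × ℝ}

lemma orient_lineMap (A B P Q : ℝ × ℝ) (t : ℝ) :
    orient A B (AffineMap.lineMap P Q t) = (1 - t) * orient A B P + t * orient A B Q := by
  simp only [orient, AffineMap.lineMap_apply, vsub_eq_sub, vadd_eq_add, Prod.fst_add, Prod.snd_add,
    Prod.smul_fst, Prod.smul_snd, Prod.fst_sub, Prod.snd_sub, smul_eq_mul]
  ring

lemma eq_lineMap_of_orient_eq_zero (h : orient A B C ≠ 0) (hZ : orient A B Z = 0) :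
    Z = AffineMap.lineMap A B (orient C A Z / orient A B C) := by
  have cramer_fst : (Z.1 - A.1) * orient A B C =
      orient C A Z * (B.1 - A.1) + orient A B Z * (C.1 - A.1) := by simp only [orient]; ring
  have cramer_snd : (Z.2 - A.2) * orient A B C =
      orient C A Z * (B.2 - A.2) + orient A B Z * (C.2 - A.2) := by simp only [orient]; ring
  rw [hZ, zero_mul, add_zero] at cramer_fst cramer_snd
  ext
  · rw [AffineMap.fst_lineMap, AffineMap.lineMap_apply, vsub_eq_sub, vadd_eq_add, smul_eq_mul,
      div_mul_eq_mul_div, ← cramer_fst]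
    field_simp
    ring
  · rw [AffineMap.snd_lineMap, AffineMap.lineMap_apply, vsub_eq_sub, vadd_eq_add, smul_eq_mul,
      div_mul_eq_mul_div, ← cramer_snd]
    field_simp
    ring

lemma mem_openSegment_of_orient_eq_zero (hZ : orient A B Z = 0)
    (ht : orient C A Z / orient A B C ∈ Ioo 0 1) : Z ∈ openSegment ℝ A B := by
  have hABC : orient A B C ≠ 0 := fun h => by simp [h] at ht
  rw [openSegment_eq_image_lineMap]
  exact ⟨_, ht, (eq_lineMap_of_orient_eq_zero hABC hZ).symm⟩

lemma mem_segment_of_orient_eq_zero (hABC : orient A B C ≠ 0) (hZ : orient A B Z = 0)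
    (hBC : 0 ≤ orient A B C * orient B C Z) (hCA : 0 ≤ orient A B C * orient C A Z) :
    Z ∈ segment ℝ A B := by
  have hsum := orient_add_orient_add_orient A B C Z
  rw [hZ, zero_add] at hsum
  have hsq : 0 < orient A B C * orient A B C := mul_self_pos.2 hABC
  rw [segment_eq_image_lineMap]
  refine ⟨_, ?_, (eq_lineMap_of_orient_eq_zero hABC hZ).symm⟩
  rw [← mul_div_mul_left _ _ hABC]
  refine ⟨div_nonneg hCA hsq.le, (div_le_one hsq).2 ?_⟩
  linear_combination hBC + orient A B C * hsum

lemma div_sub_mem_Ioo_of_mul_neg {a b : ℝ} (h : a * b < 0) : a / (a - b) ∈ Ioo (0 : ℝ) 1 := by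
  rcases mul_neg_iff.1 h with ⟨ha, hb⟩ | ⟨ha, hb⟩
  · have hab : 0 < a - b := by linarith
    exact ⟨div_pos ha hab, (div_lt_one hab).2 (by linarith)⟩
  · have hab : a - b < 0 := by linarith
    exact ⟨div_pos_of_neg_of_neg ha hab, (div_lt_one_of_neg hab).2 (by linarith)⟩

lemma openSegment_inter_nonempty_of_orient (hAB : orient A B C * orient A B D < 0)
    (hCD : orient C D A * orient C D B < 0) :
    (openSegment ℝ A B ∩ openSegment ℝ C D).Nonempty := by
  have hC : orient A B C ≠ 0 := left_ne_zero_of_mul hAB.ne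
  have hsub : orient A B C - orient A B D ≠ 0 := fun h => by
    rw [sub_eq_zero.1 h] at hAB
    exact hAB.not_ge (mul_self_nonneg _)
  set s := orient A B C / (orient A B C - orient A B D) with hs
  have hs_mul : s * (orient A B C - orient A B D) = orient A B C := div_mul_cancel₀ _ hsub
  set Z : ℝ × ℝ := AffineMap.lineMap C D s
  refine ⟨Z, mem_openSegment_of_orient_eq_zero (C := C) ?_ ?_, ?_⟩
  · rw [orient_lineMap]
    linear_combination -hs_mul
  · have hratio : orient C A Z / orient A B C = orient C D A / (orient C D A - orient C D B) := by
      have hneg : orient C D A - orient C D B = -(orient A B C - orient A B D) := by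
        simp only [orient]; ring
      have hCAD : orient C A D = -orient C D A := by simp only [orient]; ring
      rw [orient_lineMap, orient_self_outer, hneg, hCAD, hs]
      field_simp
      ring
    exact hratio ▸ div_sub_mem_Ioo_of_mul_neg hCD
  · rw [openSegment_eq_image_lineMap]
    exact ⟨s, div_sub_mem_Ioo_of_mul_neg hAB, rfl⟩

lemma orient_mul_orient_neg_of_inter (h : (openSegment ℝ A B ∩ openSegment ℝ C D).Nonempty)
    (hC : orient A B C ≠ 0) : orient A B C * orient A B D < 0 := by
  simp only [openSegment_eq_image_lineMap] at h
  obtain ⟨Z, ⟨t, -, rfl⟩, s, ⟨hs0, hs1⟩, hZ⟩ := h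
  have hzero : (1 - s) * orient A B C + s * orient A B D = 0 := by
    rw [← orient_lineMap, hZ, orient_lineMap]
    simp
  have hsq : 0 < (1 - s) * orient A B C ^ 2 := mul_pos (by linarith) (by positivity)
  have hmul : s * (orient A B C * orient A B D) = -((1 - s) * orient A B C ^ 2) := by
    linear_combination orient A B C * hzero
  exact neg_of_mul_neg_right (by linarith) hs0.le

lemma mem_openSegment_of_orient_eq_zero_of_ne (h : orient A B C = 0) (hAB : A ≠ B) (hBC : B ≠ C)
    (hAC : A ≠ C) :
    C ∈ openSegment ℝ A B ∨ A ∈ openSegment ℝ B C ∨ B ∈ openSegment ℝ C A := by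
  have hcol : Collinear ℝ {A, B, C} := by
    rcases eq_or_ne A.1 B.1 with h1 | h1
    · have h2 : B.2 - A.2 ≠ 0 := fun h2 => hAB (Prod.ext h1 (by linarith))
      have h3 : C.1 = A.1 := by
        have : (B.2 - A.2) * (C.1 - A.1) = 0 := by simp only [orient, h1] at h ⊢; linarith
        linarith [(mul_eq_zero.1 this).resolve_left h2]
      refine (collinear_iff_of_mem (p₀ := A) (by simp)).2 ⟨(0, 1), ?_⟩
      rintro p (rfl | rfl | rfl)
      · exact ⟨0, by simp⟩
      · exact ⟨p.2 - A.2, by ext <;> simp [h1]⟩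
      · exact ⟨p.2 - A.2, by ext <;> simp [h3]⟩
    · have h2 : B.1 - A.1 ≠ 0 := sub_ne_zero.2 h1.symm
      refine (collinear_iff_of_mem (p₀ := A) (by simp)).2 ⟨B - A, ?_⟩
      rintro p (rfl | rfl | rfl)
      · exact ⟨0, by simp⟩
      · exact ⟨1, by simp⟩
      · refine ⟨(p.1 - A.1) / (B.1 - A.1), ?_⟩
        simp only [orient] at h
        ext
        · simp [h2]
        · simp only [vadd_eq_add, Prod.snd_add, Prod.smul_snd, Prod.snd_sub, smul_eq_mul]
          field_simp
          linarith
  rcases hcol.wbtw_or_wbtw_or_wbtw with k | k | k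
  · exact .inr (.inr (openSegment_symm ℝ A C ▸
      mem_openSegment_of_ne_left_right hAB hBC.symm (mem_segment_iff_wbtw.2 k)))
  · exact .inl (openSegment_symm ℝ B A ▸
      mem_openSegment_of_ne_left_right hBC hAC (mem_segment_iff_wbtw.2 k))
  · exact .inr (.inl (openSegment_symm ℝ C B ▸
      mem_openSegment_of_ne_left_right hAC.symm hAB.symm (mem_segment_iff_wbtw.2 k)))

namespace InsideTriangle

lemma of_mul_pos {r : ℝ} (hAB : 0 < r * orient A B P) (hBC : 0 < r * orient B C P)
    (hCA : 0 < r * orient C A P) : InsideTriangle A B C P := by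
  have hABC : 0 < r * orient A B C := by
    rw [← orient_add_orient_add_orient A B C P]
    linarith
  have hr : 0 < r ^ 2 := by
    have : r ≠ 0 := left_ne_zero_of_mul hABC.ne'
    positivity
  have aux {x : ℝ} (hx : 0 < r * x) : 0 < orient A B C * x :=
    pos_of_mul_pos_right (by linarith [mul_pos hABC hx] : 0 < r ^ 2 * (orient A B C * x)) hr.le
  exact ⟨aux hAB, aux hBC, aux hCA⟩

lemma rotate (h : InsideTriangle A B C P) : InsideTriangle B C A P := by
  obtain ⟨h1, h2, h3⟩ := h
  rw [InsideTriangle, orient_rotate]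
  exact ⟨h2, h3, h1⟩

lemma swap (h : InsideTriangle A B C P) : InsideTriangle B A C P := by
  obtain ⟨h1, h2, h3⟩ := h
  rw [InsideTriangle, orient_swap, orient_swap A B P, orient_swap C A P, orient_swap B C P]
  exact ⟨by linarith, by linarith, by linarith⟩

lemma orient_ne_zero (h : InsideTriangle A B C P) : orient A B C ≠ 0 :=
  left_ne_zero_of_mul h.1.ne'

lemma ne (h : InsideTriangle A B C P) : A ≠ B := by
  rintro rfl
  simpa using h.1

lemma ne_corner (h : InsideTriangle A B C P) : P ≠ A := by
  rintro rfl
  simpa using h.1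

lemma not_insideTriangle (h : InsideTriangle A B C P) : ¬ InsideTriangle P B C A := by
  intro h'
  have hPBC : orient P B C = orient B C P := (orient_rotate P B C).symm
  have hPBA : orient P B A = -orient A B P := by simp only [orient]; ring
  have hneg := h'.1
  rw [hPBC, hPBA] at hneg
  have := mul_pos h.1 h.2.1
  nlinarith [mul_pos this (sq_pos_of_ne_zero h.orient_ne_zero), sq_pos_of_ne_zero h.orient_ne_zero,
    mul_pos hneg (sq_pos_of_ne_zero h.orient_ne_zero)]

lemma orient_mul_orient_neg (h : InsideTriangle A B C P) : orient A P B * orient A P C < 0 := by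
  have hAPC : orient A P C = orient C A P := by simp only [orient]; ring
  rw [orient_swap_right, hAPC]
  nlinarith [mul_pos h.1 h.2.2, sq_pos_of_ne_zero h.orient_ne_zero]

lemma trans (hD : InsideTriangle A B C D) (hE : InsideTriangle A B C E)
    (hF : InsideTriangle A B C F) (hP : InsideTriangle D E F P) : InsideTriangle A B C P := by
  have bary (U W : ℝ × ℝ) : orient D E F * orient U W P =
      orient E F P * orient U W D + orient F D P * orient U W E + orient D E P * orient U W F := by
    simp only [orient]; ring
  have pos (U W : ℝ × ℝ) (hUD : 0 < orient A B C * orient U W D)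
      (hUE : 0 < orient A B C * orient U W E) (hUF : 0 < orient A B C * orient U W F) :
      0 < orient A B C * orient U W P := by
    have h := add_pos (add_pos (mul_pos hP.2.1 hUD) (mul_pos hP.2.2 hUE)) (mul_pos hP.1 hUF)
    refine pos_of_mul_pos_right (a := orient D E F ^ 2) (h.trans_eq ?_) (sq_nonneg _)
    linear_combination -orient A B C * orient D E F * bary U W
  exact ⟨pos A B hD.1 hE.1 hF.1, pos B C hD.2.1 hE.2.1 hF.2.1, pos C A hD.2.2 hE.2.2 hF.2.2⟩

lemma partition_of_pos (hP : InsideTriangle A B C P) (hS : InsideTriangle A B C S)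
    (hPB : S ∉ openSegment ℝ P B) (hPA : 0 < orient A B C * orient P A S) :
    InsideTriangle P A B S ∨ InsideTriangle P B C S := by
  obtain ⟨p1, p2, p3⟩ := hP
  obtain ⟨s1, s2, -⟩ := hS
  have balance : orient A B C * orient B C P * (orient A B C * orient P A S) +
      orient A B C * orient C A P * (orient A B C * orient P B S) +
      orient A B C * orient A B P * (orient A B C * orient P C S) = 0 := by
    simp only [orient]; ring
  rcases lt_trichotomy (orient A B C * orient P B S) 0 with hneg | hzero | hpos
  · exact .inl (of_mul_pos hPA s1 (by rw [orient_swap P B S]; linarith))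
  · have hT : orient A B C ≠ 0 := left_ne_zero_of_mul p1.ne'
    have hsum : orient A B P = orient A B S + orient P A S - orient P B S := by
      simp only [orient]; ring
    refine absurd (mem_openSegment_of_orient_eq_zero (C := A)
      ((mul_eq_zero.1 hzero).resolve_left hT) ?_) hPB
    rw [orient_swap P A S, ← orient_rotate P B A, orient_swap A B P, neg_div_neg_eq,
      ← mul_div_mul_left _ _ hT]
    refine ⟨div_pos hPA p1, (div_lt_one p1).2 ?_⟩
    rw [hsum, mul_sub, mul_add]
    linarith
  · refine .inr (of_mul_pos hpos s2 ?_)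
    have := mul_pos p2 hPA
    have := mul_pos p3 hpos
    rw [orient_swap P C S]
    nlinarith

lemma partition (hP : InsideTriangle A B C P) (hS : InsideTriangle A B C S) (hne : S ≠ P)
    (hPA : S ∉ openSegment ℝ P A) (hPB : S ∉ openSegment ℝ P B) (hPC : S ∉ openSegment ℝ P C) :
    InsideTriangle P A B S ∨ InsideTriangle P B C S ∨ InsideTriangle P C A S := by
  by_cases hA : 0 < orient A B C * orient P A S
  · rcases hP.partition_of_pos hS hPB hA with k | k <;> simp [k]
  by_cases hB : 0 < orient A B C * orient P B S
  · rcases hP.rotate.partition_of_pos hS.rotate hPC (by rwa [orient_rotate]) with k | k <;> simp [k]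
  by_cases hC : 0 < orient A B C * orient P C S
  · rcases hP.rotate.rotate.partition_of_pos hS.rotate.rotate hPA
      (by rwa [orient_rotate, orient_rotate]) with k | k <;> simp [k]
  have balance : orient A B C * orient B C P * (orient A B C * orient P A S) +
      orient A B C * orient C A P * (orient A B C * orient P B S) +
      orient A B C * orient A B P * (orient A B C * orient P C S) = 0 := by
    simp only [orient]; ring
  obtain ⟨p1, p2, p3⟩ := hP
  have hT : orient A B C ≠ 0 := left_ne_zero_of_mul p1.ne'
  push Not at hA hB hC
  have hPAS : orient P A S = 0 := by
    refine (mul_eq_zero.1 (le_antisymm hA ?_)).resolve_left hT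
    nlinarith [mul_nonneg_of_nonpos_of_nonpos hB (neg_nonpos.2 p3.le),
      mul_nonneg_of_nonpos_of_nonpos hC (neg_nonpos.2 p1.le)]
  have hPBS : orient P B S = 0 := by
    refine (mul_eq_zero.1 (le_antisymm hB ?_)).resolve_left hT
    nlinarith [mul_nonneg_of_nonpos_of_nonpos hA (neg_nonpos.2 p2.le),
      mul_nonneg_of_nonpos_of_nonpos hC (neg_nonpos.2 p1.le)]
  have hPAB : orient P A B ≠ 0 := by
    rw [← orient_rotate]
    exact right_ne_zero_of_mul p1.ne'
  refine absurd ?_ hne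
  rw [eq_lineMap_of_orient_eq_zero hPAB hPAS, orient_swap, hPBS]
  simp

lemma exists_mem_segment (hP : InsideTriangle A B C P) (hQ : ¬ InsideTriangle A B C Q) :
    ∃ Z ∈ segment ℝ P Q, Z ∈ segment ℝ A B ∨ Z ∈ segment ℝ B C ∨ Z ∈ segment ℝ C A := by
  have hT := hP.orient_ne_zero
  let g (U W : ℝ × ℝ) (t : ℝ) : ℝ := orient A B C * orient U W (AffineMap.lineMap P Q t)
  let f (t : ℝ) : ℝ := min (g A B t) (min (g B C t) (g C A t))
  have hf : Continuous f := by
    simp only [f, g, orient_lineMap]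
    fun_prop
  have hf0 : 0 ≤ f 0 := by
    simp only [f, g, AffineMap.lineMap_apply_zero]
    exact le_min hP.1.le (le_min hP.2.1.le hP.2.2.le)
  have hf1 : f 1 ≤ 0 := by
    simp only [f, g, AffineMap.lineMap_apply_one]
    by_contra! hpos
    obtain ⟨h1, h23⟩ := lt_min_iff.1 hpos
    exact hQ ⟨h1, lt_min_iff.1 h23⟩
  obtain ⟨t, ht, hft⟩ := intermediate_value_Icc' zero_le_one hf.continuousOn ⟨hf1, hf0⟩
  refine ⟨AffineMap.lineMap P Q t, segment_eq_image_lineMap ℝ P Q ▸ ⟨t, ht, rfl⟩, ?_⟩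
  obtain ⟨hAB, hBC, hCA⟩ : 0 ≤ g A B t ∧ 0 ≤ g B C t ∧ 0 ≤ g C A t := by
    simpa only [f, le_min_iff] using hft.ge
  have hBCA : orient B C A = orient A B C := orient_rotate A B C
  have hCAB : orient C A B = orient A B C := (orient_rotate C A B).symm
  rcases min_choice (g A B t) (min (g B C t) (g C A t)) with e | e
  · have h0 := (mul_eq_zero.1 (e.symm.trans hft)).resolve_left hT
    exact .inl (mem_segment_of_orient_eq_zero hT h0 hBC hCA)
  rcases min_choice (g B C t) (g C A t) with e' | e'
  · have h0 := (mul_eq_zero.1 (e'.symm.trans (e.symm.trans hft))).resolve_left hT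
    exact .inr (.inl (mem_segment_of_orient_eq_zero (C := A) (by rwa [hBCA]) h0
      (by rwa [hBCA]) (by rwa [hBCA])))
  · have h0 := (mul_eq_zero.1 (e'.symm.trans (e.symm.trans hft))).resolve_left hT
    exact .inr (.inr (mem_segment_of_orient_eq_zero (C := B) (by rwa [hCAB]) h0
      (by rwa [hCAB]) (by rwa [hCAB])))

end InsideTriangle

lemma inter_nonempty_or_insideTriangle {a b c d : ℝ × ℝ} (habc : orient a b c ≠ 0)
    (habd : orient a b d ≠ 0) (hacd : orient a c d ≠ 0) (hbcd : orient b c d ≠ 0) :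
    (openSegment ℝ a b ∩ openSegment ℝ c d).Nonempty ∨
    (openSegment ℝ a c ∩ openSegment ℝ b d).Nonempty ∨
    (openSegment ℝ a d ∩ openSegment ℝ b c).Nonempty ∨
    InsideTriangle a b c d ∨ InsideTriangle a b d c ∨ InsideTriangle a c d b ∨
    InsideTriangle b c d a := by
  have hbda : orient b d a = orient a b d := orient_rotate a b d
  have hcda : orient c d a = orient a c d := orient_rotate a c d
  have hcdb : orient c d b = orient b c d := orient_rotate b c d
  have balance : orient a b c + orient a c d = orient a b d + orient b c d := by
    simp only [orient]; ring
  set w := orient a b c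
  have hw : 0 < w * w := mul_self_pos.2 habc
  have mul_neg_of {p q : ℝ} (h : w * p * (w * q) < 0) : p * q < 0 :=
    neg_of_mul_neg_right (by linarith : w * w * (p * q) < 0) hw.le
  replace balance : w * w + w * orient a c d = w * orient a b d + w * orient b c d := by
    linear_combination w * balance
  rcases (mul_ne_zero habc habd).lt_or_gt with habd | habd <;>
  rcases (mul_ne_zero habc hacd).lt_or_gt with hacd | hacd <;>
  rcases (mul_ne_zero habc hbcd).lt_or_gt with hbcd | hbcd
  · have : InsideTriangle a c d b := .of_mul_pos (r := -w) (by rw [orient_swap_right]; linarith)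
      (by rw [hcdb]; linarith) (by rw [orient_rotate, hbda]; linarith)
    simp [this]
  · exact .inl (openSegment_inter_nonempty_of_orient (by linarith)
      (mul_neg_of (by rw [hcda, hcdb]; exact mul_neg_of_neg_of_pos hacd hbcd)))
  · linarith
  · have : InsideTriangle b c d a := .of_mul_pos (r := w) (by rwa [orient_rotate a])
      (by rwa [hcda]) (by rw [orient_swap, hbda]; linarith)
    simp [this]
  · exact .inr (.inr (.inl (openSegment_inter_nonempty_of_orient
      (mul_neg_of (by
        rw [orient_swap_right a b, orient_swap_right a c]
        linarith [mul_neg_of_pos_of_neg habd hacd]))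
      (by rwa [orient_rotate a]))))
  · have : InsideTriangle a b c d := .of_mul_pos (r := w) habd hbcd
      (by rw [orient_swap]; linarith)
    simp [this]
  · have : InsideTriangle a b d c := .of_mul_pos (r := w) hw
      (by rw [orient_swap_right]; linarith) (by rwa [orient_rotate, hcda])
    simp [this]
  · exact .inr (.inl (openSegment_inter_nonempty_of_orient (by rw [orient_swap_right]; linarith)
      (mul_neg_of (by rw [hbda, orient_swap_right b c]; linarith [mul_pos habd hbcd]))))

end PlaneGeometry

section Drawings

/-! ### Drawings of `K₅` -/

variable {V : Type*} {G : SimpleGraph V} {ρ : V → ℝ × ℝ}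

/-- The pair `e` is crossed by no edge of `G`. -/
def Uncrossed (G : SimpleGraph V) (ρ : V → ℝ × ℝ) (e : Sym2 V) : Prop :=
  ∀ f ∈ G.edgeSet, ¬ Crosses ρ e f

lemma Crosses.symm {e f : Sym2 V} (h : Crosses ρ e f) : Crosses ρ f e :=
  ⟨fun v hf he => h.1 v he hf, inter_comm (edgeSeg ρ e) _ ▸ h.2⟩

lemma crosses_mk {u v w z : V} (huw : u ≠ w) (huz : u ≠ z) (hvw : v ≠ w) (hvz : v ≠ z)
    (h : (openSegment ℝ (ρ u) (ρ v) ∩ openSegment ℝ (ρ w) (ρ z)).Nonempty) :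
    Crosses ρ s(u, v) s(w, z) := by
  refine ⟨fun x hx hx' => ?_, h⟩
  rw [Sym2.mem_iff] at hx hx'
  rcases hx with rfl | rfl <;> rcases hx' with rfl | rfl <;> contradiction

lemma IsICPlanarDrawing.uncrossed (h : IsICPlanarDrawing G ρ) {e f g : Sym2 V} {v : V}
    (he : e ∈ G.edgeSet) (hf : f ∈ G.edgeSet) (hg : g ∈ G.edgeSet) (hc : Crosses ρ e f)
    (hve : v ∈ e) (hvg : v ∈ g) (hge : g ≠ e) : Uncrossed G ρ g :=
  fun g' hg' hx => h.2.2 e he g hg ⟨f, hf, hc⟩ ⟨g', hg', hx⟩ hge.symm v hve hvg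

namespace IsStraightLineDrawing

lemma notMem_openSegment (h : IsStraightLineDrawing G ρ) {u v w : V} (huv : G.Adj u v)
    (hwu : w ≠ u) (hwv : w ≠ v) : ρ w ∉ openSegment ℝ (ρ u) (ρ v) :=
  h.no_vertex_on_edge s(u, v) huv w (by simp [hwu, hwv])

lemma orient_ne_zero (h : IsStraightLineDrawing G ρ) {u v w : V} (huv : G.Adj u v)
    (hvw : G.Adj v w) (huw : G.Adj u w) : orient (ρ u) (ρ v) (ρ w) ≠ 0 := by
  intro h0
  rcases mem_openSegment_of_orient_eq_zero_of_ne h0 (h.inj.ne huv.ne) (h.inj.ne hvw.ne)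
    (h.inj.ne huw.ne) with k | k | k
  · exact h.notMem_openSegment huv huw.ne' hvw.ne' k
  · exact h.notMem_openSegment hvw huv.ne huw.ne k
  · exact h.notMem_openSegment huw.symm hvw.ne huv.ne' k

lemma disjoint_segment (h : IsStraightLineDrawing G ρ) {p q u v : V} (hpq : G.Adj p q)
    (huv : G.Adj u v) (hpu : p ≠ u) (hpv : p ≠ v) (hqu : q ≠ u) (hqv : q ≠ v)
    (hx : ¬ Crosses ρ s(p, q) s(u, v)) :
    Disjoint (segment ℝ (ρ p) (ρ q)) (segment ℝ (ρ u) (ρ v)) := by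
  rw [disjoint_left]
  intro Z hZ hZ'
  rw [← insert_endpoints_openSegment] at hZ hZ'
  rcases hZ with rfl | rfl | hZ
  · rcases hZ' with e | e | hZ'
    exacts [hpu (h.inj e), hpv (h.inj e), h.notMem_openSegment huv hpu hpv hZ']
  · rcases hZ' with e | e | hZ'
    exacts [hqu (h.inj e), hqv (h.inj e), h.notMem_openSegment huv hqu hqv hZ']
  · rcases hZ' with rfl | rfl | hZ'
    exacts [h.notMem_openSegment hpq hpu.symm hqu.symm hZ,
      h.notMem_openSegment hpq hpv.symm hqv.symm hZ, hx (crosses_mk hpu hpv hqu hqv ⟨Z, hZ, hZ'⟩)]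

lemma insideTriangle_of_adj (h : IsStraightLineDrawing G ρ) {a b c p q : V} (hab : G.Adj a b)
    (hbc : G.Adj b c) (hca : G.Adj c a) (hpq : G.Adj p q) (hqa : q ≠ a) (hqb : q ≠ b)
    (hqc : q ≠ c) (xab : ¬ Crosses ρ s(p, q) s(a, b)) (xbc : ¬ Crosses ρ s(p, q) s(b, c))
    (xca : ¬ Crosses ρ s(p, q) s(c, a)) (hin : InsideTriangle (ρ a) (ρ b) (ρ c) (ρ p)) :
    InsideTriangle (ρ a) (ρ b) (ρ c) (ρ q) := by
  have hpa : p ≠ a := fun e => hin.ne_corner (congrArg ρ e)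
  have hpb : p ≠ b := fun e => hin.rotate.ne_corner (congrArg ρ e)
  have hpc : p ≠ c := fun e => hin.rotate.rotate.ne_corner (congrArg ρ e)
  by_contra hq
  obtain ⟨Z, hZ, hAB | hBC | hCA⟩ := hin.exists_mem_segment hq
  · exact disjoint_left.1 (h.disjoint_segment hpq hab hpa hpb hqa hqb xab) hZ hAB
  · exact disjoint_left.1 (h.disjoint_segment hpq hbc hpb hpc hqb hqc xbc) hZ hBC
  · exact disjoint_left.1 (h.disjoint_segment hpq hca hpc hpa hqc hqa xca) hZ hCA

end IsStraightLineDrawing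

/-- `q` lists five pairwise adjacent vertices. -/
def IsK5 (G : SimpleGraph V) (q : Fin 5 → V) : Prop := ∀ i j, i ≠ j → G.Adj (q i) (q j)

variable {q : Fin 5 → V}

namespace IsK5

lemma comp (hq : IsK5 G q) {σ : Fin 5 → Fin 5} (hσ : Injective σ) : IsK5 G (q ∘ σ) :=
  fun _ _ hij => hq _ _ (hσ.ne hij)

lemma adj (hq : IsK5 G q) (i j : Fin 5) (hij : i ≠ j := by decide) : G.Adj (q i) (q j) :=
  hq i j hij

lemma injective (hq : IsK5 G q) : Injective q := fun i j hij => by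
  by_contra hne
  exact (hq i j hne).ne hij

lemma ne (hq : IsK5 G q) (i j : Fin 5) (hij : i ≠ j := by decide) : q i ≠ q j := (hq i j hij).ne

lemma orient_ne_zero (hq : IsK5 G q) (h : IsStraightLineDrawing G ρ) (i j k : Fin 5)
    (hd : [i, j, k].Nodup := by decide) : orient (ρ (q i)) (ρ (q j)) (ρ (q k)) ≠ 0 := by
  simp only [List.nodup_cons, List.mem_cons, List.not_mem_nil, or_false, not_or] at hd
  exact h.orient_ne_zero (hq.adj i j hd.1.1) (hq.adj j k hd.2.1) (hq.adj i k hd.1.2)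

lemma notMem_openSegment (hq : IsK5 G q) (h : IsStraightLineDrawing G ρ) (i j k : Fin 5)
    (hd : [i, j, k].Nodup := by decide) : ρ (q i) ∉ openSegment ℝ (ρ (q j)) (ρ (q k)) := by
  simp only [List.nodup_cons, List.mem_cons, List.not_mem_nil, or_false, not_or] at hd
  exact h.notMem_openSegment (hq.adj j k hd.2.1) (hq.ne i j hd.1.1) (hq.ne i k hd.1.2)

lemma crosses_or_insideTriangle (hq : IsK5 G q) (h : IsStraightLineDrawing G ρ) (i j k l : Fin 5)
    (hd : [i, j, k, l].Nodup := by decide) :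
    Crosses ρ s(q i, q j) s(q k, q l) ∨ Crosses ρ s(q i, q k) s(q j, q l) ∨
    Crosses ρ s(q i, q l) s(q j, q k) ∨ InsideTriangle (ρ (q i)) (ρ (q j)) (ρ (q k)) (ρ (q l)) ∨
    InsideTriangle (ρ (q i)) (ρ (q j)) (ρ (q l)) (ρ (q k)) ∨
    InsideTriangle (ρ (q i)) (ρ (q k)) (ρ (q l)) (ρ (q j)) ∨
    InsideTriangle (ρ (q j)) (ρ (q k)) (ρ (q l)) (ρ (q i)) := by
  simp only [List.nodup_cons, List.mem_cons, List.not_mem_nil, or_false, not_or] at hd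
  obtain ⟨⟨hij, hik, hil⟩, ⟨hjk, hjl⟩, hkl, -⟩ := hd
  have nij := hq.ne i j hij
  have nik := hq.ne i k hik
  have nil := hq.ne i l hil
  have njk := hq.ne j k hjk
  have njl := hq.ne j l hjl
  have nkl := hq.ne k l hkl
  exact (inter_nonempty_or_insideTriangle
    (hq.orient_ne_zero h i j k (by simp [*])) (hq.orient_ne_zero h i j l (by simp [*]))
    (hq.orient_ne_zero h i k l (by simp [*])) (hq.orient_ne_zero h j k l (by simp [*]))).imp
    (crosses_mk nik nil njk njl) (Or.imp (crosses_mk nij nil njk.symm nkl)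
      (Or.imp_left (crosses_mk nij nik njl.symm nkl.symm)))

lemma insideTriangle_of_not_crosses (hq : IsK5 G q) (h : IsStraightLineDrawing G ρ)
    {i j k l m : Fin 5} (hN : ∀ a b, a ≠ b → ¬ Crosses ρ s(q l, q m) s(q a, q b))
    (hin : InsideTriangle (ρ (q i)) (ρ (q j)) (ρ (q k)) (ρ (q l)))
    (hd : [i, j, k, l, m].Nodup := by decide) :
    InsideTriangle (ρ (q i)) (ρ (q j)) (ρ (q k)) (ρ (q m)) := by
  simp only [List.nodup_cons, List.mem_cons, List.not_mem_nil, or_false, not_or] at hd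
  obtain ⟨⟨hij, hik, -, him⟩, ⟨hjk, -, hjm⟩, ⟨-, hkm⟩, hlm, -⟩ := hd
  exact h.insideTriangle_of_adj (hq.adj i j hij) (hq.adj j k hjk) (hq.adj k i (Ne.symm hik))
    (hq.adj l m hlm) (hq.ne i m him).symm (hq.ne j m hjm).symm (hq.ne k m hkm).symm (hN i j hij)
    (hN j k hjk) (hN k i (Ne.symm hik)) hin

lemma not_insideTriangle_of_not_crosses (hq : IsK5 G q) (h : IsStraightLineDrawing G ρ)
    (hN : ∀ i j a b, i ≠ j → a ≠ b → ¬ Crosses ρ s(q i, q j) s(q a, q b)) :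
    ¬ InsideTriangle (ρ (q 0)) (ρ (q 1)) (ρ (q 2)) (ρ (q 3)) := by
  intro hin
  have step {i j k l m : Fin 5}
      (hin : InsideTriangle (ρ (q i)) (ρ (q j)) (ρ (q k)) (ρ (q l))) (hlm : l ≠ m := by decide)
      (hd : [i, j, k, l, m].Nodup := by decide) :
      InsideTriangle (ρ (q i)) (ρ (q j)) (ρ (q k)) (ρ (q m)) :=
    hq.insideTriangle_of_not_crosses h (hN l m · · hlm) hin hd
  rcases hin.partition (step (m := 4) hin) (h.inj.ne (hq.ne 4 3)) (hq.notMem_openSegment h 4 3 0)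
    (hq.notMem_openSegment h 4 3 1) (hq.notMem_openSegment h 4 3 2) with k | k | k
  · exact hin.rotate.rotate.not_insideTriangle (step k)
  · exact hin.not_insideTriangle (step k)
  · exact hin.rotate.not_insideTriangle (step k)

lemma exists_crosses (hq : IsK5 G q) (h : IsStraightLineDrawing G ρ) :
    ∃ i j k l : Fin 5, i ≠ j ∧ k ≠ l ∧ Crosses ρ s(q i, q j) s(q k, q l) := by
  by_contra! hN
  have hout (σ : Fin 5 → Fin 5) (hσ : Injective σ := by decide) :
      ¬ InsideTriangle (ρ (q (σ 0))) (ρ (q (σ 1))) (ρ (q (σ 2))) (ρ (q (σ 3))) :=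
    (hq.comp hσ).not_insideTriangle_of_not_crosses h
      fun _ _ _ _ hij hab => hN _ _ _ _ (hσ.ne hij) (hσ.ne hab)
  rcases hq.crosses_or_insideTriangle h 0 1 2 3 with k | k | k | k | k | k | k
  · exact hN 0 1 2 3 (by decide) (by decide) k
  · exact hN 0 2 1 3 (by decide) (by decide) k
  · exact hN 0 3 1 2 (by decide) (by decide) k
  · exact hout ![0, 1, 2, 3, 4] (by decide) k
  · exact hout ![0, 1, 3, 2, 4] (by decide) k
  · exact hout ![0, 2, 3, 1, 4] (by decide) k
  · exact hout ![1, 2, 3, 0, 4] (by decide) k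

section Crossed

variable (hq : IsK5 G q) (h : IsICPlanarDrawing G ρ) (hc : Crosses ρ s(q 0, q 1) s(q 2, q 3))

include hq h hc

lemma uncrossed (i j : Fin 5) (hij : i ≠ j := by decide) (h01 : s(i, j) ≠ s(0, 1) := by decide)
    (h23 : s(i, j) ≠ s(2, 3) := by decide) : Uncrossed G ρ s(q i, q j) := by
  have hmap := Sym2.map.injective hq.injective
  obtain ⟨k, hk, hk4⟩ : ∃ k ∈ s(i, j), k ≠ 4 := by
    by_cases hi : i = 4
    · exact ⟨j, Sym2.mem_mk_right i j, fun hj => hij (hi.trans hj.symm)⟩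
    · exact ⟨i, Sym2.mem_mk_left i j, hi⟩
  have hkq : q k ∈ s(q i, q j) := Sym2.mem_map.2 ⟨k, hk, rfl⟩
  rcases (by decide : ∀ k : Fin 5, k ≠ 4 → k ∈ s(0, 1) ∨ k ∈ s(2, 3)) k hk4 with hk | hk
  · exact h.uncrossed (hq.adj 0 1) (hq.adj 2 3) (hq.adj i j hij) hc
      (Sym2.mem_map.2 ⟨k, hk, rfl⟩ : q k ∈ s(q 0, q 1)) hkq (hmap.ne h01)
  · exact h.uncrossed (hq.adj 2 3) (hq.adj 0 1) (hq.adj i j hij) hc.symm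
      (Sym2.mem_map.2 ⟨k, hk, rfl⟩ : q k ∈ s(q 2, q 3)) hkq (hmap.ne h23)

lemma not_crosses_of_ne {u w : V} (huw : G.Adj u w) (hu : ∀ l, u ≠ q l) (a b : Fin 5)
    (hab : a ≠ b := by decide) : ¬ Crosses ρ s(u, w) s(q a, q b) := by
  intro hx
  have hne (c d : Fin 5) : s(u, w) ≠ s(q c, q d) := fun e => by
    rcases Sym2.mem_iff.1 (e ▸ Sym2.mem_mk_left u w) with e' | e'
    exacts [hu c e', hu d e']
  have h01 := hq.adj 0 1
  have h23 := hq.adj 2 3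
  have map_eq {c d : Fin 5} (e : s(a, b) = s(c, d)) : s(q a, q b) = s(q c, q d) :=
    congrArg (Sym2.map q) e
  by_cases e01 : s(a, b) = s(0, 1)
  · exact hne 2 3 (h.2.1 _ h01 _ huw _ h23 (map_eq e01 ▸ hx.symm) hc)
  by_cases e23 : s(a, b) = s(2, 3)
  · exact hne 0 1 (h.2.1 _ h23 _ huw _ h01 (map_eq e23 ▸ hx.symm) hc.symm)
  exact hq.uncrossed h hc a b hab e01 e23 _ huw hx.symm

lemma insideTriangle_of_crosses
    (hside : 0 < orient (ρ (q 0)) (ρ (q 1)) (ρ (q 4)) * orient (ρ (q 0)) (ρ (q 1)) (ρ (q 3))) :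
    InsideTriangle (ρ (q 0)) (ρ (q 1)) (ρ (q 4)) (ρ (q 3)) := by
  have hopp := orient_mul_orient_neg_of_inter hc.2 (hq.orient_ne_zero h.1 0 1 2)
  rcases hq.crosses_or_insideTriangle h.1 0 1 4 3 with k | k | k | k | k | k | k
  · exact absurd k.symm ((hq.uncrossed h hc 4 3) _ (hq.adj 0 1))
  · exact absurd k ((hq.uncrossed h hc 0 4) _ (hq.adj 1 3))
  · exact absurd k ((hq.uncrossed h hc 0 3) _ (hq.adj 1 4))
  · exact k
  · have h2 : InsideTriangle (ρ (q 0)) (ρ (q 1)) (ρ (q 3)) (ρ (q 2)) :=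
      hq.insideTriangle_of_not_crosses h.1
        (fun a b hab => (hq.uncrossed h hc 4 2) _ (hq.adj a b hab)) k
    linarith [h2.1]
  · linarith [k.orient_mul_orient_neg]
  · have := k.orient_mul_orient_neg
    rw [orient_swap (ρ (q 0)), orient_swap (ρ (q 0))] at this
    linarith

lemma insideTriangle_of_insideTriangle
    (h3 : InsideTriangle (ρ (q 0)) (ρ (q 1)) (ρ (q 4)) (ρ (q 3)))
    (h1 : InsideTriangle (ρ (q 2)) (ρ (q 3)) (ρ (q 4)) (ρ (q 1))) :
    InsideTriangle (ρ (q 0)) (ρ (q 2)) (ρ (q 4)) (ρ (q 1)) := by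
  have hopp := orient_mul_orient_neg_of_inter hc.2 (hq.orient_ne_zero h.1 0 1 2)
  have hside :
      ¬ 0 < orient (ρ (q 0)) (ρ (q 1)) (ρ (q 2)) * orient (ρ (q 0)) (ρ (q 1)) (ρ (q 4)) := by
    intro hpos
    nlinarith [mul_pos hpos h3.1, mul_neg_of_neg_of_pos hopp (mul_self_pos.2
      (hq.orient_ne_zero h.1 0 1 4))]
  rcases hq.crosses_or_insideTriangle h.1 0 2 4 1 with k | k | k | k | k | k | k
  · exact absurd k ((hq.uncrossed h hc 0 2) _ (hq.adj 4 1))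
  · exact absurd k ((hq.uncrossed h hc 0 4) _ (hq.adj 2 1))
  · exact absurd k.symm ((hq.uncrossed h hc 2 4) _ (hq.adj 0 1))
  · exact k
  · exact absurd k.rotate.rotate.swap.1 hside
  · exact absurd (mul_comm (_ : ℝ) _ ▸ k.rotate.rotate.swap.1) hside
  · have h3' : InsideTriangle (ρ (q 2)) (ρ (q 4)) (ρ (q 1)) (ρ (q 3)) :=
      hq.insideTriangle_of_not_crosses h.1
        (fun a b hab => (hq.uncrossed h hc 0 3) _ (hq.adj a b hab)) k
    exact absurd h3'.rotate.rotate h1.swap.not_insideTriangle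

end Crossed

end IsK5

/-- A drawing of `K₅` in which `q 0 q 1` crosses `q 2 q 3` and the remaining vertex `q 4` is the
corner of the outer triangle `q 0 q 2 q 4`. -/
structure IsKite (G : SimpleGraph V) (ρ : V → ℝ × ℝ) (q : Fin 5 → V) : Prop where
  k5 : IsK5 G q
  crosses : Crosses ρ s(q 0, q 1) s(q 2, q 3)
  inside_outer_one : InsideTriangle (ρ (q 0)) (ρ (q 2)) (ρ (q 4)) (ρ (q 1))
  inside_outer_three : InsideTriangle (ρ (q 0)) (ρ (q 2)) (ρ (q 4)) (ρ (q 3))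
  inside_three : InsideTriangle (ρ (q 0)) (ρ (q 1)) (ρ (q 4)) (ρ (q 3))
  inside_one : InsideTriangle (ρ (q 2)) (ρ (q 3)) (ρ (q 4)) (ρ (q 1))

lemma IsKite.flip (hk : IsKite G ρ q) : IsKite G ρ (q ∘ ![2, 3, 0, 1, 4]) :=
  ⟨hk.k5.comp (by decide), hk.crosses.symm, hk.inside_outer_three.swap, hk.inside_outer_one.swap,
    hk.inside_one, hk.inside_three⟩

namespace IsK5

lemma isKite (hq : IsK5 G q) (h : IsICPlanarDrawing G ρ)
    (hc : Crosses ρ s(q 0, q 1) s(q 2, q 3))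
    (h3 : 0 < orient (ρ (q 0)) (ρ (q 1)) (ρ (q 4)) * orient (ρ (q 0)) (ρ (q 1)) (ρ (q 3)))
    (h1 : 0 < orient (ρ (q 2)) (ρ (q 3)) (ρ (q 4)) * orient (ρ (q 2)) (ρ (q 3)) (ρ (q 1))) :
    IsKite G ρ q := by
  have hq' : IsK5 G (q ∘ ![2, 3, 0, 1, 4]) := hq.comp (by decide)
  have in3 := hq.insideTriangle_of_crosses h hc h3
  have in1 := hq'.insideTriangle_of_crosses h hc.symm h1
  exact ⟨hq, hc, hq.insideTriangle_of_insideTriangle h hc in3 in1,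
    (hq'.insideTriangle_of_insideTriangle h hc.symm in1 in3).swap, in3, in1⟩

lemma exists_kite_of_crosses (hq : IsK5 G q) (h : IsICPlanarDrawing G ρ)
    (hc : Crosses ρ s(q 0, q 1) s(q 2, q 3)) :
    ∃ σ : Fin 5 → Fin 5, Injective σ ∧ IsKite G ρ (q ∘ σ) := by
  have same_side {x y z : ℝ} (hxy : x * y < 0) (hz : z ≠ 0) : 0 < z * x ∨ 0 < z * y := by
    by_contra! hneg
    nlinarith [mul_nonneg_of_nonpos_of_nonpos hneg.1 hneg.2, mul_self_pos.2 hz]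
  have reverse {U W X Y : ℝ × ℝ} (hpos : 0 < orient U W X * orient U W Y) :
      0 < orient W U X * orient W U Y := by
    rw [orient_swap U, orient_swap U]
    linarith
  have hswap01 : s(q 1, q 0) = s(q 0, q 1) := Sym2.eq_swap
  have hswap23 : s(q 3, q 2) = s(q 2, q 3) := Sym2.eq_swap
  rcases same_side (orient_mul_orient_neg_of_inter hc.2 (hq.orient_ne_zero h.1 0 1 2))
    (hq.orient_ne_zero h.1 0 1 4) with h2 | h3 <;>
  rcases same_side (orient_mul_orient_neg_of_inter hc.symm.2 (hq.orient_ne_zero h.1 2 3 0))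
    (hq.orient_ne_zero h.1 2 3 4) with h0 | h1
  · exact ⟨![1, 0, 3, 2, 4], by decide, (hq.comp (by decide)).isKite h
      (hswap01 ▸ hswap23 ▸ hc :) (reverse h2) (reverse h0)⟩
  · exact ⟨![0, 1, 3, 2, 4], by decide, (hq.comp (by decide)).isKite h
      (hswap23 ▸ hc :) h2 (reverse h1)⟩
  · exact ⟨![1, 0, 2, 3, 4], by decide, (hq.comp (by decide)).isKite h
      (hswap01 ▸ hc :) (reverse h3) h0⟩
  · exact ⟨id, injective_id, hq.isKite h hc h3 h1⟩

lemma exists_kite (hq : IsK5 G q) (h : IsICPlanarDrawing G ρ) :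
    ∃ σ : Fin 5 → Fin 5, Injective σ ∧ IsKite G ρ (q ∘ σ) := by
  obtain ⟨i, j, k, l, hij, hkl, hx⟩ := hq.exists_crosses h.1
  have hd : [i, j, k, l].Nodup := by
    have hik : i ≠ k := fun e => hx.1 (q i) (Sym2.mem_mk_left _ _) (e ▸ Sym2.mem_mk_left _ _)
    have hil : i ≠ l := fun e => hx.1 (q i) (Sym2.mem_mk_left _ _) (e ▸ Sym2.mem_mk_right _ _)
    have hjk : j ≠ k := fun e => hx.1 (q j) (Sym2.mem_mk_right _ _) (e ▸ Sym2.mem_mk_left _ _)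
    have hjl : j ≠ l := fun e => hx.1 (q j) (Sym2.mem_mk_right _ _) (e ▸ Sym2.mem_mk_right _ _)
    simp [*]
  obtain ⟨m, hσ⟩ := (by decide +kernel : ∀ i j k l : Fin 5, [i, j, k, l].Nodup →
    ∃ m, Injective ![i, j, k, l, m]) i j k l hd
  obtain ⟨τ, hτ, hk⟩ := (hq.comp hσ).exists_kite_of_crosses h hx
  exact ⟨_, hσ.comp hτ, hk⟩

end IsK5

/-- The points of `u` and `w` lie inside the same triangles spanned by the points of `q`. -/
def SameTriangles (ρ : V → ℝ × ℝ) (q : Fin 5 → V) (u w : V) : Prop :=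
  ∀ i j k, InsideTriangle (ρ (q i)) (ρ (q j)) (ρ (q k)) (ρ u) ↔
    InsideTriangle (ρ (q i)) (ρ (q j)) (ρ (q k)) (ρ w)

namespace SameTriangles

lemma refl (u : V) : SameTriangles ρ q u u := fun _ _ _ => Iff.rfl

lemma trans {u w z : V} (h : SameTriangles ρ q u w) (h' : SameTriangles ρ q w z) :
    SameTriangles ρ q u z :=
  fun i j k => (h i j k).trans (h' i j k)

end SameTriangles

namespace IsKite

lemma uncrossed_of_ne (h : IsICPlanarDrawing G ρ) (hk : IsKite G ρ q) {u : V}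
    (hu : ∀ l, u ≠ q l) {l : Fin 5} (hul : G.Adj u (q l)) (hl : l ≠ 4 := by decide) :
    Uncrossed G ρ s(u, q l) := by
  have hne (a b : Fin 5) : s(u, q l) ≠ s(q a, q b) := fun e => by
    rcases Sym2.mem_iff.1 (e ▸ Sym2.mem_mk_left u (q l)) with e' | e'
    exacts [hu a e', hu b e']
  have hlu : q l ∈ s(u, q l) := Sym2.mem_mk_right _ _
  rcases (by decide : ∀ l : Fin 5, l ≠ 4 → l ∈ s(0, 1) ∨ l ∈ s(2, 3)) l hl with hl | hl
  · exact h.uncrossed (hk.k5.adj 0 1) (hk.k5.adj 2 3) hul hk.crosses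
      (Sym2.mem_map.2 ⟨l, hl, rfl⟩ : q l ∈ s(q 0, q 1)) hlu (hne 0 1)
  · exact h.uncrossed (hk.k5.adj 2 3) (hk.k5.adj 0 1) hul hk.crosses.symm
      (Sym2.mem_map.2 ⟨l, hl, rfl⟩ : q l ∈ s(q 2, q 3)) hlu (hne 2 3)

lemma insideTriangle_iff (h : IsICPlanarDrawing G ρ) (hk : IsKite G ρ q) {u w : V}
    (huw : G.Adj u w) (hu : ∀ l, u ≠ q l) {i j k : Fin 5} (hi : w ≠ q i) (hj : w ≠ q j)
    (hk' : w ≠ q k) :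
    InsideTriangle (ρ (q i)) (ρ (q j)) (ρ (q k)) (ρ u) ↔
      InsideTriangle (ρ (q i)) (ρ (q j)) (ρ (q k)) (ρ w) := by
  have hx (a b : Fin 5) (hab : a ≠ b) := hk.k5.not_crosses_of_ne h hk.crosses huw hu a b hab
  have hx' (a b : Fin 5) (hab : a ≠ b) : ¬ Crosses ρ s(w, u) s(q a, q b) :=
    Sym2.eq_swap (a := u) ▸ hx a b hab
  constructor <;> intro hin <;>
  · have hij : i ≠ j := fun e => hin.ne (congrArg (ρ ∘ q) e)
    have hjk : j ≠ k := fun e => hin.rotate.ne (congrArg (ρ ∘ q) e)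
    have hki : k ≠ i := fun e => hin.rotate.rotate.ne (congrArg (ρ ∘ q) e)
    have ij := hk.k5.adj i j hij
    have jk := hk.k5.adj j k hjk
    have ki := hk.k5.adj k i hki
    first
    | exact h.1.insideTriangle_of_adj ij jk ki huw hi hj hk' (hx i j hij) (hx j k hjk)
        (hx k i hki) hin
    | exact h.1.insideTriangle_of_adj ij jk ki huw.symm (hu i) (hu j) (hu k) (hx' i j hij)
        (hx' j k hjk) (hx' k i hki) hin

lemma sameTriangles (h : IsICPlanarDrawing G ρ) (hk : IsKite G ρ q) {u w : V} (huw : G.Adj u w)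
    (hu : ∀ l, u ≠ q l) (hw : ∀ l, w ≠ q l) : SameTriangles ρ q u w :=
  fun i j k => hk.insideTriangle_iff h huw hu (hw i) (hw j) (hw k)

lemma insideTriangle_iff_of_adj (h : IsICPlanarDrawing G ρ) (hk : IsKite G ρ q) {u : V}
    (hu : ∀ l, u ≠ q l) {l : Fin 5} (hul : G.Adj u (q l)) (i j k : Fin 5)
    (hl : l ∉ [i, j, k] := by decide) :
    InsideTriangle (ρ (q i)) (ρ (q j)) (ρ (q k)) (ρ u) ↔
      InsideTriangle (ρ (q i)) (ρ (q j)) (ρ (q k)) (ρ (q l)) := by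
  simp only [List.mem_cons, List.not_mem_nil, or_false, not_or] at hl
  exact hk.insideTriangle_iff h hul hu (hk.k5.ne l i hl.1) (hk.k5.ne l j hl.2.1)
    (hk.k5.ne l k hl.2.2)

lemma partition_three (h : IsICPlanarDrawing G ρ) (hk : IsKite G ρ q) {u : V}
    (hu : ∀ l, u ≠ q l) {i j k : Fin 5}
    (h3 : InsideTriangle (ρ (q i)) (ρ (q j)) (ρ (q k)) (ρ (q 3)))
    (hin : InsideTriangle (ρ (q i)) (ρ (q j)) (ρ (q k)) (ρ u))
    (hd : 3 ∉ [i, j, k] := by decide) :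
    InsideTriangle (ρ (q 3)) (ρ (q i)) (ρ (q j)) (ρ u) ∨
    InsideTriangle (ρ (q 3)) (ρ (q j)) (ρ (q k)) (ρ u) ∨
    InsideTriangle (ρ (q 3)) (ρ (q k)) (ρ (q i)) (ρ u) := by
  simp only [List.mem_cons, List.not_mem_nil, or_false, not_or] at hd
  exact h3.partition hin (h.1.inj.ne (hu 3))
    (h.1.notMem_openSegment (hk.k5.adj 3 i hd.1) (hu 3) (hu i))
    (h.1.notMem_openSegment (hk.k5.adj 3 j hd.2.1) (hu 3) (hu j))
    (h.1.notMem_openSegment (hk.k5.adj 3 k hd.2.2) (hu 3) (hu k))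

lemma not_adj_one_of_adj_zero (h : IsICPlanarDrawing G ρ) (hk : IsKite G ρ q) {u : V}
    (hu : ∀ l, u ≠ q l) (hu0 : G.Adj u (q 0)) : ¬ G.Adj u (q 1) := by
  intro hu1
  have hin : InsideTriangle (ρ (q 0)) (ρ (q 2)) (ρ (q 4)) (ρ u) :=
    (hk.insideTriangle_iff_of_adj h hu hu1 0 2 4).2 hk.inside_outer_one
  rcases hk.partition_three h hu hk.inside_outer_three hin with k | k | k
  · have hopp := orient_mul_orient_neg_of_inter hk.crosses.symm.2 (hk.k5.orient_ne_zero h.1 2 3 0)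
    have hsame := ((hk.insideTriangle_iff_of_adj h hu hu1 3 0 2).1 k).rotate.rotate.1
    linarith
  · exact hk.inside_outer_three.not_insideTriangle
      ((hk.insideTriangle_iff_of_adj h hu hu0 3 2 4).1 k)
  · exact hk.inside_three.rotate.not_insideTriangle
      ((hk.insideTriangle_iff_of_adj h hu hu1 3 4 0).1 k)

lemma insideTriangle_of_adj (h : IsICPlanarDrawing G ρ) (hk : IsKite G ρ q) {u : V}
    (hu : ∀ l, u ≠ q l) (hu1 : G.Adj u (q 1)) (hu3 : G.Adj u (q 3)) (hu4 : G.Adj u (q 4)) :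
    InsideTriangle (ρ (q 1)) (ρ (q 3)) (ρ (q 4)) (ρ u) := by
  have hin : InsideTriangle (ρ (q 0)) (ρ (q 1)) (ρ (q 4)) (ρ u) :=
    (hk.insideTriangle_iff_of_adj h hu hu3 0 1 4).2 hk.inside_three
  rcases hk.partition_three h hu hk.inside_three hin with k | k | k
  · exact absurd ((hk.insideTriangle_iff_of_adj h hu hu4 3 0 1).1 k)
      hk.inside_three.rotate.rotate.not_insideTriangle
  · exact k.swap
  · exact absurd ((hk.insideTriangle_iff_of_adj h hu hu1 3 4 0).1 k)
      hk.inside_three.rotate.not_insideTriangle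

end IsKite

end Drawings

section Chains

/-! ### Double chains -/

variable {V : Type*} {G : SimpleGraph V} {ρ : V → ℝ × ℝ}

namespace IsStraightLineDrawing

lemma insideTriangle_of_uncrossed (h : IsStraightLineDrawing G ρ) {a b x X Y : V}
    (hab : G.Adj a b) (haX : G.Adj a X) (haY : G.Adj a Y) (hbX : G.Adj b X) (hbY : G.Adj b Y)
    (hXY : G.Adj X Y) (hxa : G.Adj x a) (hxb : x ≠ b) (hxX : G.Adj x X)
    (ubX : Uncrossed G ρ s(b, X)) (ubY : Uncrossed G ρ s(b, Y)) (uxX : Uncrossed G ρ s(x, X))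
    (hx : ¬ Crosses ρ s(x, a) s(X, Y)) (hb : InsideTriangle (ρ X) (ρ Y) (ρ a) (ρ b))
    (hin : InsideTriangle (ρ X) (ρ Y) (ρ a) (ρ x)) : InsideTriangle (ρ b) (ρ a) (ρ X) (ρ x) := by
  have hxY : x ≠ Y := fun e => hin.rotate.ne_corner (congrArg ρ e)
  rcases hb.partition hin (h.inj.ne hxb) (h.notMem_openSegment hbX hxb hxX.ne)
    (h.notMem_openSegment hbY hxb hxY) (h.notMem_openSegment hab.symm hxb hxa.ne) with k | k | k
  · have ha := h.insideTriangle_of_adj hbX hXY hbY.symm hxa hab.ne haX.ne haY.ne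
      (fun hc => ubX _ hxa hc.symm) hx (fun hc => ubY _ hxa (Sym2.eq_swap (a := Y) ▸ hc.symm)) k
    exact absurd ha hb.rotate.rotate.not_insideTriangle
  · have hX := h.insideTriangle_of_adj hbY haY.symm hab hxX hbX.ne' hXY.ne haX.ne'
      (uxX _ hbY) (uxX _ haY.symm) (uxX _ hab) k
    exact absurd hX hb.not_insideTriangle
  · exact k

lemma crosses_of_insideTriangle (h : IsStraightLineDrawing G ρ) {a b x y X Y : V}
    (hab : G.Adj a b) (haX : G.Adj a X) (hbX : G.Adj b X) (hxy : G.Adj x y) (hya : y ≠ a)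
    (hyb : y ≠ b) (hyX : y ≠ X) (ubX : Uncrossed G ρ s(b, X))
    (hxyaX : ¬ Crosses ρ s(x, y) s(a, X)) (hb : InsideTriangle (ρ X) (ρ Y) (ρ a) (ρ b))
    (hx : InsideTriangle (ρ b) (ρ a) (ρ X) (ρ x)) (hy : InsideTriangle (ρ b) (ρ a) (ρ Y) (ρ y)) :
    Crosses ρ s(a, b) s(x, y) := by
  by_contra hc
  have hyX : InsideTriangle (ρ b) (ρ a) (ρ X) (ρ y) :=
    h.insideTriangle_of_adj hab.symm haX hbX.symm hxy hyb hya hyX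
      (fun hc' => hc (Sym2.eq_swap (a := b) ▸ hc'.symm)) hxyaX
      (fun hc' => ubX _ hxy (Sym2.eq_swap (a := X) ▸ hc'.symm)) hx
  have hopp := hb.rotate.rotate.orient_mul_orient_neg
  rw [orient_swap (ρ b), orient_swap (ρ b) (ρ a) (ρ Y)] at hopp
  nlinarith [mul_pos hyX.1 hy.1, mul_self_pos.2 (right_ne_zero_of_mul hyX.1.ne')]

end IsStraightLineDrawing

/-- Two disjoint chains `v true` and `v false` in `G`, each consisting of copies
`v s i 0, …, v s i 3` of `K₄` for `0 ≤ i ≤ m`, linked so that `v s i 0` and the copy `i + 1` span a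
`K₅`; the inner copies are forced inside the outer ones by further edges, and the outermost copies
of the two chains are joined to each other. -/
structure IsDoubleChain (G : SimpleGraph V) (m : ℕ) (v : Bool → ℕ → Fin 4 → V) : Prop where
  one_le : 1 ≤ m
  inj {s s' : Bool} {i i' : ℕ} {r r' : Fin 4} (hi : i ≤ m) (hi' : i' ≤ m)
    (e : v s i r = v s' i' r') : s = s' ∧ i = i' ∧ r = r'
  adj_same (s : Bool) {i : ℕ} {r r' : Fin 4} (hi : i ≤ m) (hr : r ≠ r') :
    G.Adj (v s i r) (v s i r')
  adj_zero_succ (s : Bool) {i : ℕ} (r : Fin 4) (hi : i + 1 ≤ m) : G.Adj (v s i 0) (v s (i + 1) r)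
  adj_one_succ (s : Bool) {i : ℕ} {r : Fin 4} (hi : i + 1 ≤ m) (hr : 2 ≤ r) :
    G.Adj (v s i 1) (v s (i + 1) r)
  adj_zero_add_two (s : Bool) {i : ℕ} (hi : i + 2 ≤ m) : G.Adj (v s i 0) (v s (i + 2) 3)
  adj_base (s : Bool) {r : Fin 4} (hr : 2 ≤ r) : G.Adj (v s 0 r) (v s 1 r)
  adj_top (s : Bool) {r : Fin 4} (hr : r < 2) : G.Adj (v s m r) (v (!s) m r)
  adj_pred_top (s : Bool) {i : ℕ} (hi : i + 1 = m) : G.Adj (v s i 0) (v (!s) i 0)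

/-- Copy `i + 1` of the chain `s`, with its last two vertices in the order `r`, `r'`, followed by
the vertex of copy `i` adjacent to all of them. -/
def quint {V : Type*} (v : Bool → ℕ → Fin 4 → V) (s : Bool) (i : ℕ) (r r' : Fin 4) : Fin 5 → V :=
  ![v s (i + 1) 0, v s (i + 1) r, v s (i + 1) 1, v s (i + 1) r', v s i 0]

lemma exists_quint_eq (v : Bool → ℕ → Fin 4 → V) (s : Bool) (i : ℕ) (r r' : Fin 4) (l : Fin 5) :
    ∃ j t, j ≤ i + 1 ∧ quint v s i r r' l = v s j t := by
  fin_cases l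
  exacts [⟨_, _, le_rfl, rfl⟩, ⟨_, _, le_rfl, rfl⟩, ⟨_, _, le_rfl, rfl⟩, ⟨_, _, le_rfl, rfl⟩,
    ⟨_, _, i.le_succ, rfl⟩]

/-- The chain other than `s` lies outside the outer triangle of every kite of the chain `s`. -/
def AvoidsOtherChain (G : SimpleGraph V) (ρ : V → ℝ × ℝ) (m : ℕ) (v : Bool → ℕ → Fin 4 → V)
    (s : Bool) : Prop :=
  ∀ i, i + 1 ≤ m → ∀ σ : Fin 5 → Fin 5, IsKite G ρ (quint v s i 2 3 ∘ σ) →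
    ¬ InsideTriangle (ρ (quint v s i 2 3 (σ 0))) (ρ (quint v s i 2 3 (σ 2)))
      (ρ (quint v s i 2 3 (σ 4))) (ρ (v (!s) m 0))

lemma eq_of_roles : ∀ σ : Fin 5 → Fin 5, Injective σ →
    (σ 1 = 1 ∨ σ 1 = 3) → (σ 3 = 1 ∨ σ 3 = 3) → (σ 0 = 0 ∨ σ 0 = 2) → (σ 2 = 0 ∨ σ 2 = 2) →
    σ = id ∨ σ = ![0, 3, 2, 1, 4] ∨ σ = ![2, 1, 0, 3, 4] ∨ σ = ![2, 3, 0, 1, 4] := by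
  decide +kernel

namespace IsDoubleChain

variable {m : ℕ} {v : Bool → ℕ → Fin 4 → V} {s : Bool} {i : ℕ} {r r' : Fin 4}

lemma ne_of_lt (hC : IsDoubleChain G m v) {i' : ℕ} (hi : i < i') (hi' : i' ≤ m) (r r' : Fin 4) :
    v s i r ≠ v s i' r' :=
  fun e => hi.ne (hC.inj (hi.le.trans hi') hi' e).2.1

lemma isK5_quint (hC : IsDoubleChain G m v) (s : Bool) (hi : i + 1 ≤ m) (hr : 2 ≤ r)
    (hr' : 2 ≤ r') (hrr' : r ≠ r') : IsK5 G (quint v s i r r') := by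
  have ne_of_two_le {t r : Fin 4} (ht : t < 2) (hr : 2 ≤ r) : t ≠ r := (ht.trans_le hr).ne
  have hK4 {t t' : Fin 4} (ht : t ≠ t') := hC.adj_same s hi ht
  have hapex (t : Fin 4) := hC.adj_zero_succ s t hi
  have hsymm : ∀ a b : Fin 5, a < b → G.Adj (quint v s i r r' a) (quint v s i r r' b) := by
    intro a b hab
    fin_cases a <;> fin_cases b <;> first
    | exact absurd hab (by decide)
    | exact (hapex _).symm
    | exact hK4 hrr'
    | exact hK4 (ne_of_two_le (by decide) ‹_›)
    | exact hK4 (ne_of_two_le (by decide) ‹_›).symm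
    | exact hK4 (by decide)
  exact fun a b hab => hab.lt_or_gt.elim (hsymm a b) fun hba => (hsymm b a hba).symm

lemma ne_quint (hC : IsDoubleChain G m v) (hi : i + 1 ≤ m) {t : Bool} {j : ℕ} {c : Fin 4}
    (hj : j ≤ m) (hne : t ≠ s ∨ j ≠ i + 1 ∧ (j ≠ i ∨ c ≠ 0)) (l : Fin 5) :
    v t j c ≠ quint v s i r r' l := by
  intro e
  obtain ⟨j', c', hj', hl, hc⟩ : ∃ j' c', j' ≤ m ∧ quint v s i r r' l = v s j' c' ∧
      (j' = i + 1 ∨ j' = i ∧ c' = 0) := by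
    fin_cases l
    exacts [⟨_, _, hi, rfl, .inl rfl⟩, ⟨_, _, hi, rfl, .inl rfl⟩, ⟨_, _, hi, rfl, .inl rfl⟩,
      ⟨_, _, hi, rfl, .inl rfl⟩, ⟨_, _, i.le_succ.trans hi, rfl, .inr ⟨rfl, rfl⟩⟩]
  obtain ⟨rfl, rfl, rfl⟩ := hC.inj hj hj' (e.trans hl)
  tauto

lemma sameTriangles_top (hC : IsDoubleChain G m v) (h : IsICPlanarDrawing G ρ) {q : Fin 5 → V}
    (hk : IsKite G ρ q) {t : Bool} {j : ℕ} (hj : j ≤ m) (c : Fin 4)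
    (hout : ∀ j', j ≤ j' → j' ≤ m → ∀ c l, v t j' c ≠ q l) :
    SameTriangles ρ q (v t j c) (v t m 0) := by
  have hcopy {j' : ℕ} (hj' : j ≤ j') (hm : j' ≤ m) (c : Fin 4) :
      SameTriangles ρ q (v t j' c) (v t j' 0) := by
    rcases eq_or_ne c 0 with rfl | hc
    · exact SameTriangles.refl _
    · exact hk.sameTriangles h (hC.adj_same t hm hc) (hout _ hj' hm _) (hout _ hj' hm _)
  induction hj using Nat.decreasingInduction generalizing c with
  | self => exact hcopy le_rfl le_rfl c
  | of_succ j hj ih =>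
    have hstep := hk.sameTriangles h (hC.adj_zero_succ t 0 hj) (hout _ le_rfl hj.le _)
      (hout _ j.le_succ hj _)
    exact (hcopy le_rfl hj.le c).trans (hstep.trans (ih 0
      (fun j' hj' => hout j' (j.le_succ.trans hj')) fun hj' => hcopy (j.le_succ.trans hj')))

lemma sameTriangles_other (hC : IsDoubleChain G m v) (h : IsICPlanarDrawing G ρ) (hi : i + 1 ≤ m)
    {σ : Fin 5 → Fin 5} (hk : IsKite G ρ (quint v s i r r' ∘ σ)) {j : ℕ} (hj : j ≤ m)
    (c : Fin 4) : SameTriangles ρ (quint v s i r r' ∘ σ) (v (!s) j c) (v (!s) m 0) :=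
  hC.sameTriangles_top h hk hj c fun _ _ hj' _ _ => hC.ne_quint hi hj' (.inl (by simp)) _

lemma exists_avoidsOtherChain (hC : IsDoubleChain G m v) (h : IsICPlanarDrawing G ρ) :
    ∃ s, AvoidsOtherChain G ρ m v s := by
  by_contra! hcon
  have key (s : Bool) : ∃ i, i + 1 ≤ m ∧ ∃ σ : Fin 5 → Fin 5, ∀ j c, j ≤ m →
      InsideTriangle (ρ (quint v s i 2 3 (σ 0))) (ρ (quint v s i 2 3 (σ 2)))
        (ρ (quint v s i 2 3 (σ 4))) (ρ (v (!s) j c)) := by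
    have hs := hcon s
    unfold AvoidsOtherChain at hs
    push Not at hs
    obtain ⟨i, hi, σ, hk, hin⟩ := hs
    exact ⟨i, hi, σ, fun j c hj => (hC.sameTriangles_other h hi hk hj c 0 2 4).2 hin⟩
  obtain ⟨i, hi, σ, hσ⟩ := key true
  obtain ⟨j, hj, τ, hτ⟩ := key false
  have hfalse (l : Fin 5) : InsideTriangle (ρ (quint v true i 2 3 (σ 0)))
      (ρ (quint v true i 2 3 (σ 2))) (ρ (quint v true i 2 3 (σ 4)))
      (ρ (quint v false j 2 3 l)) := by
    obtain ⟨j', c, hj', e⟩ := exists_quint_eq v false j 2 3 l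
    exact e ▸ hσ j' c (hj'.trans hj)
  have htrue : InsideTriangle (ρ (quint v false j 2 3 (τ 0))) (ρ (quint v false j 2 3 (τ 2)))
      (ρ (quint v false j 2 3 (τ 4))) (ρ (quint v true i 2 3 (σ 0))) := by
    obtain ⟨j', c, hj', e⟩ := exists_quint_eq v true i 2 3 (σ 0)
    exact e ▸ hτ j' c (hj'.trans hi)
  exact (InsideTriangle.trans (hfalse _) (hfalse _) (hfalse _) htrue).ne_corner rfl

lemma exists_outer_neighbor (hC : IsDoubleChain G m v) (h : IsICPlanarDrawing G ρ)
    (hi : i + 1 ≤ m) {σ : Fin 5 → Fin 5} (hk : IsKite G ρ (quint v s i 2 3 ∘ σ)) {l : Fin 5}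
    (hl : l = 0 ∨ l = 2 ∨ l = 4) : ∃ u, G.Adj u (quint v s i 2 3 l) ∧
      (∀ n, u ≠ quint v s i 2 3 n) ∧
      SameTriangles ρ (quint v s i 2 3 ∘ σ) u (v (!s) m 0) := by
  rcases hi.eq_or_lt with rfl | hlt
  · have other {j : ℕ} {c : Fin 4} (hj : j ≤ i + 1)
        (hadj : G.Adj (quint v s i 2 3 l) (v (!s) j c)) : ∃ u, G.Adj u (quint v s i 2 3 l) ∧
          (∀ n, u ≠ quint v s i 2 3 n) ∧
          SameTriangles ρ (quint v s i 2 3 ∘ σ) u (v (!s) (i + 1) 0) :=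
      ⟨_, hadj.symm, fun n => hC.ne_quint hi hj (.inl (by simp)) n,
        hC.sameTriangles_other h hi hk hj c⟩
    rcases hl with rfl | rfl | rfl
    exacts [other le_rfl (hC.adj_top s (by decide)), other le_rfl (hC.adj_top s (by decide)),
      other i.le_succ (hC.adj_pred_top s rfl)]
  · have hout {j : ℕ} (hj : i + 2 ≤ j) (hm : j ≤ m) (c : Fin 4) (n : Fin 5) :
        v s j c ≠ quint v s i 2 3 n :=
      hC.ne_quint hi hm (.inr ⟨by omega, .inl (by omega)⟩) n
    have hsame := (hC.sameTriangles_top h hk hlt 3 fun j hj hm c n => hout hj hm c (σ n)).trans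
      (hk.sameTriangles h (hC.adj_top s (by decide)) (fun n => hout hlt le_rfl 0 (σ n))
        fun n => hC.ne_quint hi le_rfl (.inl (by simp)) (σ n))
    refine ⟨v s (i + 2) 3, ?_, hout le_rfl hlt 3, hsame⟩
    rcases hl with rfl | rfl | rfl
    exacts [(hC.adj_zero_succ s 3 hlt).symm, (hC.adj_one_succ s hlt (by decide)).symm,
      (hC.adj_zero_add_two s hlt).symm]

lemma exists_isKite_quint_of_roles {σ : Fin 5 → Fin 5} (hσ : Injective σ)
    (hk : IsKite G ρ (quint v s i 2 3 ∘ σ)) (h1 : σ 1 = 1 ∨ σ 1 = 3) (h3 : σ 3 = 1 ∨ σ 3 = 3)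
    (h0 : σ 0 = 0 ∨ σ 0 = 2) (h2 : σ 2 = 0 ∨ σ 2 = 2) :
    ∃ r r' : Fin 4, 2 ≤ r ∧ 2 ≤ r' ∧ r ≠ r' ∧ IsKite G ρ (quint v s i r r') := by
  have swapped : quint v s i 2 3 ∘ ![0, 3, 2, 1, 4] = quint v s i 3 2 := by
    ext l; fin_cases l <;> rfl
  have flip_eq {τ τ' : Fin 5 → Fin 5} (e : τ ∘ ![2, 3, 0, 1, 4] = τ')
      (hk : IsKite G ρ (quint v s i 2 3 ∘ τ)) : IsKite G ρ (quint v s i 2 3 ∘ τ') := e ▸ hk.flip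
  rcases eq_of_roles σ hσ h1 h3 h0 h2 with rfl | rfl | rfl | rfl
  · exact ⟨2, 3, by decide, by decide, by decide, hk⟩
  · exact ⟨3, 2, by decide, by decide, by decide, swapped ▸ hk⟩
  · exact ⟨3, 2, by decide, by decide, by decide, swapped ▸ flip_eq (by decide) hk⟩
  · exact ⟨2, 3, by decide, by decide, by decide, flip_eq (τ' := id) (by decide) hk⟩

lemma exists_isKite_quint (hC : IsDoubleChain G m v) (h : IsICPlanarDrawing G ρ)
    (hs : AvoidsOtherChain G ρ m v s) (hi : i + 1 ≤ m) :
    ∃ r r' : Fin 4, 2 ≤ r ∧ 2 ≤ r' ∧ r ≠ r' ∧ IsKite G ρ (quint v s i r r') := by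
  obtain ⟨σ, hσ, hk⟩ :=
    (hC.isK5_quint s hi (r := 2) (r' := 3) (by decide) (by decide) (by decide)).exists_kite h
  have inner {l : Fin 5} (hin : InsideTriangle (ρ (quint v s i 2 3 (σ 0)))
      (ρ (quint v s i 2 3 (σ 2))) (ρ (quint v s i 2 3 (σ 4))) (ρ (quint v s i 2 3 (σ l))))
      (hl : l ∉ [0, 2, 4] := by decide) : σ l = 1 ∨ σ l = 3 := by
    by_contra hne
    obtain ⟨u, hul, hu, hsame⟩ := hC.exists_outer_neighbor h hi hk (l := σ l)
      ((by decide : ∀ l : Fin 5, ¬ (l = 1 ∨ l = 3) → l = 0 ∨ l = 2 ∨ l = 4) _ hne)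
    exact hs i hi σ hk ((hsame 0 2 4).1
      ((hk.insideTriangle_iff_of_adj h (fun n => hu (σ n)) hul 0 2 4 hl).2 hin))
  have h1 := inner hk.inside_outer_one
  have h3 := inner hk.inside_outer_three
  have hR (n : Fin 5) : v s i 1 ≠ quint v s i 2 3 n :=
    hC.ne_quint hi (i.le_succ.trans hi) (.inr ⟨i.lt_succ_self.ne, .inr (by decide)⟩) n
  have hRadj {l : Fin 5} (hl : ¬ (l = 0 ∨ l = 2)) : G.Adj (v s i 1) (quint v s i 2 3 l) := by
    rcases (by decide : ∀ l : Fin 5, ¬ (l = 0 ∨ l = 2) → l = 1 ∨ l = 3 ∨ l = 4) l hl with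
      rfl | rfl | rfl
    exacts [hC.adj_one_succ s hi (by decide), hC.adj_one_succ s hi (by decide),
      hC.adj_same s (i.le_succ.trans hi) (by decide)]
  have not_outer : ∀ l : Fin 5, l = 1 ∨ l = 3 → ¬ (l = 0 ∨ l = 2) := by decide
  have h0 : σ 0 = 0 ∨ σ 0 = 2 := by_contra fun hn =>
    hk.not_adj_one_of_adj_zero h (fun n => hR (σ n)) (hRadj hn) (hRadj (not_outer _ h1))
  have h2 : σ 2 = 0 ∨ σ 2 = 2 := by_contra fun hn =>
    hk.flip.not_adj_one_of_adj_zero h (fun n => hR _) (hRadj hn) (hRadj (not_outer _ h3))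
  exact exists_isKite_quint_of_roles hσ hk h1 h3 h0 h2

variable (hr : 2 ≤ r) (hr' : 2 ≤ r')

include hr hr'

lemma insideTriangle_one (hC : IsDoubleChain G m v) (h : IsICPlanarDrawing G ρ) (hi : i + 1 ≤ m)
    (hk : IsKite G ρ (quint v s i r r')) :
    InsideTriangle (ρ (v s (i + 1) r)) (ρ (v s (i + 1) r')) (ρ (v s i 0)) (ρ (v s i 1)) :=
  hk.insideTriangle_of_adj h
    (hC.ne_quint hi (i.le_succ.trans hi) (.inr ⟨i.lt_succ_self.ne, .inr (by decide)⟩))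
    (hC.adj_one_succ s hi hr) (hC.adj_one_succ s hi hr')
    (hC.adj_same s (i.le_succ.trans hi) (by decide))

lemma insideTriangle_of_adj_one (hC : IsDoubleChain G m v) (h : IsICPlanarDrawing G ρ)
    (hi : i + 1 ≤ m) (hk : IsKite G ρ (quint v s i r r')) {w : V} (hw : G.Adj (v s i 1) w)
    (hwr : w ≠ v s (i + 1) r) (hwr' : w ≠ v s (i + 1) r') (hw0 : w ≠ v s i 0) :
    InsideTriangle (ρ (v s (i + 1) r)) (ρ (v s (i + 1) r')) (ρ (v s i 0)) (ρ w) :=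
  (hk.insideTriangle_iff h (i := 1) (j := 3) (k := 4) hw
    (hC.ne_quint hi (i.le_succ.trans hi) (.inr ⟨i.lt_succ_self.ne, .inr (by decide)⟩))
    hwr hwr' hw0).1 (hC.insideTriangle_one hr hr' h hi hk)

lemma insideTriangle_succ_zero (hC : IsDoubleChain G m v) (h : IsICPlanarDrawing G ρ)
    (hi : i + 2 ≤ m) (hk : IsKite G ρ (quint v s (i + 1) r r')) :
    InsideTriangle (ρ (v s (i + 2) r)) (ρ (v s (i + 2) r')) (ρ (v s (i + 1) 0)) (ρ (v s i 0)) :=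
  hC.insideTriangle_of_adj_one hr hr' h hi hk (hC.adj_zero_succ s 1 (by omega)).symm
    (hC.ne_of_lt (by omega) hi 0 r) (hC.ne_of_lt (by omega) hi 0 r')
    (hC.ne_of_lt i.lt_succ_self (by omega) 0 0)

lemma insideTriangle_base (hC : IsDoubleChain G m v) (h : IsICPlanarDrawing G ρ) (hrr' : r ≠ r')
    (hk : IsKite G ρ (quint v s 0 r r')) :
    InsideTriangle (ρ (v s 0 1)) (ρ (v s 0 0)) (ρ (v s 1 r)) (ρ (v s 0 r)) ∧
    InsideTriangle (ρ (v s 0 1)) (ρ (v s 0 0)) (ρ (v s 1 r')) (ρ (v s 0 r')) ∧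
    Crosses ρ s(v s 0 0, v s 0 1) s(v s 0 r, v s 0 r') := by
  have hm := hC.one_le
  have hb := hC.insideTriangle_one hr hr' h hm hk
  have out {t : Fin 4} (ht : t ≠ 0) : ∀ l, v s 0 t ≠ quint v s 0 r r' l :=
    hC.ne_quint hm m.zero_le (.inr ⟨zero_ne_one, .inr ht⟩)
  have ne0 {t : Fin 4} (ht : 2 ≤ t) : t ≠ 0 := ((by decide : (0 : Fin 4) < 2).trans_le ht).ne'
  have ne1 {t : Fin 4} (ht : 2 ≤ t) : t ≠ 1 := ((by decide : (1 : Fin 4) < 2).trans_le ht).ne'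
  have K4 {t t' : Fin 4} (htt' : t ≠ t') : G.Adj (v s 0 t) (v s 0 t') :=
    hC.adj_same s m.zero_le htt'
  have haX (t : Fin 4) : G.Adj (v s 0 0) (v s 1 t) := hC.adj_zero_succ s t hm
  have hbX {t : Fin 4} (ht : 2 ≤ t) : G.Adj (v s 0 1) (v s 1 t) := hC.adj_one_succ s hm ht
  have uX {t : Fin 4} (ht : t ≠ 0) (hadj : G.Adj (v s 0 t) (v s 1 r)) :=
    hk.uncrossed_of_ne h (out ht) (l := 1) hadj
  have uY {t : Fin 4} (ht : t ≠ 0) (hadj : G.Adj (v s 0 t) (v s 1 r')) :=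
    hk.uncrossed_of_ne h (out ht) (l := 3) hadj
  have not_crosses {t : Fin 4} {w : V} (ht : t ≠ 0) (hadj : G.Adj (v s 0 t) w) (a b : Fin 5)
      (hab : a ≠ b := by decide) :=
    hk.k5.not_crosses_of_ne h hk.crosses hadj (out ht) a b hab
  have hin {t : Fin 4} (ht : 2 ≤ t) := hC.insideTriangle_of_adj_one hr hr' h hm hk
    (K4 (ne1 ht).symm) (hC.ne_of_lt one_pos hm t r) (hC.ne_of_lt one_pos hm t r') (K4 (ne0 ht)).ne
  have hXY : G.Adj (v s 1 r) (v s 1 r') := hC.adj_same s hm hrr'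
  have hx := h.1.insideTriangle_of_uncrossed (K4 (by decide)) (haX r) (haX r') (hbX hr) (hbX hr')
    hXY (K4 (ne0 hr)) (K4 (ne1 hr)).ne (hC.adj_base s hr) (uX (by decide) (hbX hr))
    (uY (by decide) (hbX hr')) (uX (ne0 hr) (hC.adj_base s hr))
    (not_crosses (ne0 hr) (K4 (ne0 hr)) 1 3) hb (hin hr)
  have hy := h.1.insideTriangle_of_uncrossed (K4 (by decide)) (haX r') (haX r) (hbX hr') (hbX hr)
    hXY.symm (K4 (ne0 hr')) (K4 (ne1 hr')).ne (hC.adj_base s hr') (uY (by decide) (hbX hr'))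
    (uX (by decide) (hbX hr)) (uY (ne0 hr') (hC.adj_base s hr'))
    (not_crosses (ne0 hr') (K4 (ne0 hr')) 3 1) hb.swap (hin hr').swap
  exact ⟨hx, hy, h.1.crosses_of_insideTriangle (K4 (by decide)) (haX r) (hbX hr) (K4 hrr')
    (K4 (ne0 hr')).ne (K4 (ne1 hr')).ne (hC.ne_of_lt one_pos hm r' r)
    (uX (by decide) (hbX hr)) (not_crosses (ne0 hr) (K4 hrr') 4 1) hb hx hy⟩

end IsDoubleChain

end Chains

section KiteInequality

/-! ### The doubling inequality -/

lemma doubling_extremal {p a t : ℝ} (hp : 0 < p) (hp1 : p < 1) (ha : 1 < a) (ht : 0 < t)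
    (hE : 0 < p ^ 2 * a * (a - 1) - t * p * (1 - p)) :
    2 * p * (p ^ 2 * a * (a - 1) - t * p * (1 - p)) * (1 + p ^ 2 + t + t / a ^ 2) ≤
      (2 * (p ^ 2 * a * (a - 1) - t * p * (1 - p)) + p ^ 2 + t) * (a * p + t) := by
  have := sub_pos.2 hp1
  have := sub_pos.2 ha
  set E := p ^ 2 * a * (a - 1) - t * p * (1 - p)
  have hEle : E ≤ p ^ 2 * a * (a - 1) := by
    have : 0 ≤ t * p * (1 - p) := by positivity
    linarith
  obtain ⟨w, hw⟩ : ∃ w, w = 1 / a ^ 2 := ⟨_, rfl⟩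
  have : 0 < w := by rw [hw]; positivity
  have hwa : w * a ^ 2 = 1 := by rw [hw]; field_simp
  rw [show t / a ^ 2 = t * w by rw [hw]; ring]
  suffices 0 ≤ 2 * E * (p * (a - 1) - p ^ 3 + t * (1 - p - p * w)) + (p ^ 2 + t) * (a * p + t) by
    linarith
  rcases le_or_gt 0 (p * (a - 1) - p ^ 3 + t * (1 - p - p * w)) with hB | hB
  · positivity
  have constant_coeff : 0 ≤ a * p ^ 3 * (1 + 2 * (a - 1) ^ 2 - 2 * (a - 1) * p ^ 2) := by
    have hle : (a - 1) * p ^ 2 ≤ (a - 1) * 1 := by gcongr; nlinarith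
    have : 0 ≤ 1 + 2 * (a - 1) ^ 2 - 2 * (a - 1) * p ^ 2 := by
      nlinarith [sq_nonneg (2 * (a - 1) - 1)]
    positivity
  have linear_coeff : 0 ≤ 2 * p ^ 2 * a * (a - 1) * (1 - p - p * w) + a * p + p ^ 2 := by
    have haw : a * (a - 1) * w ≤ 1 := by nlinarith
    have hpos : 0 ≤ 2 * p ^ 2 * (a * (a - 1)) * (1 - p) := by positivity
    have hle : 2 * p ^ 3 * (a * (a - 1) * w) ≤ 2 * p ^ 3 * 1 := by gcongr
    have : 2 * p ^ 3 ≤ a * p + p ^ 2 := by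
      nlinarith [mul_pos hp hp, mul_pos (mul_pos hp hp) hp]
    linarith
  linarith [mul_le_mul_of_nonpos_right hEle hB.le, mul_nonneg ht.le linear_coeff, sq_nonneg t]

lemma doubling_monotone_in_b {u v a b b' : ℝ} (hv : 0 < v) (ha : 0 < a) (hb' : 0 < b')
    (hb : b' ≤ b) (hab : u * v ≤ a * b') (hD : 0 < a * (a - u) - v * (b - v)) :
    (a * b' - u * v) * (2 + (u ^ 2 + b' ^ 2) / (a * (a - u) - v * (b' - v))) ≤
      (a * b - u * v) * (2 + (u ^ 2 + b ^ 2) / (a * (a - u) - v * (b - v))) := by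
  have hab' : a * b' ≤ a * b := by gcongr
  have hvb : v * b' ≤ v * b := by gcongr
  have := sub_nonneg.2 hab
  have := sub_nonneg.2 (hab.trans hab')
  have : 0 < a * (a - u) - v * (b' - v) := by linarith
  gcongr

lemma doubling_antitone_in_s {r s s' u v : ℝ} (hr : 0 < r) (hu : 0 < u) (hs' : 0 < s')
    (hs : s' ≤ s) (hsv : s ≤ v) (hrs : r * s ≤ u * v) :
    (u * v - r * s) * ((r ^ 2 + v ^ 2 + u ^ 2 + s ^ 2) / (r * u + s * v)) ≤
      (u * v - r * s') * ((r ^ 2 + v ^ 2 + u ^ 2 + s' ^ 2) / (r * u + s' * v)) := by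
  have hs0 : 0 < s := hs'.trans_le hs
  have hv : 0 < v := hs0.trans_le hsv
  have hrs' : u * v - r * s ≤ u * v - r * s' := by gcongr
  have hquot : (r ^ 2 + v ^ 2 + u ^ 2 + s ^ 2) / (r * u + s * v) ≤
      (r ^ 2 + v ^ 2 + u ^ 2 + s' ^ 2) / (r * u + s' * v) := by
    rw [div_le_div_iff₀ (by positivity) (by positivity)]
    have hlin : r * u * (s + s') ≤ r * u * (2 * v) := by gcongr; linarith
    have hsq : s * s' ≤ v * v := by gcongr; linarith
    have : 0 ≤ (s - s') * (v * (r ^ 2 + v ^ 2 + u ^ 2) - r * u * (s + s') - s * s' * v) :=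
      mul_nonneg (sub_nonneg.2 hs) (by nlinarith [mul_nonneg hv.le (sq_nonneg (r - u))])
    linarith
  have := sub_nonneg.2 hrs
  exact mul_le_mul hrs' hquot (by positivity) (this.trans hrs')

lemma doubling_of_extremal {p v a : ℝ} (hp : 0 < p) (hp1 : p < 1) (hv : 0 < v) (ha : 1 < a)
    (hD : 0 < a * (a - 1) - v * (v / p - v)) :
    2 * ((1 * v - p * (v / a)) *
        ((p ^ 2 + v ^ 2 + 1 ^ 2 + (v / a) ^ 2) / (p * 1 + v / a * v))) ≤
      (a * (v / p) - 1 * v) * (2 + (1 ^ 2 + (v / p) ^ 2) / (a * (a - 1) - v * (v / p - v))) := by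
  have ha0 : 0 < a := by linarith
  have hap : 0 ≤ v * (a - p) / a := by
    have : 0 < a - p := by linarith
    positivity
  have hE : p ^ 2 * a * (a - 1) - v ^ 2 * p * (1 - p) =
      p ^ 2 * (a * (a - 1) - v * (v / p - v)) := by field_simp
  have key := doubling_extremal hp hp1 ha (pow_pos hv 2) (by rw [hE]; positivity)
  rw [hE] at key
  generalize a * (a - 1) - v * (v / p - v) = D at key hD
  calc 2 * ((1 * v - p * (v / a)) *
        ((p ^ 2 + v ^ 2 + 1 ^ 2 + (v / a) ^ 2) / (p * 1 + v / a * v)))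
      = v * (a - p) / a *
        (2 * (1 + p ^ 2 + v ^ 2 + v ^ 2 / a ^ 2) / ((a * p + v ^ 2) / a)) := by field_simp; ring
    _ ≤ v * (a - p) / a * ((a * (2 * (p ^ 2 * D) + p ^ 2 + v ^ 2)) / (p * (p ^ 2 * D))) := by
        refine mul_le_mul_of_nonneg_left ?_ hap
        rw [div_div_eq_mul_div, div_le_div_iff₀ (by positivity) (by positivity)]
        linarith [mul_le_mul_of_nonneg_left key ha0.le]
    _ = (a * (v / p) - 1 * v) * (2 + (1 ^ 2 + (v / p) ^ 2) / D) := by field_simp; ring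

lemma doubling_normalized {p s v a b : ℝ} (hp : 0 < p) (hs : 0 < s) (hp1 : p < 1) (hsv : s < v)
    (ha : 1 < a) (has : 1 * v ≤ a * s) (hbp : 1 * v ≤ b * p)
    (hD : 0 < a * (a - 1) - v * (b - v)) :
    2 * ((1 * v - p * s) * (p ^ 2 + v ^ 2 + 1 ^ 2 + s ^ 2)) * (a * (a - 1) - v * (b - v)) ≤
      (a * b - 1 * v) * (2 * (a * (a - 1) - v * (b - v)) + 1 ^ 2 + b ^ 2) * (p * 1 + s * v) := by
  have hv : 0 < v := hs.trans hsv
  have ha0 : 0 < a := by linarith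
  have hs' : v / a ≤ s := by rw [div_le_iff₀ ha0]; linarith
  have hb' : v / p ≤ b := by rw [div_le_iff₀ hp]; linarith
  have hvp : v ≤ v / p := by rw [le_div_iff₀ hp]; nlinarith
  have hD' : 0 < a * (a - 1) - v * (v / p - v) := by
    have : v * (v / p - v) ≤ v * (b - v) := by gcongr
    linarith
  have chain : 2 * ((1 * v - p * s) * ((p ^ 2 + v ^ 2 + 1 ^ 2 + s ^ 2) / (p * 1 + s * v))) ≤
      (a * b - 1 * v) * (2 + (1 ^ 2 + b ^ 2) / (a * (a - 1) - v * (b - v))) := by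
    refine (mul_le_mul_of_nonneg_left ?_ zero_le_two).trans
      ((doubling_of_extremal hp hp1 hv ha hD').trans ?_)
    · exact doubling_antitone_in_s hp one_pos (by positivity) hs' hsv.le (by nlinarith)
    · exact doubling_monotone_in_b hv ha0 (by positivity) hb' (by nlinarith) hD
  generalize a * (a - 1) - v * (b - v) = D at hD chain
  rw [← mul_div_assoc, ← mul_div_assoc, show (a * b - 1 * v) * (2 + (1 ^ 2 + b ^ 2) / D) =
    (a * b - 1 * v) * (2 * D + 1 ^ 2 + b ^ 2) / D by field_simp; ring,
    div_le_div_iff₀ (by positivity) hD] at chain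
  exact chain

/-- The coordinates of a right-angled kite with apex `c = (0, 0)`, whose crossing edges are the
horizontal segment from `X = (r, v)` to `A = (a, v)` and the vertical segment from `Y = (u, s)` to
`B = (u, b)`. The last two inequalities say that `Y` and `X` lie above the lines `cA` and below
the line `cB` respectively. -/
structure KiteCoordinates (r s u v a b : ℝ) : Prop where
  r_pos : 0 < r
  s_pos : 0 < s
  r_lt_u : r < u
  s_lt_v : s < v
  u_lt_a : u < a
  v_lt_b : v < b
  uv_lt_as : u * v < a * s
  uv_lt_br : u * v < b * r

namespace KiteCoordinates

variable {r s u v a b : ℝ}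

lemma u_pos (h : KiteCoordinates r s u v a b) : 0 < u := h.r_pos.trans h.r_lt_u

lemma v_pos (h : KiteCoordinates r s u v a b) : 0 < v := h.s_pos.trans h.s_lt_v

lemma dot_pos (h : KiteCoordinates r s u v a b) : 0 < r * u + s * v :=
  add_pos (mul_pos h.r_pos h.u_pos) (mul_pos h.s_pos h.v_pos)

lemma rs_lt_uv (h : KiteCoordinates r s u v a b) : r * s < u * v :=
  mul_lt_mul'' h.r_lt_u h.s_lt_v h.r_pos.le h.s_pos.le

lemma uv_lt_ab (h : KiteCoordinates r s u v a b) : u * v < a * b :=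
  mul_lt_mul'' h.u_lt_a h.v_lt_b h.u_pos.le h.v_pos.le

lemma doubling (h : KiteCoordinates r s u v a b) (hD : 0 < a * (a - u) - v * (b - v)) :
    2 * ((u * v - r * s) * (r ^ 2 + v ^ 2 + u ^ 2 + s ^ 2)) * (a * (a - u) - v * (b - v)) ≤
      (a * b - u * v) * (2 * (a * (a - u) - v * (b - v)) + u ^ 2 + b ^ 2) * (r * u + s * v) := by
  have hu := h.u_pos
  obtain ⟨hr, hs, hru, hsv, hua, -, has, hbr⟩ := h
  obtain ⟨r, rfl⟩ : ∃ r', r = u * r' := ⟨r / u, by field_simp⟩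
  obtain ⟨s, rfl⟩ : ∃ s', s = u * s' := ⟨s / u, by field_simp⟩
  obtain ⟨v, rfl⟩ : ∃ v', v = u * v' := ⟨v / u, by field_simp⟩
  obtain ⟨a, rfl⟩ : ∃ a', a = u * a' := ⟨a / u, by field_simp⟩
  obtain ⟨b, rfl⟩ : ∃ b', b = u * b' := ⟨b / u, by field_simp⟩
  have hu2 : 0 < u ^ 2 := by positivity
  have key := doubling_normalized (pos_of_mul_pos_right hr hu.le) (pos_of_mul_pos_right hs hu.le)
    (lt_of_mul_lt_mul_left (by linarith) hu.le) (lt_of_mul_lt_mul_left hsv hu.le)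
    (lt_of_mul_lt_mul_left (by linarith) hu.le) (a := a) (b := b)
    (le_of_mul_le_mul_left (by linarith) hu2) (le_of_mul_le_mul_left (by linarith) hu2)
    (pos_of_mul_pos_right (a := u ^ 2) (by linarith) hu2.le)
  linarith [mul_le_mul_of_nonneg_left key (pow_nonneg hu.le 6)]

lemma area_bound (h : KiteCoordinates r s u v a b) :
    (u * v - r * s) * (r ^ 2 + v ^ 2 + u ^ 2 + s ^ 2) ≤ 2 * (a * b - u * v) * (r * u + s * v) := by
  have hrs_lt := h.rs_lt_uv
  have hu := h.u_pos
  have hv := h.v_pos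
  obtain ⟨hr, hs, hru, hsv, -, -, has, hbr⟩ := h
  have area_ratio : u * v * (u * v - r * s) ≤ (a * b - u * v) * (r * s) := by
    have : u * v * (u * v) ≤ a * s * (b * r) :=
      mul_le_mul has.le hbr.le (by positivity) (le_trans (by positivity) has.le)
    linarith
  have length_ratio : r * s * (r ^ 2 + v ^ 2 + u ^ 2 + s ^ 2) ≤ 2 * (u * v) * (r * u + s * v) := by
    have h₁ : r * r * (r * s) ≤ u * r * (u * v) := by gcongr
    have h₂ : u * r * (u * s) ≤ u * r * (u * v) := by gcongr
    have h₃ : s * v * (r * v) ≤ s * v * (u * v) := by gcongr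
    have h₄ : s * s * (r * s) ≤ s * v * (u * v) := by gcongr
    linarith
  have hrs : 0 < r * s := by positivity
  refine le_of_mul_le_mul_right ?_ hrs
  calc (u * v - r * s) * (r ^ 2 + v ^ 2 + u ^ 2 + s ^ 2) * (r * s)
      = (u * v - r * s) * (r * s * (r ^ 2 + v ^ 2 + u ^ 2 + s ^ 2)) := by ring
    _ ≤ (u * v - r * s) * (2 * (u * v) * (r * u + s * v)) := by
        have := sub_pos.2 hrs_lt
        gcongr
    _ = 2 * (r * u + s * v) * (u * v * (u * v - r * s)) := by ring
    _ ≤ 2 * (r * u + s * v) * ((a * b - u * v) * (r * s)) := by gcongr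
    _ = 2 * (a * b - u * v) * (r * u + s * v) * (r * s) := by ring

end KiteCoordinates

end KiteInequality

section Potential

/-- The inner product of the vectors from `R` to `P` and to `Q`. -/
def dotAt (R P Q : ℝ × ℝ) : ℝ := (P.1 - R.1) * (Q.1 - R.1) + (P.2 - R.2) * (Q.2 - R.2)

/-- The potential `tan θ * (|RP|² + |RQ|²) / 4` of the angle `θ` spanned at `R` by `P` and `Q` is at
least `M`; it is regarded as infinite unless the angle is acute. The condition is written without
division. -/
def PotentialGE (M : ℝ) (R P Q : ℝ × ℝ) : Prop :=
  0 < dotAt R P Q → 4 * M * dotAt R P Q ≤ |orient R P Q| * (dotAt R P P + dotAt R Q Q)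

lemma dotAt_comm (R P Q : ℝ × ℝ) : dotAt R P Q = dotAt R Q P := by
  simp only [dotAt]; ring

lemma PotentialGE.symm {M : ℝ} {R P Q : ℝ × ℝ} (h : PotentialGE M R P Q) :
    PotentialGE M R Q P := by
  have horient : |orient R Q P| = |orient R P Q| := by
    rw [← abs_neg, ← orient_swap, ← orient_rotate]
  rwa [PotentialGE, dotAt_comm R Q P, horient, add_comm (dotAt R Q Q)]

lemma potential_le_of_convexCombination {a c G H e : ℝ} (ha : 0 ≤ a) (ha' : a ≤ 1) (hc : 0 ≤ c)
    (hc' : c ≤ 1) (hG : 0 ≤ G) (hH : 0 ≤ H) (he : 0 ≤ e) (hGH : 2 * e ≤ G + H) :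
    |a - c| * e * ((a ^ 2 * G + (1 - a) ^ 2 * H + 2 * a * (1 - a) * e) +
        (c ^ 2 * G + (1 - c) ^ 2 * H + 2 * c * (1 - c) * e)) ≤
      (G + H) * (a * c * G + (1 - a) * (1 - c) * H + (a * (1 - c) + (1 - a) * c) * e) := by
  have hac : 0 ≤ a * (1 - c) := mul_nonneg ha (sub_nonneg.2 hc')
  have hca : 0 ≤ (1 - a) * c := mul_nonneg (sub_nonneg.2 ha') hc
  have hac_le : |a - c| ≤ a * (1 - c) + (1 - a) * c := abs_le.2 ⟨by linarith, by linarith⟩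
  have hac_le_one : |a - c| ≤ 1 := abs_le.2 ⟨by linarith, by linarith⟩
  have hS : |a - c| * e ≤
      a * c * G + (1 - a) * (1 - c) * H + (a * (1 - c) + (1 - a) * c) * e := by
    have h₁ : 0 ≤ a * c * G := by positivity
    have h₂ : 0 ≤ (1 - a) * (1 - c) * H :=
      mul_nonneg (mul_nonneg (sub_nonneg.2 ha') (sub_nonneg.2 hc')) hH
    linarith [mul_le_mul_of_nonneg_right hac_le he]
  set S := a * c * G + (1 - a) * (1 - c) * H + (a * (1 - c) + (1 - a) * c) * e with hSdef
  have := sub_nonneg.2 hGH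
  have hsq : (a ^ 2 * G + (1 - a) ^ 2 * H + 2 * a * (1 - a) * e) +
      (c ^ 2 * G + (1 - c) ^ 2 * H + 2 * c * (1 - c) * e) =
      2 * S + |a - c| ^ 2 * (G + H - 2 * e) := by
    rw [hSdef, sq_abs]; ring
  have : 0 ≤ S := le_trans (by positivity) hS
  calc |a - c| * e * (_ + _) = |a - c| * (2 * e * S) +
        |a - c| * e * (|a - c| ^ 2 * (G + H - 2 * e)) := by rw [hsq]; ring
    _ ≤ 1 * (2 * e * S) + S * (1 ^ 2 * (G + H - 2 * e)) := by gcongr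
    _ = (G + H) * S := by ring

lemma potential_le_of_scaled_convexCombination {M σ τ a c G H e k : ℝ} (hσ : 0 < σ) (hσ' : σ ≤ 1)
    (hτ : 0 < τ) (hτ' : τ ≤ 1) (ha : 0 < a) (ha' : a < 1) (hc : 0 < c) (hc' : c < 1) (hG : 0 ≤ G)
    (hH : 0 ≤ H) (he : 0 < e) (hGH : 2 * e ≤ G + H) (hk : 0 ≤ k)
    (hM : 4 * M * (σ * τ * (a * c * G + (1 - a) * (1 - c) * H + (a * (1 - c) + (1 - a) * c) * e)) ≤
      σ * τ * |a - c| * k * (σ ^ 2 * (a ^ 2 * G + (1 - a) ^ 2 * H + 2 * a * (1 - a) * e) +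
        τ ^ 2 * (c ^ 2 * G + (1 - c) ^ 2 * H + 2 * c * (1 - c) * e))) :
    4 * M * e ≤ k * (G + H) := by
  have key := potential_le_of_convexCombination ha.le ha'.le hc.le hc'.le hG hH he.le hGH
  have := sub_pos.2 ha'
  have := sub_pos.2 hc'
  have hS : 0 < a * c * G + (1 - a) * (1 - c) * H + (a * (1 - c) + (1 - a) * c) * e := by positivity
  have hp : 0 ≤ a ^ 2 * G + (1 - a) ^ 2 * H + 2 * a * (1 - a) * e := by positivity
  have hq : 0 ≤ c ^ 2 * G + (1 - c) ^ 2 * H + 2 * c * (1 - c) * e := by positivity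
  generalize a * c * G + (1 - a) * (1 - c) * H + (a * (1 - c) + (1 - a) * c) * e = S at key hM hS
  generalize a ^ 2 * G + (1 - a) ^ 2 * H + 2 * a * (1 - a) * e = p at key hM hp
  generalize c ^ 2 * G + (1 - c) ^ 2 * H + 2 * c * (1 - c) * e = q at key hM hq
  have hστ : 0 < σ * τ := by positivity
  refine le_of_mul_le_mul_right (le_of_mul_le_mul_left ?_ hστ) hS
  calc σ * τ * (4 * M * e * S) = 4 * M * (σ * τ * S) * e := by ring
    _ ≤ σ * τ * |a - c| * k * (σ ^ 2 * p + τ ^ 2 * q) * e := by gcongr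
    _ ≤ σ * τ * |a - c| * k * (1 ^ 2 * p + 1 ^ 2 * q) * e := by gcongr
    _ = σ * τ * k * (|a - c| * e * (p + q)) := by ring
    _ ≤ σ * τ * k * ((G + H) * S) := by gcongr
    _ = σ * τ * (k * (G + H) * S) := by ring

lemma InsideTriangle.exists_polar {X Y A P : ℝ × ℝ} (h : InsideTriangle X Y A P) :
    ∃ σ a : ℝ, 0 < σ ∧ σ ≤ 1 ∧ 0 < a ∧ a < 1 ∧
      P.1 - A.1 = σ * (a * (X.1 - A.1) + (1 - a) * (Y.1 - A.1)) ∧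
      P.2 - A.2 = σ * (a * (X.2 - A.2) + (1 - a) * (Y.2 - A.2)) := by
  obtain ⟨h₁, h₂, h₃⟩ := h
  have hk : 0 < orient X Y A * orient X Y A := mul_self_pos.2 (left_ne_zero_of_mul h₁.ne')
  have hsum := orient_add_orient_add_orient X Y A P
  have hpos : 0 < orient X Y A * (orient Y A P + orient A X P) := by linarith
  have hσ : orient Y A P + orient A X P ≠ 0 := right_ne_zero_of_mul hpos.ne'
  have hk0 : orient X Y A ≠ 0 := left_ne_zero_of_mul h₁.ne'
  refine ⟨(orient Y A P + orient A X P) / orient X Y A,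
    orient Y A P / (orient Y A P + orient A X P), ?_, ?_, ?_, ?_, ?_, ?_⟩
  · rw [← mul_div_mul_left _ _ hk0]; positivity
  · rw [← mul_div_mul_left _ _ hk0, div_le_one hk]
    linarith [congrArg (orient X Y A * ·) hsum]
  · rw [← mul_div_mul_left _ _ hk0]; positivity
  · rw [← mul_div_mul_left _ _ hk0, div_lt_one hpos]; linarith
  all_goals
    field_simp
    simp only [orient]
    ring

lemma PotentialGE.mono {M : ℝ} {A X Y P Q : ℝ × ℝ} (hP : InsideTriangle X Y A P)
    (hQ : InsideTriangle X Y A Q) (h : PotentialGE M A P Q) : PotentialGE M A X Y := by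
  intro hXY
  obtain ⟨σ, a, hσ, hσ', ha, ha', hP₁, hP₂⟩ := hP.exists_polar
  obtain ⟨τ, c, hτ, hτ', hc, hc', hQ₁, hQ₂⟩ := hQ.exists_polar
  have hG : 0 ≤ dotAt A X X := add_nonneg (mul_self_nonneg _) (mul_self_nonneg _)
  have hH : 0 ≤ dotAt A Y Y := add_nonneg (mul_self_nonneg _) (mul_self_nonneg _)
  have hGH : 2 * dotAt A X Y ≤ dotAt A X X + dotAt A Y Y := by
    simp only [dotAt]
    linarith [sq_nonneg (X.1 - Y.1), sq_nonneg (X.2 - Y.2)]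
  have hPQ : dotAt A P Q = σ * τ * (a * c * dotAt A X X + (1 - a) * (1 - c) * dotAt A Y Y +
      (a * (1 - c) + (1 - a) * c) * dotAt A X Y) := by
    simp only [dotAt, hP₁, hP₂, hQ₁, hQ₂]; ring
  have hPP : dotAt A P P = σ ^ 2 * (a ^ 2 * dotAt A X X + (1 - a) ^ 2 * dotAt A Y Y +
      2 * a * (1 - a) * dotAt A X Y) := by
    simp only [dotAt, hP₁, hP₂]; ring
  have hQQ : dotAt A Q Q = τ ^ 2 * (c ^ 2 * dotAt A X X + (1 - c) ^ 2 * dotAt A Y Y +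
      2 * c * (1 - c) * dotAt A X Y) := by
    simp only [dotAt, hQ₁, hQ₂]; ring
  have horient : |orient A P Q| = σ * τ * |a - c| * |orient A X Y| := by
    rw [← abs_of_pos (mul_pos hσ hτ), ← abs_mul, ← abs_mul]
    congr 1
    simp only [orient, hP₁, hP₂, hQ₁, hQ₂]; ring
  have hM := h (by
    have := sub_pos.2 ha'
    have := sub_pos.2 hc'
    rw [hPQ]; positivity)
  rw [hPP, hQQ, horient, hPQ] at hM
  exact potential_le_of_scaled_convexCombination hσ hσ' hτ hτ' ha ha' hc hc' hG hH hXY hGH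
    (abs_nonneg _) hM

/-- A congruence of the plane, proper or improper, expressed through its effect on inner products
and signed areas. -/
structure IsCongruence (f : ℝ × ℝ → ℝ × ℝ) : Prop where
  dotAt_map : ∀ R P Q, dotAt (f R) (f P) (f Q) = dotAt R P Q
  orient_map : ∃ δ : ℝ, δ * δ = 1 ∧ ∀ P Q R, orient (f P) (f Q) (f R) = δ * orient P Q R

namespace IsCongruence

variable {f : ℝ × ℝ → ℝ × ℝ}

lemma orient_mul_orient (hf : IsCongruence f) (A B C P Q R : ℝ × ℝ) :
    orient (f A) (f B) (f C) * orient (f P) (f Q) (f R) = orient A B C * orient P Q R := by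
  obtain ⟨δ, hδ, horient⟩ := hf.orient_map
  rw [horient, horient, mul_mul_mul_comm, hδ, one_mul]

lemma abs_orient (hf : IsCongruence f) (P Q R : ℝ × ℝ) :
    |orient (f P) (f Q) (f R)| = |orient P Q R| :=
  abs_eq_abs.2 (mul_self_eq_mul_self_iff.1 (hf.orient_mul_orient P Q R P Q R))

lemma insideTriangle_iff (hf : IsCongruence f) {A B C P : ℝ × ℝ} :
    InsideTriangle (f A) (f B) (f C) (f P) ↔ InsideTriangle A B C P := by
  simp only [InsideTriangle, hf.orient_mul_orient]

lemma potentialGE_iff (hf : IsCongruence f) {M : ℝ} {R P Q : ℝ × ℝ} :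
    PotentialGE M (f R) (f P) (f Q) ↔ PotentialGE M R P Q := by
  simp only [PotentialGE, hf.dotAt_map, hf.abs_orient]

end IsCongruence

lemma isCongruence_frame {e₁ e₂ δ : ℝ} (he : e₁ ^ 2 + e₂ ^ 2 = 1) (hδ : δ * δ = 1) (c : ℝ × ℝ) :
    IsCongruence fun P => (e₁ * (P.1 - c.1) + e₂ * (P.2 - c.2),
      δ * (e₁ * (P.2 - c.2) - e₂ * (P.1 - c.1))) where
  dotAt_map R P Q := by
    simp only [dotAt]
    linear_combination ((P.1 - R.1) * (Q.1 - R.1) + (P.2 - R.2) * (Q.2 - R.2)) * he +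
      (e₁ * (P.2 - R.2) - e₂ * (P.1 - R.1)) * (e₁ * (Q.2 - R.2) - e₂ * (Q.1 - R.1)) * hδ
  orient_map := ⟨δ, hδ, fun P Q R => by
    simp only [orient]
    linear_combination δ * ((Q.1 - P.1) * (R.2 - P.2) - (Q.2 - P.2) * (R.1 - P.1)) * he⟩

lemma exists_isCongruence_horizontal (c : ℝ × ℝ) {A X : ℝ × ℝ} (hne : X ≠ A) (B Y : ℝ × ℝ) :
    ∃ f, IsCongruence f ∧ f c = 0 ∧ (f A).2 = (f X).2 ∧ (f X).1 < (f A).1 ∧ (f Y).2 ≤ (f B).2 := by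
  have hsq : 0 < (A.1 - X.1) ^ 2 + (A.2 - X.2) ^ 2 := by
    have : A.1 - X.1 ≠ 0 ∨ A.2 - X.2 ≠ 0 := by
      rw [sub_ne_zero, sub_ne_zero, ← not_and_or]
      exact fun h => hne (Prod.ext h.1 h.2).symm
    rcases this with h | h <;> positivity
  obtain ⟨L, hL0, hL⟩ : ∃ L : ℝ, 0 < L ∧ L ^ 2 = (A.1 - X.1) ^ 2 + (A.2 - X.2) ^ 2 :=
    ⟨√((A.1 - X.1) ^ 2 + (A.2 - X.2) ^ 2), Real.sqrt_pos.2 hsq, Real.sq_sqrt hsq.le⟩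
  obtain ⟨e₁, he₁⟩ : ∃ e₁, A.1 - X.1 = e₁ * L := ⟨(A.1 - X.1) / L, by field_simp⟩
  obtain ⟨e₂, he₂⟩ : ∃ e₂, A.2 - X.2 = e₂ * L := ⟨(A.2 - X.2) / L, by field_simp⟩
  have he : e₁ ^ 2 + e₂ ^ 2 = 1 := by
    rw [he₁, he₂] at hL
    have : L ^ 2 * (e₁ ^ 2 + e₂ ^ 2) = L ^ 2 * 1 := by linarith
    exact mul_left_cancel₀ (by positivity) this
  obtain ⟨δ, hδ, hδ'⟩ : ∃ δ : ℝ, δ * δ = 1 ∧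
      0 ≤ δ * (e₁ * (B.2 - Y.2) - e₂ * (B.1 - Y.1)) := by
    rcases le_total 0 (e₁ * (B.2 - Y.2) - e₂ * (B.1 - Y.1)) with h | h
    · exact ⟨1, by norm_num, by linarith⟩
    · exact ⟨-1, by norm_num, by linarith⟩
  refine ⟨_, isCongruence_frame he hδ c, ?_, ?_, ?_, ?_⟩
  · simp
  · linear_combination δ * e₁ * he₂ - δ * e₂ * he₁
  · have : (e₁ * (A.1 - c.1) + e₂ * (A.2 - c.2)) - (e₁ * (X.1 - c.1) + e₂ * (X.2 - c.2)) = L := by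
      linear_combination e₁ * he₁ + e₂ * he₂ + L * he
    simp only
    linarith
  · simp only
    linarith

namespace KiteCoordinates

variable {M r s u v a b : ℝ}

lemma four_mul_le_of_potentialGE (h : KiteCoordinates r s u v a b)
    (hM : PotentialGE M 0 (r, v) (u, s)) :
    4 * M * (r * u + s * v) ≤ (u * v - r * s) * (r ^ 2 + v ^ 2 + u ^ 2 + s ^ 2) := by
  have hrs := h.rs_lt_uv
  have hdot := h.dot_pos
  simp only [PotentialGE, dotAt, orient, Prod.fst_zero, Prod.snd_zero, sub_zero] at hM
  rw [abs_of_neg (by linarith)] at hM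
  linarith [hM (by linarith)]

lemma abs_orient (h : KiteCoordinates r s u v a b) :
    |orient (a, v) (u, b) 0| = a * b - u * v := by
  have huv := h.uv_lt_ab
  simp only [orient, Prod.fst_zero, Prod.snd_zero]
  rw [abs_of_pos (by linarith)]
  ring

lemma potentialGE_two_mul (h : KiteCoordinates r s u v a b) (hM : PotentialGE M 0 (r, v) (u, s)) :
    PotentialGE (2 * M) (a, v) (u, b) 0 := by
  have hdot : dotAt (a, v) (u, b) 0 = a * (a - u) - v * (b - v) := by
    simp only [dotAt, Prod.fst_zero, Prod.snd_zero]; ring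
  intro hD
  rw [hdot] at hD
  have hlengths : dotAt (a, v) (u, b) (u, b) + dotAt (a, v) 0 0 =
      2 * (a * (a - u) - v * (b - v)) + u ^ 2 + b ^ 2 := by
    simp only [dotAt, Prod.fst_zero, Prod.snd_zero]; ring
  rw [hdot, h.abs_orient, hlengths]
  refine le_of_mul_le_mul_right (le_trans ?_ (h.doubling hD)) h.dot_pos
  linarith [mul_le_mul_of_nonneg_right (h.four_mul_le_of_potentialGE hM) hD.le]

lemma two_mul_le_abs_orient (h : KiteCoordinates r s u v a b)
    (hM : PotentialGE M 0 (r, v) (u, s)) : 2 * M ≤ |orient (a, v) (u, b) 0| := by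
  rw [h.abs_orient]
  refine le_of_mul_le_mul_right ?_ h.dot_pos
  linarith [h.four_mul_le_of_potentialGE hM, h.area_bound]

end KiteCoordinates

/-- The edges `AX` and `BY` of a kite with apex `c` cross at a right angle (`perp` says that `AX` is
orthogonal to `BY`), and the triangles `AXc` and `BYc` contain `Y` and `X` respectively. -/
structure RightKite (A X B Y c : ℝ × ℝ) : Prop where
  side_AX : orient A X Y * orient A X B < 0
  side_BY : orient B Y X * orient B Y A < 0
  perp : dotAt A X Y = dotAt A X B
  inside_Y : InsideTriangle A X c Y
  inside_X : InsideTriangle B Y c X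

namespace RightKite

variable {A X B Y c : ℝ × ℝ}

lemma map (h : RightKite A X B Y c) {f : ℝ × ℝ → ℝ × ℝ} (hf : IsCongruence f) :
    RightKite (f A) (f X) (f B) (f Y) (f c) where
  side_AX := by simpa only [hf.orient_mul_orient] using h.side_AX
  side_BY := by simpa only [hf.orient_mul_orient] using h.side_BY
  perp := by simpa only [hf.dotAt_map] using h.perp
  inside_Y := hf.insideTriangle_iff.2 h.inside_Y
  inside_X := hf.insideTriangle_iff.2 h.inside_X

lemma kiteCoordinates {r v u s a b b₁ : ℝ} (h : RightKite (a, v) (r, v) (b₁, b) (u, s) 0)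
    (hra : r < a) (hsb : s ≤ b) : b₁ = u ∧ KiteCoordinates r s u v a b := by
  obtain ⟨hAX, hBY, hperp, ⟨hv, -, hY⟩, hu, -, hX⟩ := h
  simp only [orient, dotAt, Prod.fst_zero, Prod.snd_zero] at hAX hBY hperp hv hY hu hX
  obtain rfl : b₁ = u := by
    have : (a - r) * (b₁ - u) = 0 := by linarith
    rcases mul_eq_zero.1 this with h | h <;> linarith
  have hra' : 0 < (a - r) ^ 2 := pow_pos (sub_pos.2 hra) 2
  have hY_between : 0 < (v - s) * (b - v) := pos_of_mul_pos_right (a := (a - r) ^ 2)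
    (by linarith) hra'.le
  have hsv : s < v := by
    by_contra! hvs
    linarith [mul_nonneg (sub_nonneg.2 hvs) (sub_nonneg.2 (hvs.trans hsb))]
  have hvb : v < b := sub_pos.1 (pos_of_mul_pos_right hY_between (sub_pos.2 hsv).le)
  have hsb' : 0 < (b - s) ^ 2 := pow_pos (by linarith) 2
  have hX_between : 0 < (b₁ - r) * (a - b₁) := pos_of_mul_pos_right (a := (b - s) ^ 2)
    (by linarith) hsb'.le
  have hru : r < b₁ := by
    by_contra! hur
    linarith [mul_nonneg (sub_nonneg.2 hur) (sub_nonneg.2 (hur.trans hra.le))]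
  have hua : b₁ < a := sub_pos.1 (pos_of_mul_pos_right hX_between (sub_pos.2 hru).le)
  have hAXY : 0 < (a - r) * (v - s) := mul_pos (by linarith) (by linarith)
  have hBYX : 0 < (b - s) * (b₁ - r) := mul_pos (by linarith) (by linarith)
  have hv₀ : 0 < (a - r) * v := pos_of_mul_pos_right (a := (a - r) * (v - s)) (by linarith) hAXY.le
  have hu₀ : 0 < (b - s) * b₁ :=
    pos_of_mul_pos_right (a := (b - s) * (b₁ - r)) (by linarith) hBYX.le
  have has : 0 < a * s - b₁ * v := pos_of_mul_pos_right (a := (a - r) * v) (by linarith) hv₀.le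
  have hbr : 0 < b * r - b₁ * v := pos_of_mul_pos_right (a := (b - s) * b₁) (by linarith) hu₀.le
  have hv_pos : 0 < v := pos_of_mul_pos_right hv₀ (by linarith)
  have hu_pos : 0 < b₁ := pos_of_mul_pos_right hu₀ (by linarith)
  have huv : 0 < b₁ * v := mul_pos hu_pos hv_pos
  exact ⟨rfl, pos_of_mul_pos_right (a := b) (by linarith) (by linarith),
    pos_of_mul_pos_right (a := a) (by linarith) (by linarith), hru, hsv, hua, hvb, by linarith,
    by linarith⟩

lemma exists_coordinates (h : RightKite A X B Y c) :
    ∃ f, IsCongruence f ∧ ∃ r s u v a b, KiteCoordinates r s u v a b ∧ f c = 0 ∧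
      f X = (r, v) ∧ f Y = (u, s) ∧ f A = (a, v) ∧ f B = (u, b) := by
  have hne : X ≠ A := by
    rintro rfl
    simpa using h.side_AX
  obtain ⟨f, hf, hc, hAX, hlt, hYB⟩ := exists_isCongruence_horizontal c hne B Y
  have key := h.map hf
  rcases hX : f X with ⟨r, v⟩
  rcases hY : f Y with ⟨u, s⟩
  rcases hA : f A with ⟨a, v'⟩
  rcases hB : f B with ⟨u', b⟩
  rw [hX, hA] at hAX hlt
  rw [hY, hB] at hYB
  obtain rfl : v' = v := hAX
  rw [hX, hY, hA, hB, hc] at key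
  obtain ⟨rfl, hcoord⟩ := key.kiteCoordinates hlt hYB
  exact ⟨f, hf, r, s, u', v', a, b, hcoord, hc, hX, hY, hA, hB⟩

lemma potentialGE_two_mul {M : ℝ} (h : RightKite A X B Y c) (hM : PotentialGE M c X Y) :
    PotentialGE (2 * M) A B c := by
  obtain ⟨f, hf, r, s, u, v, a, b, hcoord, hc, hX, hY, hA, hB⟩ := h.exists_coordinates
  rw [← hf.potentialGE_iff, hc, hX, hY] at hM
  rw [← hf.potentialGE_iff, hA, hB, hc]
  exact hcoord.potentialGE_two_mul hM

lemma two_mul_le_abs_orient {M : ℝ} (h : RightKite A X B Y c) (hM : PotentialGE M c X Y) :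
    2 * M ≤ |orient A B c| := by
  obtain ⟨f, hf, r, s, u, v, a, b, hcoord, hc, hX, hY, hA, hB⟩ := h.exists_coordinates
  rw [← hf.potentialGE_iff, hc, hX, hY] at hM
  rw [← hf.abs_orient, hA, hB, hc]
  exact hcoord.two_mul_le_abs_orient hM

end RightKite

end Potential

section BaseInequality

/-! ### The initial estimate -/

lemma base_far_width {h y w E : ℝ} (hw : 1 ≤ w) (hE : (h + 1) ^ 2 ≤ E) (hwy : 2 ≤ w * (1 + y)) :
    8 * (h - y) ≤ w * E := by
  have hsq : 0 ≤ w * (w * (h + 1) ^ 2 - 8 * (h - y)) := by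
    linarith [sq_nonneg (w * h + w - 4)]
  have := nonneg_of_mul_nonneg_right hsq (by linarith)
  have : w * (h + 1) ^ 2 ≤ w * E := by gcongr
  linarith

lemma base_narrow_height {y w : ℝ} (hy : 0 < y) (hw : 1 ≤ w) (hwy : 1 ≤ y ^ 2 + w ^ 2 / 4)
    (hwy' : w * (1 + y) < 2) : 0.839 < y ∧ y < 1 := by
  refine ⟨?_, by nlinarith⟩
  by_contra! hle
  have h₂ : y ^ 2 ≤ 0.839 ^ 2 := by gcongr
  have h₃ : y ^ 3 ≤ 0.839 ^ 3 := by gcongr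
  have hcubic : 2 * y ^ 2 + y ^ 3 ≤ 2 := by norm_num at h₂ h₃; linarith
  have hlower : 1 ≤ (1 - y ^ 2) * (1 + y) ^ 2 := by
    linarith [mul_nonneg hy.le (sub_nonneg.2 hcubic)]
  have hupper : (1 - y ^ 2) * (1 + y) ^ 2 ≤ w ^ 2 / 4 * (1 + y) ^ 2 := by gcongr; linarith
  have : 0 < w * (1 + y) := by positivity
  nlinarith

lemma base_steep {h y c : ℝ} (hh : 0 < h) (hy : 0.839 < y) (hy' : y < 1) (hcy : c ≤ y)
    (hhc : 1 < h * c) : 8 * (h - y) ≤ h ^ 2 * (2 - c ^ 2) + 2 * h * c + 1 := by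
  have hmono : h ^ 2 * (2 - y ^ 2) + 2 * h * y + 1 ≤ h ^ 2 * (2 - c ^ 2) + 2 * h * c + 1 := by
    have : 0 ≤ h * (y - c) * (h * (y + c) - 2) := by
      apply mul_nonneg (mul_nonneg hh.le (sub_nonneg.2 hcy))
      nlinarith
    linarith
  have hpos : 0 < 2 - y ^ 2 := by nlinarith
  have hdiscr : (y - 4) ^ 2 ≤ (2 - y ^ 2) * (1 + 8 * y) := by
    have : 0 ≤ (1 - y) * (8 * y ^ 2 + 10 * y - 14) :=
      mul_nonneg (by linarith) (by nlinarith)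
    linarith
  have hsq : 0 ≤ (2 - y ^ 2) * (h ^ 2 * (2 - y ^ 2) + 2 * h * y + 1 - 8 * (h - y)) := by
    linarith [sq_nonneg ((2 - y ^ 2) * h + (y - 4))]
  linarith [nonneg_of_mul_nonneg_right hsq hpos]

lemma base_flat_discriminant {y d T : ℝ} (hy : 0.839 < y) (hy' : y < 1) (hyd : y < d) (hT : 0 ≤ T)
    (hTd : 1 - y ^ 2 ≤ T * (d ^ 2 + (1 - y ^ 2))) :
    16 ≤ 8 * (d + y) + 2 * (1 - y ^ 2) + 8 * y * T := by
  have hS : 0 < 1 - y ^ 2 := by nlinarith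
  rcases le_or_gt (2 - y) d with hd | hd
  · linarith [mul_nonneg (show 0 ≤ y by linarith) hT]
  obtain ⟨z, rfl⟩ : ∃ z, d = y + z := ⟨d - y, by ring⟩
  have hz : 0 < z := by linarith
  have hTz : (1 - y ^ 2) * (1 - (2 * y * z + z ^ 2)) ≤ T := by
    have hpos : 0 < 1 + (2 * y * z + z ^ 2) := by positivity
    refine le_of_mul_le_mul_right ?_ hpos
    linarith [mul_nonneg hS.le (sq_nonneg (2 * y * z + z ^ 2))]
  have hyT : 8 * y * ((1 - y ^ 2) * (1 - (2 * y * z + z ^ 2))) ≤ 8 * y * T := by gcongr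
  have hyS : y * (1 - y ^ 2) ≤ 0.4 := by
    nlinarith [mul_nonneg (show 0 ≤ y by linarith) (sq_nonneg (y - 0.577)), sq_nonneg (y - 0.577)]
  have hlin : 8 * (y * (1 - y ^ 2)) * (2 * y * z + z ^ 2) ≤ 8 * 0.4 * (2 * y * z + z ^ 2) := by
    gcongr
  have hz' : z * (2 * y + z) ≤ z * 2 := by gcongr; linarith
  have hcubic : 0 ≤ (1 - y) * (2 - 13 * (1 - y) + 4 * (1 - y) ^ 2) :=
    mul_nonneg (by linarith) (by linarith [sq_nonneg (1 - y - 0.161)])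
  linarith

lemma base_flat {h y c R : ℝ} (hy : 0.839 < y) (hy' : y < 1) (hcy : y < c) (hc : c ≤ 1)
    (hR : 1 ≤ R) (hqy : 1 ≤ y ^ 2 + (1 - c ^ 2) * R ^ 2) :
    8 * (h - y) ≤ h ^ 2 * (2 - c ^ 2) + 2 * h * c * R + R ^ 2 := by
  have hT : 0 ≤ 1 - c ^ 2 := by nlinarith [sub_nonneg.2 hc]
  have hT' : 0 < 1 + (1 - c ^ 2) := by linarith
  have hyd : y < c * R := by nlinarith
  have key := base_flat_discriminant hy hy' hyd hT
    (by linarith [mul_le_mul_of_nonneg_left (sub_nonneg.2 hqy) (sq_nonneg c)])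
  have hsq : 0 ≤ (1 + (1 - c ^ 2)) *
      (h ^ 2 * (2 - c ^ 2) + 2 * h * c * R + R ^ 2 - 8 * (h - y)) := by
    linarith [sq_nonneg ((1 + (1 - c ^ 2)) * h + (c * R - 4))]
  linarith [nonneg_of_mul_nonneg_right hsq hT']

lemma base_acute {h y w c R : ℝ} (hh : 1 ≤ h) (hy : 0 < y) (hw : 1 ≤ w)
    (hwy : 1 ≤ y ^ 2 + w ^ 2 / 4) (hc : 0 ≤ c) (hc' : c ≤ 1) (hR : 1 ≤ R)
    (hqy : 1 ≤ y ^ 2 + (1 - c ^ 2) * R ^ 2) (hhc : 1 < h * c) (hyh : y < h) :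
    8 * (h - y) ≤ w * (h ^ 2 * (2 - c ^ 2) + 2 * h * c * R + R ^ 2) := by
  have hh0 : 0 < h := by linarith
  have hE : h ^ 2 * (2 - c ^ 2) + 2 * h * c + 1 ≤
      h ^ 2 * (2 - c ^ 2) + 2 * h * c * R + R ^ 2 := by
    nlinarith [mul_nonneg hh0.le hc]
  rcases le_or_gt 2 (w * (1 + y)) with hwide | hnarrow
  · refine base_far_width hw (le_trans ?_ hE) hwide
    have : 0 ≤ h * (1 - c) * (h * (1 + c) - 2) :=
      mul_nonneg (mul_nonneg hh0.le (by linarith)) (by nlinarith)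
    linarith
  obtain ⟨hy₁, hy₂⟩ := base_narrow_height hy hw hwy hnarrow
  have key : 8 * (h - y) ≤ h ^ 2 * (2 - c ^ 2) + 2 * h * c * R + R ^ 2 := by
    rcases le_or_gt c y with hcy | hcy
    · exact (base_steep hh0 hy₁ hy₂ hcy hhc).trans hE
    · exact base_flat hy₁ hy₂ hcy hc' hR hqy
  exact key.trans (le_mul_of_one_le_left (by linarith) hw)

lemma base_obtuse {h y w : ℝ} (hy : 0 < y) (hw : 1 ≤ w) (hwy : 1 ≤ y ^ 2 + w ^ 2 / 4) :
    8 * (h - y) ≤ w * (2 * h ^ 2 + 2) := by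
  have key : 4 ≤ w ^ 2 + 4 * w * y := by
    rcases le_total y w with h | h <;> nlinarith
  have hsq : 0 ≤ w * (w * (h ^ 2 + 1) - 4 * (h - y)) := by linarith [sq_nonneg (w * h - 2)]
  linarith [nonneg_of_mul_nonneg_right hsq (by linarith)]

lemma base_half_sum {h y w d q e x : ℝ} (hh : 1 ≤ h) (hy : 0 < y) (hyh : y < h) (hw : 1 ≤ w)
    (hwy : 1 ≤ y ^ 2 + w ^ 2 / 4) (hqy : 1 ≤ y ^ 2 + q ^ 2) (hq : 0 < q) (hx : 0 < x)
    (hd : 0 ≤ d) (hY : 1 ≤ d ^ 2 + q ^ 2) (hX : 1 ≤ e ^ 2 + x ^ 2) (htri : q * e ≤ x * d) :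
    8 * (h - y) ≤ w * ((h + d) ^ 2 + q ^ 2 + (h - e) ^ 2 + x ^ 2) := by
  have hw₀ : 0 ≤ w := by linarith
  -- `(d, q)` has length `R` and direction cosine `c`, `(e, x)` has length `r`.
  obtain ⟨R, hR, hRsq⟩ : ∃ R, 1 ≤ R ∧ R ^ 2 = d ^ 2 + q ^ 2 :=
    ⟨√(d ^ 2 + q ^ 2), Real.one_le_sqrt.2 hY, Real.sq_sqrt (by positivity)⟩
  obtain ⟨r, hr, hrsq⟩ : ∃ r, 1 ≤ r ∧ r ^ 2 = e ^ 2 + x ^ 2 :=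
    ⟨√(e ^ 2 + x ^ 2), Real.one_le_sqrt.2 hX, Real.sq_sqrt (by positivity)⟩
  obtain ⟨c, hc, rfl⟩ : ∃ c, 0 ≤ c ∧ d = c * R :=
    ⟨d / R, by positivity, (div_mul_cancel₀ d (by positivity)).symm⟩
  have hq_sq : q ^ 2 = (1 - c ^ 2) * R ^ 2 := by linarith
  have hc₁ : c ≤ 1 := by
    have : 0 < (1 - c ^ 2) * R ^ 2 := hq_sq ▸ by positivity
    nlinarith [pos_of_mul_pos_left this (sq_nonneg R)]
  have he : e ≤ c * r := by
    rcases le_or_gt e 0 with he | he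
    · exact he.trans (by positivity)
    have hsq : (q * e) ^ 2 ≤ (x * (c * R)) ^ 2 := by gcongr
    have : (e * R) ^ 2 ≤ (c * r * R) ^ 2 := by
      rw [mul_pow, mul_right_comm, mul_pow (c * R), hRsq, hrsq]
      linarith
    exact le_of_mul_le_mul_right (le_of_sq_le_sq this (by positivity)) (by positivity)
  have hhe : h * e ≤ h * c * r := by rw [mul_assoc]; gcongr
  rcases le_or_gt (h * c) 1 with hhc | hhc
  · refine (base_obtuse hy hw hwy).trans (mul_le_mul_of_nonneg_left ?_ hw₀)
    have : 0 ≤ (r - 1) * (r + 1 - 2 * (h * c)) := mul_nonneg (by linarith) (by linarith)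
    have : 0 ≤ (R - 1) * (R + 1 + 2 * (h * c)) := mul_nonneg (by linarith) (by positivity)
    linarith
  · refine (base_acute hh hy hw hwy hc hc₁ hR (hq_sq ▸ hqy) hhc hyh).trans
      (mul_le_mul_of_nonneg_left ?_ hw₀)
    linarith [sq_nonneg (r - h * c)]

/-- Coordinates of the innermost crossing: the edge from `c = (0, 0)` to `b = (h + y, 0)` is crossed
at `(h, 0)` by the vertical edge from `n₁ = (h, w₁)` to `n₂ = (h, -w₂)`; `X = (x₁, x₂)` and
`Y = (y₁, -y₂)` are such that `n₁` lies in the triangle `b c X`, `n₂` in `b c Y`, and `b` in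
`X Y c`. The edges `n₁ n₂`, `b n₁`, `b n₂`, `b c`, `b X`, `b Y` have length at least `1`. -/
structure BaseCoordinates (h y w₁ w₂ x₁ x₂ y₁ y₂ : ℝ) : Prop where
  h_pos : 0 < h
  y_pos : 0 < y
  w₁_pos : 0 < w₁
  w₂_pos : 0 < w₂
  x₂_pos : 0 < x₂
  y₂_pos : 0 < y₂
  slope_X : w₁ * x₁ ≤ h * x₂
  slope_Y : w₂ * y₁ ≤ h * y₂
  inside : (h + y) * (y₂ + x₂) ≤ y₁ * x₂ + y₂ * x₁
  one_le_bc : 1 ≤ h + y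
  one_le_n : 1 ≤ w₁ + w₂
  one_le_bn₁ : 1 ≤ y ^ 2 + w₁ ^ 2
  one_le_bn₂ : 1 ≤ y ^ 2 + w₂ ^ 2
  one_le_bX : 1 ≤ (x₁ - (h + y)) ^ 2 + x₂ ^ 2
  one_le_bY : 1 ≤ (y₁ - (h + y)) ^ 2 + y₂ ^ 2

namespace BaseCoordinates

variable {h y w₁ w₂ x₁ x₂ y₁ y₂ : ℝ}

lemma flip (k : BaseCoordinates h y w₁ w₂ x₁ x₂ y₁ y₂) :
    BaseCoordinates h y w₂ w₁ y₁ y₂ x₁ x₂ :=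
  ⟨k.h_pos, k.y_pos, k.w₂_pos, k.w₁_pos, k.y₂_pos, k.x₂_pos, k.slope_Y, k.slope_X,
    by linarith [k.inside], k.one_le_bc, by linarith [k.one_le_n], k.one_le_bn₂, k.one_le_bn₁,
    k.one_le_bY, k.one_le_bX⟩

lemma le_normSq_of_le (k : BaseCoordinates h y w₁ w₂ x₁ x₂ y₁ y₂) (hfar : h + y ≤ y₁) :
    8 * h ≤ (w₁ + w₂) * (x₁ ^ 2 + x₂ ^ 2 + y₁ ^ 2 + y₂ ^ 2) := by
  obtain ⟨hh, hy, hw₁, hw₂, hx₂, hy₂, _, hY, hin, hbc, hn, hn₁, hn₂, hbX, hbY⟩ := k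
  have hwy : 1 ≤ y ^ 2 + (w₁ + w₂) ^ 2 / 4 := by
    rcases le_total w₁ w₂ with h | h <;> nlinarith
  have hw₂y₂ : w₂ ≤ y₂ := by
    have : w₂ * h ≤ w₂ * y₁ := by gcongr; linarith
    exact le_of_mul_le_mul_right (by linarith) hh
  have hyy₂ : 1 ≤ y ^ 2 + y₂ ^ 2 := hn₂.trans (by gcongr)
  linarith [base_half_sum (e := h + y - x₁) hbc hy (by linarith) hn hwy hyy₂ hy₂ hx₂
    (sub_nonneg.2 hfar) hbY (by linarith) (by linarith)]

lemma le_normSq (k : BaseCoordinates h y w₁ w₂ x₁ x₂ y₁ y₂) :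
    8 * h ≤ (w₁ + w₂) * (x₁ ^ 2 + x₂ ^ 2 + y₁ ^ 2 + y₂ ^ 2) := by
  rcases le_or_gt (h + y) y₁ with hfar | hnear
  · exact k.le_normSq_of_le hfar
  · have hfar : h + y ≤ x₁ := by
      have : y₁ * x₂ ≤ (h + y) * x₂ := mul_le_mul_of_nonneg_right hnear.le k.x₂_pos.le
      exact le_of_mul_le_mul_left (by linarith [k.inside]) k.y₂_pos
    linarith [k.flip.le_normSq_of_le hfar]

lemma area_pos (k : BaseCoordinates h y w₁ w₂ x₁ x₂ y₁ y₂) : 0 < y₁ * x₂ + y₂ * x₁ :=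
  lt_of_lt_of_le (mul_pos (add_pos k.h_pos k.y_pos) (add_pos k.y₂_pos k.x₂_pos)) k.inside

lemma pos_of_dot_pos (k : BaseCoordinates h y w₁ w₂ x₁ x₂ y₁ y₂)
    (hdot : 0 < x₁ * y₁ - x₂ * y₂) : 0 < x₁ ∧ 0 < y₁ := by
  have hprod : 0 < x₁ * y₁ := by linarith [mul_pos k.x₂_pos k.y₂_pos]
  have hsum := k.area_pos
  rcases mul_pos_iff.1 hprod with h | ⟨hx₁, hy₁⟩
  · exact h
  · linarith [mul_neg_of_neg_of_pos hy₁ k.x₂_pos, mul_neg_of_pos_of_neg k.y₂_pos hx₁]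

lemma doubling (k : BaseCoordinates h y w₁ w₂ x₁ x₂ y₁ y₂)
    (hdot : 0 < x₁ * y₁ - x₂ * y₂) :
    4 * 2 * (x₁ * y₁ - x₂ * y₂) ≤
      (y₁ * x₂ + y₂ * x₁) * (x₁ ^ 2 + x₂ ^ 2 + y₁ ^ 2 + y₂ ^ 2) := by
  obtain ⟨hx₁, hy₁⟩ := k.pos_of_dot_pos hdot
  obtain ⟨hh, hx₂, hy₂⟩ := And.intro k.h_pos (And.intro k.x₂_pos k.y₂_pos)
  have hw : 0 < w₁ + w₂ := add_pos k.w₁_pos k.w₂_pos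
  have harea : (w₁ + w₂) * (x₁ * y₁) ≤ h * (y₁ * x₂ + y₂ * x₁) := by
    linarith [mul_le_mul_of_nonneg_right k.slope_X hy₁.le,
      mul_le_mul_of_nonneg_right k.slope_Y hx₁.le]
  have hdot_le : x₁ * y₁ - x₂ * y₂ ≤ x₁ * y₁ := by linarith [mul_pos hx₂ hy₂]
  set S := x₁ ^ 2 + x₂ ^ 2 + y₁ ^ 2 + y₂ ^ 2
  have : 0 ≤ S := by positivity
  refine le_of_mul_le_mul_left ?_ hh
  calc h * (4 * 2 * (x₁ * y₁ - x₂ * y₂)) = 8 * h * (x₁ * y₁ - x₂ * y₂) := by ring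
    _ ≤ (w₁ + w₂) * S * (x₁ * y₁ - x₂ * y₂) := 
      mul_le_mul_of_nonneg_right k.le_normSq hdot.le
    _ ≤ (w₁ + w₂) * S * (x₁ * y₁) := by gcongr
    _ = (w₁ + w₂) * (x₁ * y₁) * S := by ring
    _ ≤ h * (y₁ * x₂ + y₂ * x₁) * S := by gcongr
    _ = h * ((y₁ * x₂ + y₂ * x₁) * S) := by ring

end BaseCoordinates

/-- The edges `bc` and `n₁n₂` cross at a right angle, `n₁` lies in the triangle `bcX`, `n₂` in
`bcY` and `b` in `XYc`, and the edges at `b` and the edge `n₁n₂` have length at least `1`. -/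
structure InnermostCrossing (b c X Y n₁ n₂ : ℝ × ℝ) : Prop where
  side_bc : orient b c n₁ * orient b c n₂ < 0
  side_n : orient n₁ n₂ b * orient n₁ n₂ c < 0
  perp : dotAt b c n₁ = dotAt b c n₂
  inside_n₁ : InsideTriangle b c X n₁
  inside_n₂ : InsideTriangle b c Y n₂
  inside_b : InsideTriangle X Y c b
  one_le_bc : 1 ≤ dotAt b c c
  one_le_n : 1 ≤ dotAt n₁ n₂ n₂
  one_le_bn₁ : 1 ≤ dotAt b n₁ n₁
  one_le_bn₂ : 1 ≤ dotAt b n₂ n₂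
  one_le_bX : 1 ≤ dotAt b X X
  one_le_bY : 1 ≤ dotAt b Y Y

namespace InnermostCrossing

variable {b c X Y n₁ n₂ : ℝ × ℝ}

lemma map (h : InnermostCrossing b c X Y n₁ n₂) {f : ℝ × ℝ → ℝ × ℝ} (hf : IsCongruence f) :
    InnermostCrossing (f b) (f c) (f X) (f Y) (f n₁) (f n₂) where
  side_bc := by simpa only [hf.orient_mul_orient] using h.side_bc
  side_n := by simpa only [hf.orient_mul_orient] using h.side_n
  perp := by simpa only [hf.dotAt_map] using h.perp
  inside_n₁ := hf.insideTriangle_iff.2 h.inside_n₁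
  inside_n₂ := hf.insideTriangle_iff.2 h.inside_n₂
  inside_b := hf.insideTriangle_iff.2 h.inside_b
  one_le_bc := by simpa only [hf.dotAt_map] using h.one_le_bc
  one_le_n := by simpa only [hf.dotAt_map] using h.one_le_n
  one_le_bn₁ := by simpa only [hf.dotAt_map] using h.one_le_bn₁
  one_le_bn₂ := by simpa only [hf.dotAt_map] using h.one_le_bn₂
  one_le_bX := by simpa only [hf.dotAt_map] using h.one_le_bX
  one_le_bY := by simpa only [hf.dotAt_map] using h.one_le_bY

lemma signs {h y h' w₁ w₂ x₁ x₂ y₁ y₂ : ℝ}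
    (k : InnermostCrossing (h + y, 0) 0 (x₁, x₂) (y₁, -y₂) (h, w₁) (h', -w₂))
    (hL : 0 < h + y) (hw : -w₂ ≤ w₁) :
    h' = h ∧ 0 < h ∧ 0 < y ∧ 0 < w₁ ∧ 0 < w₂ ∧ 0 < x₂ ∧ 0 < y₂ := by
  obtain ⟨hbc, hn, hperp, ⟨hX, -, -⟩, ⟨hY, -, -⟩, -, -⟩ := k
  simp only [orient, dotAt, Prod.fst_zero, Prod.snd_zero] at hbc hn hperp hX hY
  obtain rfl : h' = h := mul_left_cancel₀ hL.ne' (by linarith)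
  have hL₂ : 0 < (h' + y) ^ 2 := pow_pos hL 2
  have hww : 0 < w₁ * w₂ := pos_of_mul_pos_right (a := (h' + y) ^ 2) (by linarith) hL₂.le
  have hw₁ : 0 < w₁ := by
    by_contra! hw₁
    linarith [mul_nonneg (neg_nonneg.2 hw₁) (show 0 ≤ w₂ by linarith)]
  have hw₂ : 0 < w₂ := pos_of_mul_pos_right hww hw₁.le
  have hhy : 0 < h' * y := pos_of_mul_pos_right (a := (w₁ + w₂) ^ 2) (by linarith) (sq_nonneg _)
  have hh : 0 < h' := by
    by_contra! hh
    linarith [mul_nonneg (neg_nonneg.2 hh) (show 0 ≤ y by linarith)]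
  have hX₂ : 0 < w₁ * x₂ := pos_of_mul_pos_right (a := (h' + y) ^ 2) (by linarith) hL₂.le
  have hY₂ : 0 < w₂ * y₂ := pos_of_mul_pos_right (a := (h' + y) ^ 2) (by linarith) hL₂.le
  exact ⟨rfl, hh, pos_of_mul_pos_right hhy hh.le, hw₁, hw₂,
    pos_of_mul_pos_right hX₂ hw₁.le, pos_of_mul_pos_right hY₂ hw₂.le⟩

lemma baseCoordinates {h y h' w₁ w₂ x₁ x₂ y₁ y₂ : ℝ}
    (k : InnermostCrossing (h + y, 0) 0 (x₁, x₂) (y₁, -y₂) (h, w₁) (h', -w₂))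
    (hL : 0 < h + y) (hw : -w₂ ≤ w₁) : BaseCoordinates h y w₁ w₂ x₁ x₂ y₁ y₂ := by
  obtain ⟨rfl, hh, hy, hw₁, hw₂, hx₂, hy₂⟩ := k.signs hL hw
  obtain ⟨-, -, -, ⟨-, hX, -⟩, ⟨-, hY, -⟩, ⟨hXY, hYb, -⟩, hbc, hn, hn₁, hn₂, hbX, hbY⟩ := k
  simp only [orient, dotAt, Prod.fst_zero, Prod.snd_zero] at hX hY hXY hYb hbc hn hn₁ hn₂ hbX hbY
  have hLx : 0 < (h' + y) * x₂ := mul_pos hL hx₂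
  have hLy : 0 < (h' + y) * y₂ := mul_pos hL hy₂
  have hslope : 0 < h' * x₂ - w₁ * x₁ :=
    pos_of_mul_pos_right (a := (h' + y) * x₂) (by linarith) hLx.le
  have hslope' : 0 < h' * y₂ - w₂ * y₁ :=
    pos_of_mul_pos_right (a := (h' + y) * y₂) (by linarith) hLy.le
  have harea : 0 < y₁ * x₂ + y₂ * x₁ :=
    pos_of_mul_pos_right (a := (h' + y) * y₂) (by linarith) hLy.le
  have hin : 0 < y₁ * x₂ + y₂ * x₁ - (h' + y) * (y₂ + x₂) :=
    pos_of_mul_pos_right (a := y₁ * x₂ + y₂ * x₁) (by linarith) harea.le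
  exact ⟨hh, hy, hw₁, hw₂, hx₂, hy₂, by linarith, by linarith, by linarith, by nlinarith,
    by nlinarith, by linarith, by linarith, by linarith, by linarith⟩

lemma potentialGE_two (k : InnermostCrossing b c X Y n₁ n₂) : PotentialGE 2 c X Y := by
  have hne : c ≠ b := by
    rintro rfl
    simpa using k.side_bc
  obtain ⟨f, hf, hc, hcb, hlt, hn⟩ := exists_isCongruence_horizontal c hne n₁ n₂
  have key := k.map hf
  rw [← hf.potentialGE_iff]
  rw [hc] at key hcb hlt ⊢
  obtain ⟨x₁, x₂, hX⟩ : ∃ x₁ x₂, f X = (x₁, x₂) := ⟨_, _, rfl⟩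
  obtain ⟨y₁, y₂, hY⟩ : ∃ y₁ y₂, f Y = (y₁, -y₂) := ⟨(f Y).1, -(f Y).2, by simp⟩
  obtain ⟨h, w₁, hn₁⟩ : ∃ h w₁, f n₁ = (h, w₁) := ⟨_, _, rfl⟩
  obtain ⟨h', w₂, hn₂⟩ : ∃ h' w₂, f n₂ = (h', -w₂) := ⟨(f n₂).1, -(f n₂).2, by simp⟩
  obtain ⟨y, hb⟩ : ∃ y, f b = (h + y, 0) := ⟨(f b).1 - h, Prod.ext (by simp) (by simpa using hcb)⟩
  rw [hX, hY, hn₁, hn₂, hb] at key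
  rw [hn₁, hn₂] at hn
  rw [hb] at hlt
  have hcoord := key.baseCoordinates hlt hn
  have harea := hcoord.area_pos
  rw [hX, hY]
  simp only [PotentialGE, dotAt, orient, Prod.fst_zero, Prod.snd_zero, sub_zero]
  intro hdot
  rw [abs_of_neg (by linarith)]
  linarith [hcoord.doubling (by linarith)]

end InnermostCrossing

end BaseInequality

section BoundingBox

lemma orient_le_of_mem_Icc {a b P Q R : ℝ × ℝ} (hP : P ∈ Icc a b) (hQ : Q ∈ Icc a b)
    (hR : R ∈ Icc a b) : orient P Q R ≤ (b.1 - a.1) * (b.2 - a.2) := by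
  obtain ⟨⟨hPa, hPb⟩, hPa', hPb'⟩ := hP
  obtain ⟨⟨hQa, hQb⟩, hQa', hQb'⟩ := hQ
  obtain ⟨⟨hRa, hRb⟩, hRa', hRb'⟩ := hR
  have hterm : ∀ x t : ℝ, a.1 ≤ x → x ≤ b.1 → (x - a.1) * t ≤ (b.1 - a.1) * max t 0 := by
    intro x t hx hx'
    have : 0 ≤ x - a.1 := sub_nonneg.2 hx
    calc (x - a.1) * t ≤ (x - a.1) * max t 0 := by gcongr; exact le_max_left t 0
      _ ≤ (b.1 - a.1) * max t 0 := by gcongr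
  have hheight : max (Q.2 - R.2) 0 + max (R.2 - P.2) 0 + max (P.2 - Q.2) 0 ≤ b.2 - a.2 := by
    rcases max_cases (Q.2 - R.2) 0 with h | h <;> rcases max_cases (R.2 - P.2) 0 with h' | h' <;>
      rcases max_cases (P.2 - Q.2) 0 with h'' | h'' <;> linarith
  calc orient P Q R = (P.1 - a.1) * (Q.2 - R.2) + (Q.1 - a.1) * (R.2 - P.2)
        + (R.1 - a.1) * (P.2 - Q.2) := by unfold orient; ring
    _ ≤ (b.1 - a.1) * max (Q.2 - R.2) 0 + (b.1 - a.1) * max (R.2 - P.2) 0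
        + (b.1 - a.1) * max (P.2 - Q.2) 0 :=
      add_le_add_three (hterm _ _ hPa hPa') (hterm _ _ hQa hQa') (hterm _ _ hRa hRa')
    _ = (b.1 - a.1) * (max (Q.2 - R.2) 0 + max (R.2 - P.2) 0 + max (P.2 - Q.2) 0) := by ring
    _ ≤ (b.1 - a.1) * (b.2 - a.2) :=
      mul_le_mul_of_nonneg_left hheight (sub_nonneg.2 (hPa.trans hPa'))

lemma abs_orient_le_boundingBox {V : Type*} [Finite V] (ρ : V → ℝ × ℝ) (a b c : V) :
    |orient (ρ a) (ρ b) (ρ c)| ≤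
      (sSup (range fun v => (ρ v).1) - sInf (range fun v => (ρ v).1)) *
      (sSup (range fun v => (ρ v).2) - sInf (range fun v => (ρ v).2)) := by
  have hmem (v : V) : ρ v ∈ Icc
      (sInf (range fun v => (ρ v).1), sInf (range fun v => (ρ v).2))
      (sSup (range fun v => (ρ v).1), sSup (range fun v => (ρ v).2)) :=
    ⟨⟨csInf_le (finite_range _).bddBelow ⟨v, rfl⟩, csInf_le (finite_range _).bddBelow ⟨v, rfl⟩⟩,
      le_csSup (finite_range _).bddAbove ⟨v, rfl⟩, le_csSup (finite_range _).bddAbove ⟨v, rfl⟩⟩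
  refine abs_le'.2 ⟨orient_le_of_mem_Icc (hmem a) (hmem b) (hmem c), ?_⟩
  rw [← orient_swap]
  exact orient_le_of_mem_Icc (hmem b) (hmem a) (hmem c)

end BoundingBox

section LowerBound

/-! ### Lower bounds on the area -/

variable {V : Type*} {G : SimpleGraph V} {ρ : V → ℝ × ℝ}

lemma IsRACDrawing.dotAt_eq (hr : IsRACDrawing G ρ) {a b c d : V} (hab : G.Adj a b)
    (hcd : G.Adj c d) (hx : Crosses ρ s(a, b) s(c, d)) :
    dotAt (ρ a) (ρ b) (ρ c) = dotAt (ρ a) (ρ b) (ρ d) := by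
  unfold dotAt
  linarith [hr _ hab _ hcd hx a b c d rfl rfl]

lemma IsKite.rightKite (hr : IsRACDrawing G ρ) (hG : IsStraightLineDrawing G ρ) {q : Fin 5 → V}
    (hk : IsKite G ρ q) :
    RightKite (ρ (q 0)) (ρ (q 1)) (ρ (q 2)) (ρ (q 3)) (ρ (q 4)) where
  side_AX := by
    rw [mul_comm]
    exact orient_mul_orient_neg_of_inter hk.crosses.2 (hk.k5.orient_ne_zero hG 0 1 2)
  side_BY := by
    rw [mul_comm]
    exact orient_mul_orient_neg_of_inter hk.crosses.symm.2 (hk.k5.orient_ne_zero hG 2 3 0)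
  perp := (hr.dotAt_eq (hk.k5.adj 0 1) (hk.k5.adj 2 3) hk.crosses).symm
  inside_Y := hk.inside_three
  inside_X := hk.inside_one

namespace IsDoubleChain

variable {m : ℕ} {v : Bool → ℕ → Fin 4 → V} {s : Bool}

lemma innermostCrossing (hC : IsDoubleChain G m v) (h : IsICPlanarDrawing G ρ)
    (hr : IsRACDrawing G ρ) (hl : ∀ a b, G.Adj a b → 1 ≤ dotAt (ρ a) (ρ b) (ρ b)) {r r' : Fin 4}
    (h₂ : 2 ≤ r) (h₂' : 2 ≤ r') (hrr' : r ≠ r') (hk : IsKite G ρ (quint v s 0 r r')) :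
    InnermostCrossing (ρ (v s 0 1)) (ρ (v s 0 0)) (ρ (v s 1 r)) (ρ (v s 1 r')) (ρ (v s 0 r))
      (ρ (v s 0 r')) := by
  have hm := hC.one_le
  have hadj {i j : Fin 4} (hij : i ≠ j) : G.Adj (v s 0 i) (v s 0 j) := hC.adj_same s m.zero_le hij
  obtain ⟨hn, hn', hx⟩ := hC.insideTriangle_base h₂ h₂' h hrr' hk
  rw [Sym2.eq_swap] at hx
  exact {
    side_bc := orient_mul_orient_neg_of_inter hx.2
      (h.1.orient_ne_zero (hadj (by decide)) (hadj (by omega)) (hadj (by omega)))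
    side_n := orient_mul_orient_neg_of_inter hx.symm.2
      (h.1.orient_ne_zero (hadj hrr') (hadj (by omega)) (hadj (by omega)))
    perp := hr.dotAt_eq (hadj (by decide)) (hadj hrr') hx
    inside_n₁ := hn
    inside_n₂ := hn'
    inside_b := hC.insideTriangle_one h₂ h₂' h hm hk
    one_le_bc := hl _ _ (hadj (by decide))
    one_le_n := hl _ _ (hadj hrr')
    one_le_bn₁ := hl _ _ (hadj (by omega))
    one_le_bn₂ := hl _ _ (hadj (by omega))
    one_le_bX := hl _ _ (hC.adj_one_succ s hm h₂)
    one_le_bY := hl _ _ (hC.adj_one_succ s hm h₂') }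

lemma potentialGE (hC : IsDoubleChain G m v) (h : IsICPlanarDrawing G ρ) (hr : IsRACDrawing G ρ)
    (hl : ∀ a b, G.Adj a b → 1 ≤ dotAt (ρ a) (ρ b) (ρ b)) (hs : AvoidsOtherChain G ρ m v s) {i : ℕ}
    (hi : i + 1 ≤ m) {r r' : Fin 4} (h₂ : 2 ≤ r) (h₂' : 2 ≤ r') (hrr' : r ≠ r')
    (hk : IsKite G ρ (quint v s i r r')) :
    PotentialGE (2 ^ (i + 1)) (ρ (v s i 0)) (ρ (v s (i + 1) r)) (ρ (v s (i + 1) r')) := by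
  induction i generalizing r r' with
  | zero =>
    rw [zero_add, pow_one]
    exact (hC.innermostCrossing h hr hl h₂ h₂' hrr' hk).potentialGE_two
  | succ i ih =>
    have hi' : i + 1 ≤ m := i.succ.le_succ.trans hi
    obtain ⟨t, t', ht, ht', htt', hk'⟩ := hC.exists_isKite_quint h hs hi'
    rw [pow_succ']
    exact ((hk'.rightKite hr h.1).potentialGE_two_mul (ih hi' ht ht' htt' hk')).mono
      (hC.insideTriangle_one h₂ h₂' h hi hk) (hC.insideTriangle_succ_zero h₂ h₂' h hi hk)

theorem two_pow_le_boundingBox [Finite V] (hC : IsDoubleChain G m v) (h : IsICPlanarDrawing G ρ)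
    (hr : IsRACDrawing G ρ) (hl : ∀ a b, G.Adj a b → 1 ≤ dotAt (ρ a) (ρ b) (ρ b)) :
    (2 : ℝ) ^ (m + 1) ≤
      (sSup (range fun v => (ρ v).1) - sInf (range fun v => (ρ v).1)) *
      (sSup (range fun v => (ρ v).2) - sInf (range fun v => (ρ v).2)) := by
  obtain ⟨i, rfl⟩ := Nat.exists_eq_add_of_le' hC.one_le
  obtain ⟨s, hs⟩ := hC.exists_avoidsOtherChain h
  obtain ⟨r, r', h₂, h₂', hrr', hk⟩ := hC.exists_isKite_quint h hs le_rfl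
  rw [pow_succ']
  exact ((hk.rightKite hr h.1).two_mul_le_abs_orient
    (hC.potentialGE h hr hl hs le_rfl h₂ h₂' hrr' hk)).trans (abs_orient_le_boundingBox ρ _ _ _)

end IsDoubleChain

lemma two_le_of_one_le_sq_add_sq {m t : ℝ} (ht : 0 < t) (htm : t ≤ m) (h : 1 ≤ m ^ 2 + t ^ 2) :
    2 ≤ 2 * m * max 1 (2 * t) + m * t := by
  have hm : 0 < m := ht.trans_le htm
  rcases le_or_gt t (1 / 2) with hsmall | hlarge
  · have hpoly : 0 ≤ t * (4 - 3 * t - 4 * t ^ 2 - t ^ 3) := by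
      have ht₂ : t ^ 2 ≤ (1 / 2) ^ 2 := by gcongr
      have ht₃ : t ^ 3 ≤ (1 / 2) ^ 3 := by gcongr
      exact mul_nonneg ht.le (by linarith)
    have hsq : 2 ^ 2 ≤ (m * (2 + t)) ^ 2 :=
      calc 2 ^ 2 ≤ (1 - t ^ 2) * (2 + t) ^ 2 := by linarith
        _ ≤ m ^ 2 * (2 + t) ^ 2 := by gcongr; linarith
        _ = (m * (2 + t)) ^ 2 := by ring
    have hmax : 2 * m * 1 ≤ 2 * m * max 1 (2 * t) := by gcongr; exact le_max_left 1 (2 * t)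
    linarith [le_of_sq_le_sq hsq (by positivity)]
  · have hsq : 2 ^ 2 ≤ (5 * (m * t)) ^ 2 := by
      have : 0 ≤ (m ^ 2 - 1 / 4) * (t ^ 2 - 1 / 4) := mul_nonneg (by nlinarith) (by nlinarith)
      linarith
    have hmax : 2 * m * (2 * t) ≤ 2 * m * max 1 (2 * t) := by gcongr; exact le_max_right 1 (2 * t)
    linarith [le_of_sq_le_sq hsq (by positivity)]

lemma two_le_cross_area {a b x y : ℝ} (ha : 0 < a) (hb : 0 < b) (hx : 0 < x) (hy : 0 < y)
    (hab : 1 ≤ a ^ 2 + b ^ 2) (hxy : 1 ≤ x ^ 2 + y ^ 2) (hay : 1 ≤ a ^ 2 + y ^ 2)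
    (hxb : 1 ≤ x ^ 2 + b ^ 2) (hax : 1 ≤ a + x) (hby : 1 ≤ b + y) :
    2 ≤ (a + x) * (b + y) + x * y := by
  wlog hmin : min b y ≤ min a x generalizing a b x y
  · linarith [this hb ha hy hx (by linarith) (by linarith) (by linarith) (by linarith) hby hax
      (le_of_not_ge hmin)]
  have hcross : 1 ≤ min a x ^ 2 + min b y ^ 2 := by
    rcases min_choice a x with h | h <;> rcases min_choice b y with h' | h' <;> rw [h, h'] <;>
      assumption
  have : 0 < min a x := lt_min ha hx
  have ht : 0 < min b y := lt_min hb hy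
  calc 2 ≤ 2 * min a x * max 1 (2 * min b y) + min a x * min b y :=
        two_le_of_one_le_sq_add_sq ht hmin hcross
    _ ≤ (a + x) * (b + y) + x * y := by
        gcongr
        · linarith [min_le_left a x, min_le_right a x]
        · exact max_le hby (by linarith [min_le_left b y, min_le_right b y])
        · exact min_le_right a x
        · exact min_le_right b y

lemma RightKite.two_le_abs_orient {A X B Y c : ℝ × ℝ} (h : RightKite A X B Y c)
    (hAX : 1 ≤ dotAt A X X) (hBY : 1 ≤ dotAt B Y Y) (hAB : 1 ≤ dotAt A B B)
    (hXY : 1 ≤ dotAt X Y Y) (hAY : 1 ≤ dotAt A Y Y) (hXB : 1 ≤ dotAt X B B) :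
    2 ≤ |orient A B c| := by
  obtain ⟨f, hf, r, s, u, v, a, b, k, hc, hX, hY, hA, hB⟩ := h.exists_coordinates
  rw [← hf.abs_orient, hA, hB, hc, k.abs_orient]
  rw [← hf.dotAt_map] at hAX hBY hAB hXY hAY hXB
  simp only [hX, hY, hA, hB, dotAt] at hAX hBY hAB hXY hAY hXB
  have hra : 0 < a - r := by linarith [k.r_lt_u, k.u_lt_a]
  have hsb : 0 < b - s := by linarith [k.s_lt_v, k.v_lt_b]
  have key := two_le_cross_area (sub_pos.2 k.u_lt_a) (sub_pos.2 k.v_lt_b) (sub_pos.2 k.r_lt_u)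
    (sub_pos.2 k.s_lt_v) (by linarith) (by linarith) (by linarith) (by linarith) (by nlinarith)
    (by nlinarith)
  linarith [mul_pos (sub_pos.2 k.r_lt_u) k.s_pos, mul_pos (sub_pos.2 k.s_lt_v) k.r_pos,
    k.uv_lt_as, k.uv_lt_br]

theorem IsK5.two_le_boundingBox [Finite V] {q : Fin 5 → V} (hq : IsK5 G q)
    (h : IsICPlanarDrawing G ρ) (hr : IsRACDrawing G ρ)
    (hl : ∀ a b, G.Adj a b → 1 ≤ dotAt (ρ a) (ρ b) (ρ b)) :
    2 ≤ (sSup (range fun v => (ρ v).1) - sInf (range fun v => (ρ v).1)) *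
      (sSup (range fun v => (ρ v).2) - sInf (range fun v => (ρ v).2)) := by
  obtain ⟨σ, -, hk⟩ := hq.exists_kite h
  have hlen (i j : Fin 5) (hij : i ≠ j := by decide) := hl _ _ (hk.k5.adj i j hij)
  exact ((hk.rightKite hr h.1).two_le_abs_orient (hlen 0 1) (hlen 2 3) (hlen 0 2) (hlen 1 3)
    (hlen 0 3) (hlen 1 2)).trans (abs_orient_le_boundingBox ρ _ _ _)

end LowerBound

section LatticeDrawing

/-! ### Lattice drawings -/

/-- The point of the plane with given integer coordinates. All drawings constructed below place
their vertices at such points, so that finitely many orientations can be checked by computation. -/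
def latticePoint (p : ℤ × ℤ) : ℝ × ℝ := (p.1, p.2)

lemma orient_latticePoint (a b c : ℤ × ℤ) :
    orient (latticePoint a) (latticePoint b) (latticePoint c) = orient a b c := by
  simp [orient, latticePoint]

/-- The line `ab` weakly separates `p` and `q` from `r` and `s`, and does not contain all four
points. -/
def SeparatedBy (a b p q r s : ℤ × ℤ) : Prop :=
  orient a b p ≤ 0 ∧ orient a b q ≤ 0 ∧ 0 ≤ orient a b r ∧ 0 ≤ orient a b s ∧
    orient a b p + orient a b q < orient a b r + orient a b s

instance (a b p q r s : ℤ × ℤ) : Decidable (SeparatedBy a b p q r s) :=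
  inferInstanceAs (Decidable (_ ∧ _))

/-- The segments `pq` and `rs` are weakly separated by a lattice line, which implies that their
interiors are disjoint. The segments may be degenerate. -/
def Separated (p q r s : ℤ × ℤ) : Prop := ∃ a b, SeparatedBy a b p q r s

/-- The map `f` multiplies all signed areas by `k`. -/
def ScalesOrient (k : ℤ) (f : ℤ × ℤ → ℤ × ℤ) : Prop :=
  ∀ a b c, orient (f a) (f b) (f c) = k * orient a b c

lemma ScalesOrient.iterate {k : ℤ} {f : ℤ × ℤ → ℤ × ℤ} (hf : ScalesOrient k f) (n : ℕ) :
    ScalesOrient (k ^ n) f^[n] := by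
  induction n with
  | zero => simp [ScalesOrient]
  | succ n ih =>
    intro a b c
    rw [Function.iterate_succ_apply', Function.iterate_succ_apply', Function.iterate_succ_apply',
      hf, ih, pow_succ']
    ring

variable {p q r s : ℤ × ℤ}

lemma ScalesOrient.exists_line {k : ℤ} (hk : k ≠ 0) {f : ℤ × ℤ → ℤ × ℤ} (hf : ScalesOrient k f)
    (a b : ℤ × ℤ) : ∃ a' b', ∃ l > 0, ∀ c, orient a' b' (f c) = l * orient a b c := by
  rcases hk.lt_or_gt with hk | hk
  · refine ⟨f b, f a, -k, neg_pos.2 hk, fun c => ?_⟩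
    rw [orient_swap, hf, neg_mul]
  · exact ⟨f a, f b, k, hk, hf a b⟩

/-- A decidable sufficient condition for `Separated p q r s`: one of the lines through the two
segments or the perpendicular to `pr` at `p` separates the segments. -/
def EvidentlySeparated (p q r s : ℤ × ℤ) : Prop :=
  SeparatedBy p q p q r s ∨ SeparatedBy q p p q r s ∨ SeparatedBy r s p q r s ∨
    SeparatedBy s r p q r s ∨ SeparatedBy p (p.1 + (r.2 - p.2), p.2 - (r.1 - p.1)) p q r s

instance (p q r s : ℤ × ℤ) : Decidable (EvidentlySeparated p q r s) :=
  inferInstanceAs (Decidable (_ ∨ _))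

lemma EvidentlySeparated.separated (h : EvidentlySeparated p q r s) : Separated p q r s := by
  rcases h with h | h | h | h | h <;> exact ⟨_, _, h⟩

namespace Separated

lemma symm (h : Separated p q r s) : Separated r s p q := by
  obtain ⟨a, b, hp, hq, hr, hs, hsum⟩ := h
  refine ⟨b, a, ?_⟩
  simp only [SeparatedBy, orient_swap a b]
  omega

lemma map {k : ℤ} (hk : k ≠ 0) {f : ℤ × ℤ → ℤ × ℤ} (hf : ScalesOrient k f)
    (h : Separated p q r s) : Separated (f p) (f q) (f r) (f s) := by
  obtain ⟨a, b, hp, hq, hr, hs, hsum⟩ := h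
  obtain ⟨a', b', l, hl, hline⟩ := hf.exists_line hk a b
  refine ⟨a', b', ?_, ?_, ?_, ?_, ?_⟩ <;> simp only [hline] <;> nlinarith

lemma of_snd (y : ℤ) (hp : p.2 ≤ y) (hq : q.2 ≤ y) (hr : y ≤ r.2) (hs : y ≤ s.2)
    (hsum : p.2 + q.2 < r.2 + s.2) : Separated p q r s := by
  refine ⟨(0, y), (1, y), ?_⟩
  simp only [SeparatedBy, orient]
  omega

lemma of_fst (x : ℤ) (hp : p.1 ≤ x) (hq : q.1 ≤ x) (hr : x ≤ r.1) (hs : x ≤ s.1)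
    (hsum : p.1 + q.1 < r.1 + s.1) : Separated p q r s := by
  refine ⟨(x, 1), (x, 0), ?_⟩
  simp only [SeparatedBy, orient]
  omega

lemma of_snd_ne (hpq : p.2 = q.2) (hrs : r.2 = s.2) (hpr : p.2 ≠ r.2) : Separated p q r s := by
  rcases hpr.lt_or_gt with h | h
  · exact of_snd p.2 le_rfl hpq.ge h.le (h.le.trans hrs.le) (by omega)
  · exact (of_snd r.2 le_rfl hrs.ge h.le (h.le.trans hpq.le) (by omega)).symm

lemma disjoint_openSegment (h : Separated p q r s) :
    Disjoint (openSegment ℝ (latticePoint p) (latticePoint q))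
      (openSegment ℝ (latticePoint r) (latticePoint s)) := by
  obtain ⟨a, b, hp, hq, hr, hs, hsum⟩ := h
  simp only [openSegment_eq_image_lineMap]
  rw [Set.disjoint_left]
  rintro _ ⟨t, ⟨ht0, ht1⟩, rfl⟩ ⟨t', ⟨ht0', ht1'⟩, e⟩
  have h := congr_arg (orient (latticePoint a) (latticePoint b)) e
  simp only [orient_lineMap, orient_latticePoint] at h
  have hpq : orient a b p < 0 ∨ orient a b q < 0 ∨ 0 < orient a b r ∨ 0 < orient a b s := by omega
  rify at hp hq hr hs hpq
  rcases hpq with hpq | hpq | hpq | hpq <;> nlinarith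

end Separated

lemma openSegment_inter_subsingleton_of_orient_ne {P Q R S : ℝ × ℝ}
    (h : orient P Q R ≠ orient P Q S) :
    (openSegment ℝ P Q ∩ openSegment ℝ R S).Subsingleton := by
  simp only [openSegment_eq_image_lineMap]
  rintro _ ⟨⟨t, -, rfl⟩, u, -, hu⟩ _ ⟨⟨t', -, rfl⟩, u', -, hu'⟩
  have h₁ := congr_arg (orient P Q) hu
  have h₂ := congr_arg (orient P Q) hu'
  simp only [orient_lineMap, orient_self_outer, orient_self_right, mul_zero, add_zero] at h₁ h₂
  have huu' : (u - u') * (orient P Q S - orient P Q R) = 0 := by linear_combination h₁ - h₂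
  rw [← hu, ← hu',
    sub_eq_zero.1 ((mul_eq_zero.1 huu').resolve_right (sub_ne_zero.2 h.symm))]

section OfSeparated

variable {V K : Type*} {R : V → V → Prop} {p : V → ℤ × ℤ} {χ : K → Bool → Sym2 V}

lemma exists_of_mem_edgeSet_fromRel {e : Sym2 V} (he : e ∈ (SimpleGraph.fromRel R).edgeSet) :
    ∃ u w, R u w ∧ e = s(u, w) := by
  induction e with
  | _ u w =>
    rcases he.2 with h | h
    · exact ⟨u, w, h, rfl⟩
    · exact ⟨w, u, h, Sym2.eq_swap⟩

/-- The family `χ` of pairs of edges accounts for all possible crossings of the drawing of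
`SimpleGraph.fromRel R` with vertices at the lattice points `p`. Since `R` may be reflexive, its
degenerate cells `(u, u)` also express that a vertex is not on an edge. -/
def SeparatedExcept (R : V → V → Prop) (p : V → ℤ × ℤ) (χ : K → Bool → Sym2 V) : Prop :=
  ∀ ⦃u w u' w'⦄, R u w → R u' w' → u ≠ u' → u ≠ w' → w ≠ u' → w ≠ w' →
    Separated (p u) (p w) (p u') (p w') ∨
      (∃ κ b, s(u, w) = χ κ b ∧ s(u', w') = χ κ !b) ∧
        orient (p u) (p w) (p u') ≠ orient (p u) (p w) (p w')

namespace SeparatedExcept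

lemma eq_of_crosses (h : SeparatedExcept R p χ) {e f : Sym2 V}
    (he : e ∈ (SimpleGraph.fromRel R).edgeSet) (hf : f ∈ (SimpleGraph.fromRel R).edgeSet)
    (hef : Crosses (latticePoint ∘ p) e f) : ∃ κ b, e = χ κ b ∧ f = χ κ !b := by
  obtain ⟨u, w, huw, rfl⟩ := exists_of_mem_edgeSet_fromRel he
  obtain ⟨u', w', huw', rfl⟩ := exists_of_mem_edgeSet_fromRel hf
  obtain ⟨hdisj, hmeet⟩ := hef
  simp only [Sym2.mem_iff, forall_eq_or_imp, forall_eq, not_or] at hdisj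
  obtain ⟨⟨h₁, h₂⟩, h₃, h₄⟩ := hdisj
  rcases h huw huw' h₁ h₂ h₃ h₄ with hsep | ⟨hχ, -⟩
  · exact absurd hmeet (Set.not_nonempty_iff_eq_empty.2 hsep.disjoint_openSegment.inter_eq)
  · exact hχ

lemma isStraightLineDrawing (h : SeparatedExcept R p χ) (hR : ∀ u, R u u) :
    IsStraightLineDrawing (SimpleGraph.fromRel R) (latticePoint ∘ p) where
  inj := by
    intro u v huv
    by_contra hne
    rcases h (hR u) (hR v) hne hne hne hne with hsep | ⟨-, hne'⟩
    · exact absurd huv (by simpa using hsep.disjoint_openSegment)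
    · exact hne' rfl
  no_vertex_on_edge := by
    intro e he v hv
    obtain ⟨u, w, huw, rfl⟩ := exists_of_mem_edgeSet_fromRel he
    simp only [Sym2.mem_iff, not_or] at hv
    rcases h huw (hR v) (Ne.symm hv.1) (Ne.symm hv.1) (Ne.symm hv.2) (Ne.symm hv.2) with
      hsep | ⟨-, hne⟩
    · intro hmem
      exact Set.disjoint_left.1 hsep.disjoint_openSegment hmem (by simp)
    · exact absurd rfl hne
  meet_at_most_once := by
    intro e he f hf hdisj
    obtain ⟨u, w, huw, rfl⟩ := exists_of_mem_edgeSet_fromRel he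
    obtain ⟨u', w', huw', rfl⟩ := exists_of_mem_edgeSet_fromRel hf
    simp only [Sym2.mem_iff, forall_eq_or_imp, forall_eq, not_or] at hdisj
    obtain ⟨⟨h₁, h₂⟩, h₃, h₄⟩ := hdisj
    rcases h huw huw' h₁ h₂ h₃ h₄ with hsep | ⟨-, hne⟩
    · exact (Set.disjoint_iff_inter_eq_empty.1 hsep.disjoint_openSegment) ▸ Set.subsingleton_empty
    · refine openSegment_inter_subsingleton_of_orient_ne ?_
      simpa [orient_latticePoint] using hne

lemma isICPlanarDrawing (h : SeparatedExcept R p χ) (hR : ∀ u, R u u)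
    (hχ : ∀ ⦃κ κ' b b' v⦄, v ∈ χ κ b → v ∈ χ κ' b' → κ = κ' ∧ b = b') :
    IsICPlanarDrawing (SimpleGraph.fromRel R) (latticePoint ∘ p) := by
  refine ⟨h.isStraightLineDrawing hR, ?_, ?_⟩
  · intro e he f hf g hg hef heg
    obtain ⟨κ, b, rfl, rfl⟩ := h.eq_of_crosses he hf hef
    obtain ⟨κ', b', he', rfl⟩ := h.eq_of_crosses he hg heg
    have hv : (χ κ b).out.1 ∈ χ κ b := Sym2.out_fst_mem _
    have hv' : (χ κ b).out.1 ∈ χ κ' b' := he' ▸ hv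
    obtain ⟨rfl, rfl⟩ := hχ hv hv'
    rfl
  · rintro e he f hf ⟨e', he', hee'⟩ ⟨f', hf', hff'⟩ hne v hve hvf
    obtain ⟨κ, b, rfl, -⟩ := h.eq_of_crosses he he' hee'
    obtain ⟨κ', b', rfl, -⟩ := h.eq_of_crosses hf hf' hff'
    obtain ⟨rfl, rfl⟩ := hχ hve hvf
    exact hne rfl

end SeparatedExcept

end OfSeparated

end LatticeDrawing

section MirrorPlacement

/-- The point `P` lies in the closed nondegenerate triangle `ABC`, whichever way the triangle is
oriented. -/
def InClosedTriangle (A B C P : ℤ × ℤ) : Prop :=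
  0 ≤ orient A B C * orient A B P ∧ 0 ≤ orient A B C * orient B C P ∧
    0 ≤ orient A B C * orient C A P

instance (A B C P : ℤ × ℤ) : Decidable (InClosedTriangle A B C P) :=
  inferInstanceAs (Decidable (_ ∧ _))

/-- Two affine copies of the plane, labelled by a side. Side `true` sends the triangle `ABC` with
`D = orient A B C` to the triangle with corners `(2 D², -D²)`, `(2 D², D²)` and `(D², 0)`, and side
`false` sends it to the reflection of that triangle in the vertical axis. Hence segments joining
the two copies of a corner are horizontal and do not enter the triangles. -/
def mirrorPlacement (A B C : ℤ × ℤ) (s : Bool) (P : ℤ × ℤ) : ℤ × ℤ :=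
  ((if s then 1 else -1) *
      (orient A B C ^ 2 + orient A B C * orient B C P + orient A B C * orient C A P),
    orient A B C * orient C A P - orient A B C * orient B C P)

variable {A B C K K' P Q P' Q' : ℤ × ℤ} {s s' : Bool}

lemma scalesOrient_mirrorPlacement (A B C : ℤ × ℤ) (s : Bool) :
    ScalesOrient ((if s then 2 else -2) * orient A B C ^ 3) (mirrorPlacement A B C s) := by
  intro P Q R
  have hbary : orient (orient B C P, orient C A P) (orient B C Q, orient C A Q)
      (orient B C R, orient C A R) = orient A B C * orient P Q R := by
    simp only [orient]; ring
  have hmap (k D : ℤ) (p q r : ℤ × ℤ) :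
      orient (k * (D ^ 2 + D * p.1 + D * p.2), D * p.2 - D * p.1)
        (k * (D ^ 2 + D * q.1 + D * q.2), D * q.2 - D * q.1)
        (k * (D ^ 2 + D * r.1 + D * r.2), D * r.2 - D * r.1) = 2 * k * D ^ 2 * orient p q r := by
    simp only [orient]; ring
  refine (hmap _ _ (orient B C P, orient C A P) (orient B C Q, orient C A Q)
    (orient B C R, orient C A R)).trans ?_
  rw [hbary]
  split <;> ring

lemma mirrorPlacement_left (A B C : ℤ × ℤ) (s : Bool) :
    mirrorPlacement A B C s A = ((if s then 2 else -2) * orient A B C ^ 2, -orient A B C ^ 2) := by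
  have hBCA : orient B C A = orient A B C := orient_rotate A B C
  ext <;> cases s <;> simp [mirrorPlacement, hBCA] <;> ring

lemma mirrorPlacement_mid (A B C : ℤ × ℤ) (s : Bool) :
    mirrorPlacement A B C s B = ((if s then 2 else -2) * orient A B C ^ 2, orient A B C ^ 2) := by
  have hCAB : orient C A B = orient A B C := (orient_rotate C A B).symm
  ext <;> cases s <;> simp [mirrorPlacement, hCAB] <;> ring

lemma mirrorPlacement_right (A B C : ℤ × ℤ) (s : Bool) :
    mirrorPlacement A B C s C = ((if s then 1 else -1) * orient A B C ^ 2, 0) := by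
  simp [mirrorPlacement]

lemma eq_of_orient_eq_zero (hABC : orient A B C ≠ 0) (hAB : orient A B P = 0)
    (hCA : orient C A P = 0) : P = A := by
  have cramer_fst : (P.1 - A.1) * orient A B C =
      orient C A P * (B.1 - A.1) + orient A B P * (C.1 - A.1) := by simp only [orient]; ring
  have cramer_snd : (P.2 - A.2) * orient A B C =
      orient C A P * (B.2 - A.2) + orient A B P * (C.2 - A.2) := by simp only [orient]; ring
  simp only [hAB, hCA, zero_mul, add_zero, mul_eq_zero, hABC, or_false, sub_eq_zero]
    at cramer_fst cramer_snd
  exact Prod.ext cramer_fst cramer_snd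

namespace InClosedTriangle

lemma map {k : ℤ} {f : ℤ × ℤ → ℤ × ℤ} (hf : ScalesOrient k f) (h : InClosedTriangle A B C P) :
    InClosedTriangle (f A) (f B) (f C) (f P) := by
  have mul_nonneg_of {x y : ℤ} (hxy : 0 ≤ x * y) : 0 ≤ k * x * (k * y) := by
    linear_combination mul_nonneg (mul_self_nonneg k) hxy
  simp only [InClosedTriangle, hf _ _ _]
  exact ⟨mul_nonneg_of h.1, mul_nonneg_of h.2.1, mul_nonneg_of h.2.2⟩

lemma rotate (h : InClosedTriangle A B C P) : InClosedTriangle B C A P := by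
  rw [InClosedTriangle, orient_rotate]
  exact ⟨h.2.1, h.2.2, h.1⟩

lemma mul_orient_nonneg (hABC : orient A B C ≠ 0) (h : InClosedTriangle A B C P) {a b : ℤ × ℤ}
    {k : ℤ} (hA : 0 ≤ k * orient a b A) (hB : 0 ≤ k * orient a b B) (hC : 0 ≤ k * orient a b C) :
    0 ≤ k * orient a b P := by
  have bary : orient A B C ^ 2 * (k * orient a b P) =
      orient A B C * orient B C P * (k * orient a b A) +
        orient A B C * orient C A P * (k * orient a b B) +
        orient A B C * orient A B P * (k * orient a b C) := by
    simp only [orient]; ring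
  refine nonneg_of_mul_nonneg_right (a := orient A B C ^ 2) ?_ (sq_pos_of_ne_zero hABC)
  rw [bary]
  exact add_nonneg (add_nonneg (mul_nonneg h.2.1 hA) (mul_nonneg h.2.2 hB)) (mul_nonneg h.1 hC)

lemma trans (hABC : orient A B C ≠ 0) (hP : InClosedTriangle A B C P)
    {A' B' C' : ℤ × ℤ} (hA : InClosedTriangle A' B' C' A) (hB : InClosedTriangle A' B' C' B)
    (hC : InClosedTriangle A' B' C' C) : InClosedTriangle A' B' C' P :=
  ⟨hP.mul_orient_nonneg hABC hA.1 hB.1 hC.1, hP.mul_orient_nonneg hABC hA.2.1 hB.2.1 hC.2.1,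
    hP.mul_orient_nonneg hABC hA.2.2 hB.2.2 hC.2.2⟩

lemma add_pos_of_ne (hABC : orient A B C ≠ 0) (h : InClosedTriangle A B C P) (hPA : P ≠ A) :
    0 < orient A B C * orient A B P + orient A B C * orient C A P := by
  by_contra! hle
  have hAB := (mul_eq_zero.1 (by linarith [h.1, h.2.2] : orient A B C * orient A B P = 0))
  have hCA := (mul_eq_zero.1 (by linarith [h.1, h.2.2] : orient A B C * orient C A P = 0))
  exact hPA (eq_of_orient_eq_zero hABC (hAB.resolve_left hABC) (hCA.resolve_left hABC))

lemma separated_mirrorPlacement_of_ne_side (hABC : orient A B C ≠ 0) (hP : InClosedTriangle A B C P)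
    (hQ : InClosedTriangle A B C Q) (hP' : InClosedTriangle A B C P')
    (hQ' : InClosedTriangle A B C Q') (hss' : s ≠ s') :
    Separated (mirrorPlacement A B C s P) (mirrorPlacement A B C s Q)
      (mirrorPlacement A B C s' P') (mirrorPlacement A B C s' Q') := by
  wlog hs : s = false generalizing s s' P Q P' Q'
  · exact (this hP' hQ' hP hQ hss'.symm (by grind)).symm
  obtain rfl : s' = true := by grind
  subst hs
  have := sq_pos_of_ne_zero hABC
  obtain ⟨-, hP₁, hP₂⟩ := hP
  obtain ⟨-, hQ₁, hQ₂⟩ := hQ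
  obtain ⟨-, hP₁', hP₂'⟩ := hP'
  obtain ⟨-, hQ₁', hQ₂'⟩ := hQ'
  apply Separated.of_fst 0 <;> simp [mirrorPlacement] <;> linarith

lemma neg_sq_lt_mirrorPlacement_snd (hABC : orient A B C ≠ 0) (h : InClosedTriangle A B C P)
    (hPA : P ≠ A) (s : Bool) : -orient A B C ^ 2 < (mirrorPlacement A B C s P).2 := by
  have hpos := h.add_pos_of_ne hABC hPA
  have hsum := orient_add_orient_add_orient A B C P
  simp only [mirrorPlacement]
  linear_combination hpos + h.2.2 + orient A B C * hsum

lemma mirrorPlacement_snd_lt_sq (hABC : orient A B C ≠ 0) (h : InClosedTriangle A B C P)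
    (hPB : P ≠ B) (s : Bool) : (mirrorPlacement A B C s P).2 < orient A B C ^ 2 := by
  have hpos := h.rotate.add_pos_of_ne (by rwa [orient_rotate]) hPB
  have hsum := orient_add_orient_add_orient A B C P
  rw [orient_rotate] at hpos
  simp only [mirrorPlacement]
  linear_combination hpos + h.2.1 + orient A B C * hsum

lemma sq_lt_abs_mirrorPlacement_fst (hABC : orient A B C ≠ 0) (h : InClosedTriangle A B C P)
    (hPC : P ≠ C) (s : Bool) :
    orient A B C ^ 2 < (if s then 1 else -1) * (mirrorPlacement A B C s P).1 := by
  have hpos := h.rotate.rotate.add_pos_of_ne (by rwa [orient_rotate, orient_rotate]) hPC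
  rw [orient_rotate, orient_rotate] at hpos
  cases s <;> simp only [mirrorPlacement] <;> simp <;> linarith

lemma separated_mirrorPlacement_corner (hABC : orient A B C ≠ 0) (hP : InClosedTriangle A B C P)
    (hQ : InClosedTriangle A B C Q) (hK : K = A ∨ K = B ∨ K = C) (hPK : P ≠ K) (hQK : Q ≠ K)
    (s s' : Bool) :
    Separated (mirrorPlacement A B C s K) (mirrorPlacement A B C (!s) K)
      (mirrorPlacement A B C s' P) (mirrorPlacement A B C s' Q) := by
  rcases hK with rfl | rfl | rfl
  · have := hP.neg_sq_lt_mirrorPlacement_snd hABC hPK s'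
    have := hQ.neg_sq_lt_mirrorPlacement_snd hABC hQK s'
    rw [mirrorPlacement_left, mirrorPlacement_left]
    apply Separated.of_snd (-orient K B C ^ 2) <;> linarith
  · have := hP.mirrorPlacement_snd_lt_sq hABC hPK s'
    have := hQ.mirrorPlacement_snd_lt_sq hABC hQK s'
    apply Separated.symm
    rw [mirrorPlacement_mid, mirrorPlacement_mid]
    apply Separated.of_snd (orient A K C ^ 2) <;> linarith
  · have hPx := hP.sq_lt_abs_mirrorPlacement_fst hABC hPK s'
    have hQx := hQ.sq_lt_abs_mirrorPlacement_fst hABC hQK s'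
    have hle (t : Bool) : |(if t then 1 else -1) * orient A B K ^ 2| ≤ orient A B K ^ 2 := by
      cases t <;> simp
    have hs := abs_le.1 (hle s)
    have hs' := abs_le.1 (hle !s)
    rw [mirrorPlacement_right, mirrorPlacement_right]
    cases s' <;> simp only [Bool.false_eq_true, if_false, if_true] at hPx hQx
    · apply Separated.symm
      apply Separated.of_fst (-orient A B K ^ 2) <;> linarith
    · apply Separated.of_fst (orient A B K ^ 2) <;> linarith

end InClosedTriangle

lemma separated_mirrorPlacement_corners (hABC : orient A B C ≠ 0) (hK : K = A ∨ K = B ∨ K = C)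
    (hK' : K' = A ∨ K' = B ∨ K' = C) (hKK' : K ≠ K') (s s' : Bool) :
    Separated (mirrorPlacement A B C s K) (mirrorPlacement A B C (!s) K)
      (mirrorPlacement A B C s' K') (mirrorPlacement A B C (!s') K') := by
  refine .of_snd_ne rfl rfl ?_
  have hD := sq_pos_of_ne_zero hABC
  rcases hK with rfl | rfl | rfl <;> rcases hK' with rfl | rfl | rfl <;> intro h <;>
    simp only [mirrorPlacement_left, mirrorPlacement_mid, mirrorPlacement_right] at h <;>
    first | exact hKK' rfl | linarith

end MirrorPlacement

section ChainDrawing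

/-! ### The drawing of a chain -/

/-- The inverse of a contraction that maps a drawing of the first levels of a chain into a smaller
triangle. It moves each level of `chainPoint` to the next one. -/
def expand (p : ℤ × ℤ) : ℤ × ℤ := (24 - 12 * p.1 + 6 * p.2, -12 * p.1 + 18 * p.2)

lemma scalesOrient_expand : ScalesOrient (-144) expand := by
  intro a b c
  simp only [expand, orient]
  ring

/-- The position of vertex `r` of level `i` in an IC-planar lattice drawing of an infinite chain of
nested quadruples, counted from the innermost one. -/
def chainPoint : ℕ → Fin 4 → ℤ × ℤ
  | 0 => ![(0, 0), (4, 4), (2, 4), (4, 2)]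
  | 1 => ![(24, 0), (0, 24), (2, 8), (8, 2)]
  | i + 2 => fun r => expand (chainPoint (i + 1) r)

lemma chainPoint_succ {i : ℕ} {r : Fin 4} (h : 1 ≤ i ∨ r < 2) :
    chainPoint (i + 1) r = expand (chainPoint i r) := by
  cases i with
  | zero =>
    revert r
    decide
  | succ i => rfl

lemma chainPoint_add {i : ℕ} {r : Fin 4} (h : 1 ≤ i ∨ r < 2) (j : ℕ) :
    chainPoint (i + j) r = expand^[j] (chainPoint i r) := by
  induction j with
  | zero => rfl
  | succ j ih =>
    rw [Function.iterate_succ_apply', ← ih, ← Nat.add_assoc, chainPoint_succ (by omega)]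

lemma chainPoint_succ_eq_iterate (i : ℕ) (r : Fin 4) :
    chainPoint (i + 1) r = expand^[i] (chainPoint 1 r) := by
  rw [Nat.add_comm, chainPoint_add (.inl le_rfl)]

lemma chainPoint_zero_eq_iterate (i : ℕ) : chainPoint i 0 = expand^[i] (chainPoint 0 0) := by
  rw [← chainPoint_add (.inr (by decide)), Nat.zero_add]

/-- The reflexive closure of adjacency in a chain of nested quadruples, oriented from the outer to
the inner vertex. -/
def ChainCell (u w : ℕ × Fin 4) : Prop :=
  w.1 = u.1 ∨
  (w.1 + 1 = u.1 ∧ (w.2 = 0 ∨ (w.2 = 1 ∧ 2 ≤ u.2) ∨ (w.1 = 0 ∧ 2 ≤ u.2 ∧ w.2 = u.2))) ∨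
  (w.1 + 2 = u.1 ∧ u.2 = 3 ∧ w.2 = 0)

instance (u w : ℕ × Fin 4) : Decidable (ChainCell u w) :=
  inferInstanceAs (Decidable (_ ∨ _))

/-- The diagonals of the quadrilateral formed by the vertices of level `i`, which are the only
crossing edges at that level. -/
def crossingPair : ℕ → Bool → Sym2 (Fin 4)
  | 0, b => if b then s(0, 1) else s(2, 3)
  | _ + 1, b => if b then s(0, 2) else s(1, 3)

/-- The positions of the cells `(u, w)` and `(u', w')` are those of two crossing segments, namely of
the diagonals of one level. -/
def IsChainCrossing (u w u' w' : ℕ × Fin 4) : Prop :=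
  (w.1 = u.1 ∧ u'.1 = u.1 ∧ w'.1 = u.1 ∧
    ∃ b, s(u.2, w.2) = crossingPair u.1 b ∧ s(u'.2, w'.2) = crossingPair u.1 !b) ∧
  orient (chainPoint u.1 u.2) (chainPoint w.1 w.2) (chainPoint u'.1 u'.2) ≠
    orient (chainPoint u.1 u.2) (chainPoint w.1 w.2) (chainPoint w'.1 w'.2)

instance (u w u' w' : ℕ × Fin 4) : Decidable (IsChainCrossing u w u' w') :=
  inferInstanceAs (Decidable (_ ∧ _))

lemma chainCompatible_of_le_two : ∀ u w u' w' : Fin 3 × Fin 4,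
    (u.1 = u'.1 ∨ u.1 < 2 ∧ u'.1 < 2) →
    ChainCell (u.1, u.2) (w.1, w.2) → ChainCell (u'.1, u'.2) (w'.1, w'.2) →
    u ≠ u' → u ≠ w' → w ≠ u' → w ≠ w' →
    EvidentlySeparated (chainPoint u.1 u.2) (chainPoint w.1 w.2) (chainPoint u'.1 u'.2)
      (chainPoint w'.1 w'.2) ∨
    IsChainCrossing (u.1, u.2) (w.1, w.2) (u'.1, u'.2) (w'.1, w'.2) := by
  decide +kernel

lemma ChainCell.exists_shift {i : ℕ} {u w : ℕ × Fin 4} (h : ChainCell u w) (hu : u.1 = i + 2) :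
    ∃ u₀ w₀ : Fin 3 × Fin 4, u₀.1 = 2 ∧ ChainCell (u₀.1, u₀.2) (w₀.1, w₀.2) ∧
      u = (u₀.1 + i, u₀.2) ∧ w = (w₀.1 + i, w₀.2) ∧
      chainPoint u.1 u.2 = expand^[i] (chainPoint u₀.1 u₀.2) ∧
      chainPoint w.1 w.2 = expand^[i] (chainPoint w₀.1 w₀.2) := by
  obtain ⟨iu, r⟩ := u
  obtain ⟨iw, t⟩ := w
  obtain rfl : iu = i + 2 := hu
  obtain ⟨j, hj, ht⟩ : ∃ j : Fin 3, iw = j + i ∧ (1 ≤ (j : ℕ) ∨ t < 2) := by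
    rcases h with h | ⟨h, -⟩ | ⟨h, -, ht⟩
    · exact ⟨2, by simp_all [Nat.add_comm], by simp⟩
    · exact ⟨1, by simp at h ⊢; omega, by simp⟩
    · exact ⟨0, by simp at h ⊢; omega, .inr (by simp_all)⟩
  refine ⟨(2, r), (j, t), rfl, ?_, by simp [Nat.add_comm], by simp [hj], ?_, ?_⟩
  · simp only [ChainCell] at h ⊢
    simp
    omega
  · simpa [Nat.add_comm] using chainPoint_add (i := 2) (r := r) (by simp) i
  · simpa [hj] using chainPoint_add ht i

lemma exists_line_of_chainCell {i : ℕ} {u w : ℕ × Fin 4} (h : ChainCell u w) (hu : u.1 = i + 2) :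
    ∃ a b, orient a b (chainPoint u.1 u.2) ≤ 0 ∧ orient a b (chainPoint w.1 w.2) ≤ 0 ∧
      orient a b (chainPoint u.1 u.2) + orient a b (chainPoint w.1 w.2) < 0 ∧
      0 ≤ orient a b (chainPoint (i + 1) 0) ∧ 0 ≤ orient a b (chainPoint (i + 1) 1) ∧
      0 ≤ orient a b (chainPoint i 0) := by
  have hcheck : ∀ u w : Fin 3 × Fin 4, u.1 = 2 → ChainCell (u.1, u.2) (w.1, w.2) →
      ∃ l ∈ [((0, 0), (24, 0)), ((24, 0), (0, 24)), ((0, 24), (0, 0)), ((0, 24), (-60, -60))],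
        orient l.1 l.2 (chainPoint u.1 u.2) ≤ 0 ∧ orient l.1 l.2 (chainPoint w.1 w.2) ≤ 0 ∧
        orient l.1 l.2 (chainPoint u.1 u.2) + orient l.1 l.2 (chainPoint w.1 w.2) < 0 ∧
        0 ≤ orient l.1 l.2 (chainPoint 1 0) ∧ 0 ≤ orient l.1 l.2 (chainPoint 1 1) ∧
        0 ≤ orient l.1 l.2 (chainPoint 0 0) := by
    decide +kernel
  obtain ⟨u₀, w₀, hu₀, hcell, -, -, hu, hw⟩ := h.exists_shift hu
  obtain ⟨l, -, hl⟩ := hcheck u₀ w₀ hu₀ hcell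
  obtain ⟨a, b, k, hk, hline⟩ :=
    (scalesOrient_expand.iterate i).exists_line (pow_ne_zero i (by norm_num)) l.1 l.2
  refine ⟨a, b, ?_⟩
  rw [hu, hw, chainPoint_succ_eq_iterate i 0, chainPoint_succ_eq_iterate i 1,
    chainPoint_zero_eq_iterate i]
  simp only [hline]
  obtain ⟨h₁, h₂, h₃, h₄, h₅, h₆⟩ := hl
  refine ⟨?_, ?_, ?_, ?_, ?_, ?_⟩ <;> nlinarith

/-- The triangle spanned by the first two vertices of level `i + 1` and the first vertex of level
`i`, which contains all levels up to `i + 1`. -/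
def InChainTriangle (i : ℕ) (P : ℤ × ℤ) : Prop :=
  InClosedTriangle (chainPoint (i + 1) 0) (chainPoint (i + 1) 1) (chainPoint i 0) P

lemma orient_chainTriangle_ne_zero (i : ℕ) :
    orient (chainPoint (i + 1) 0) (chainPoint (i + 1) 1) (chainPoint i 0) ≠ 0 := by
  rw [chainPoint_succ_eq_iterate i 0, chainPoint_succ_eq_iterate i 1, chainPoint_zero_eq_iterate i,
    scalesOrient_expand.iterate i]
  exact mul_ne_zero (pow_ne_zero i (by norm_num)) (by decide)

lemma inChainTriangle_add {i j k : ℕ} {r : Fin 4} (hr : 1 ≤ j ∨ r < 2)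
    (h : InChainTriangle i (chainPoint j r)) : InChainTriangle (i + k) (chainPoint (j + k) r) := by
  have := h.map (scalesOrient_expand.iterate k)
  rwa [← chainPoint_add (by simp), ← chainPoint_add (by simp), ← chainPoint_add (by simp),
    ← chainPoint_add hr, Nat.add_right_comm] at this

lemma inChainTriangle_chainPoint {i j : ℕ} (hj : j ≤ i + 1) (r : Fin 4) :
    InChainTriangle i (chainPoint j r) := by
  induction i with
  | zero =>
    have hcheck : ∀ j : Fin 2, ∀ r, InChainTriangle 0 (chainPoint j r) := by
      simp only [InChainTriangle]
      decide
    exact hcheck ⟨j, by omega⟩ r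
  | succ i ih =>
    have htop (r : Fin 4) : InChainTriangle (i + 1) (chainPoint (i + 2) r) := by
      rw [Nat.add_comm i 1, Nat.add_comm i 2]
      refine inChainTriangle_add (.inl one_le_two) ?_
      simp only [InChainTriangle]
      decide +revert
    have hmid (r : Fin 4) : InChainTriangle (i + 1) (chainPoint (i + 1) r) := by
      rw [Nat.add_comm i 1]
      refine inChainTriangle_add (.inl le_rfl) ?_
      simp only [InChainTriangle]
      decide +revert
    have hbase : InChainTriangle (i + 1) (chainPoint i 0) := by
      nth_rw 2 [← Nat.zero_add i]
      rw [Nat.add_comm i 1]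
      refine inChainTriangle_add (.inr (by decide)) ?_
      simp only [InChainTriangle]
      decide
    rcases hj.eq_or_lt with rfl | hlt
    · exact htop r
    · exact (ih (by omega)).trans (orient_chainTriangle_ne_zero i) (hmid 0) (hmid 1) hbase

lemma ChainCell.level_le {u w : ℕ × Fin 4} (h : ChainCell u w) : w.1 ≤ u.1 := by
  rcases h with h | ⟨h, -⟩ | ⟨h, -⟩ <;> omega

section Compatible

variable {i : ℕ} {u w u' w' : ℕ × Fin 4}

lemma separated_of_level_lt (h : ChainCell u w) (hu : u.1 = i + 2) (hu' : u'.1 ≤ i + 1)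
    (hw' : w'.1 ≤ i + 1) :
    Separated (chainPoint u.1 u.2) (chainPoint w.1 w.2) (chainPoint u'.1 u'.2)
      (chainPoint w'.1 w'.2) := by
  obtain ⟨a, b, hau, haw, hlt, hA, hB, hC⟩ := exists_line_of_chainCell h hu
  have nonneg_of_level_le {j : ℕ} {r : Fin 4} (hj : j ≤ i + 1) :
      0 ≤ orient a b (chainPoint j r) := by
    simpa using (inChainTriangle_chainPoint hj r).mul_orient_nonneg (k := 1)
      (orient_chainTriangle_ne_zero i) (by simpa) (by simpa) (by simpa)
  have hnonneg := nonneg_of_level_le (r := u'.2) hu'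
  have hnonneg' := nonneg_of_level_le (r := w'.2) hw'
  exact ⟨a, b, hau, haw, hnonneg, hnonneg', by linarith⟩

lemma separated_or_crossing_of_level_eq (h : ChainCell u w) (h' : ChainCell u' w')
    (hu : u.1 = i + 2) (hu' : u'.1 = i + 2) (h₁ : u ≠ u') (h₂ : u ≠ w') (h₃ : w ≠ u')
    (h₄ : w ≠ w') :
    Separated (chainPoint u.1 u.2) (chainPoint w.1 w.2) (chainPoint u'.1 u'.2)
      (chainPoint w'.1 w'.2) ∨ IsChainCrossing u w u' w' := by
  obtain ⟨u₀, w₀, hu₀, hcell, rfl, rfl, eu, ew⟩ := h.exists_shift hu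
  obtain ⟨u₀', w₀', hu₀', hcell', rfl, rfl, eu', ew'⟩ := h'.exists_shift hu'
  have hk : ((-144) ^ i : ℤ) ≠ 0 := pow_ne_zero i (by norm_num)
  have hscale := scalesOrient_expand.iterate i
  rw [eu, ew, eu', ew']
  rcases chainCompatible_of_le_two u₀ w₀ u₀' w₀' (.inl (hu₀.trans hu₀'.symm)) hcell hcell'
    (by grind) (by grind) (by grind) (by grind) with hsep | ⟨⟨hw, hv, hv', b, hb, hb'⟩, hne⟩
  · exact .inl (hsep.separated.map hk hscale)
  · refine .inr ⟨⟨congrArg (· + i) hw, congrArg (· + i) hv, congrArg (· + i) hv', b, ?_⟩, ?_⟩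
    · rw [hu₀] at hb hb'
      exact hu ▸ ⟨hb, hb'⟩
    · rw [eu, ew, eu', ew', hscale, hscale]
      exact fun e => hne (mul_left_cancel₀ hk e)

lemma separated_or_crossing (h : ChainCell u w) (h' : ChainCell u' w') (h₁ : u ≠ u') (h₂ : u ≠ w')
    (h₃ : w ≠ u') (h₄ : w ≠ w') :
    Separated (chainPoint u.1 u.2) (chainPoint w.1 w.2) (chainPoint u'.1 u'.2)
      (chainPoint w'.1 w'.2) ∨ IsChainCrossing u w u' w' := by
  have hw := h.level_le
  have hw' := h'.level_le
  by_cases hlow : u.1 < 2 ∧ u'.1 < 2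
  · exact (chainCompatible_of_le_two (⟨u.1, by omega⟩, u.2) (⟨w.1, by omega⟩, w.2)
      (⟨u'.1, by omega⟩, u'.2) (⟨w'.1, by omega⟩, w'.2) (.inr hlow) h h' (by grind) (by grind)
      (by grind) (by grind)).imp_left EvidentlySeparated.separated
  rcases lt_trichotomy u.1 u'.1 with hlt | heq | hlt
  · obtain ⟨i, hi⟩ := Nat.exists_eq_add_of_le' (show 2 ≤ u'.1 by omega)
    exact .inl (separated_of_level_lt h' hi (by omega) (by omega)).symm
  · obtain ⟨i, hi⟩ := Nat.exists_eq_add_of_le' (show 2 ≤ u.1 by omega)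
    exact separated_or_crossing_of_level_eq h h' hi (heq ▸ hi) h₁ h₂ h₃ h₄
  · obtain ⟨i, hi⟩ := Nat.exists_eq_add_of_le' (show 2 ≤ u.1 by omega)
    exact .inl (separated_of_level_lt h hi (by omega) (by omega))

end Compatible

end ChainDrawing

section ExampleGraphs

/-! ### The graphs of the theorem -/

section DoubleChain

variable {n : ℕ}

/-- The vertices `(side, level, role)` of two chains of nested quadruples with levels up to
`n + 1`. -/
abbrev DoubleChainVertex (n : ℕ) : Type := Bool × Fin (n + 2) × Fin 4

/-- The level and role of a vertex, which identify it within its chain. -/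
def chainIndex (u : DoubleChainVertex n) : ℕ × Fin 4 := (u.2.1, u.2.2)

/-- The vertices that are joined to their mirror image in the other chain. In the drawing they are
the corners of the triangle `InChainTriangle n`. -/
def IsChainCorner (n : ℕ) (c : ℕ × Fin 4) : Prop := c = (n + 1, 0) ∨ c = (n + 1, 1) ∨ c = (n, 0)

/-- The reflexive closure of adjacency in the double chain, up to orientation. -/
def DoubleChainCell (u w : DoubleChainVertex n) : Prop :=
  (w.1 = u.1 ∧ ChainCell (chainIndex u) (chainIndex w)) ∨
    (w.1 = !u.1 ∧ chainIndex w = chainIndex u ∧ IsChainCorner n (chainIndex u))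

/-- The graph formed by two chains of nested quadruples joined at their outermost levels. -/
def doubleChainGraph (n : ℕ) : SimpleGraph (DoubleChainVertex n) :=
  SimpleGraph.fromRel DoubleChainCell

lemma DoubleChainVertex.ext_chainIndex {u w : DoubleChainVertex n} (hside : u.1 = w.1)
    (hindex : chainIndex u = chainIndex w) : u = w := by
  simp only [chainIndex, Prod.mk.injEq] at hindex
  exact Prod.ext hside (Prod.ext (Fin.ext hindex.1) hindex.2)

/-- The vertex of a double chain with level `i`, reduced modulo `n + 2` to make the map total. -/
def doubleChainVertex (n : ℕ) (s : Bool) (i : ℕ) (r : Fin 4) : DoubleChainVertex n :=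
  (s, Fin.ofNat (n + 2) i, r)

lemma chainIndex_doubleChainVertex (s : Bool) {i : ℕ} (hi : i ≤ n + 1) (r : Fin 4) :
    chainIndex (doubleChainVertex n s i r) = (i, r) := by
  simp [chainIndex, doubleChainVertex, Nat.mod_eq_of_lt (Nat.lt_succ_of_le hi)]

lemma doubleChainGraph_adj_of_chainCell (s : Bool) {i j : ℕ} {r t : Fin 4} (hi : i ≤ n + 1)
    (hcell : ChainCell (i, r) (j, t)) (hne : (i, r) ≠ (j, t)) :
    (doubleChainGraph n).Adj (doubleChainVertex n s i r) (doubleChainVertex n s j t) := by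
  have hj : j ≤ n + 1 := hcell.level_le.trans hi
  refine ⟨fun e => hne ?_, .inl (.inl ⟨rfl, ?_⟩)⟩
  · simpa only [chainIndex_doubleChainVertex, hi, hj] using congrArg chainIndex e
  · simpa only [chainIndex_doubleChainVertex, hi, hj]

lemma doubleChainGraph_adj_of_isChainCorner (s : Bool) {i : ℕ} {r : Fin 4}
    (hcorner : IsChainCorner n (i, r)) :
    (doubleChainGraph n).Adj (doubleChainVertex n s i r) (doubleChainVertex n (!s) i r) := by
  have hi : i ≤ n + 1 := by rcases hcorner with h | h | h <;> simp at h <;> omega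
  refine ⟨fun e => by simp [doubleChainVertex] at e, .inl (.inr ⟨rfl, ?_⟩)⟩
  simpa only [chainIndex_doubleChainVertex, hi, true_and]

lemma isDoubleChain_doubleChainGraph (n : ℕ) :
    IsDoubleChain (doubleChainGraph n) (n + 1) (doubleChainVertex n) where
  one_le := Nat.le_add_left 1 n
  inj hi hi' e := by
    have hindex := congrArg chainIndex e
    rw [chainIndex_doubleChainVertex _ hi, chainIndex_doubleChainVertex _ hi'] at hindex
    exact ⟨congrArg Prod.fst e, congrArg Prod.fst hindex, congrArg Prod.snd hindex⟩
  adj_same s _ _ _ hi hr := doubleChainGraph_adj_of_chainCell s hi (.inl rfl) (by simpa)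
  adj_zero_succ s _ _ hi :=
    (doubleChainGraph_adj_of_chainCell s hi (.inr (.inl ⟨rfl, .inl rfl⟩)) (by simp)).symm
  adj_one_succ s _ _ hi hr :=
    (doubleChainGraph_adj_of_chainCell s hi (.inr (.inl ⟨rfl, .inr (.inl ⟨rfl, hr⟩)⟩))
      (by simp)).symm
  adj_zero_add_two s _ hi :=
    (doubleChainGraph_adj_of_chainCell s hi (.inr (.inr ⟨rfl, rfl, rfl⟩)) (by simp)).symm
  adj_base s _ hr :=
    (doubleChainGraph_adj_of_chainCell s (Nat.le_add_left 1 n)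
      (.inr (.inl ⟨rfl, .inr (.inr ⟨rfl, hr, rfl⟩)⟩)) (by simp)).symm
  adj_top s r hr := by
    refine doubleChainGraph_adj_of_isChainCorner s ?_
    have : r = 0 ∨ r = 1 := by omega
    simp [IsChainCorner, this]
  adj_pred_top s _ hi :=
    doubleChainGraph_adj_of_isChainCorner s (.inr (.inr (by simpa using hi)))

lemma chainPoint_ne {c c' : ℕ × Fin 4} (hc : c ≠ c') :
    chainPoint c.1 c.2 ≠ chainPoint c'.1 c'.2 := by
  intro e
  rcases separated_or_crossing (u := c) (u' := c') (.inl rfl) (.inl rfl) hc hc hc hc with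
    ⟨a, b, hab⟩ | ⟨-, hne⟩
  · rw [e] at hab
    exact absurd hab.2.2.2.2 (lt_irrefl _)
  · exact hne rfl

/-- The lattice drawing of the double chain. -/
def doubleChainPoint (u : DoubleChainVertex n) : ℤ × ℤ :=
  mirrorPlacement (chainPoint (n + 1) 0) (chainPoint (n + 1) 1) (chainPoint n 0) u.1
    (chainPoint (chainIndex u).1 (chainIndex u).2)

/-- The diagonals of the quadrilaterals formed by the levels `κ = (side, level)`. -/
def doubleChainDiagonal (κ : Bool × Fin (n + 2)) (b : Bool) : Sym2 (DoubleChainVertex n) :=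
  (crossingPair κ.2 b).map fun r => (κ.1, κ.2, r)

lemma eq_of_mem_crossingPair {i : ℕ} {b b' : Bool} {r : Fin 4} (h : r ∈ crossingPair i b)
    (h' : r ∈ crossingPair i b') : b = b' := by
  cases i <;> simp only [crossingPair] at h h' <;> decide +revert

lemma eq_of_mem_doubleChainDiagonal {κ κ' : Bool × Fin (n + 2)} {b b' : Bool}
    {v : DoubleChainVertex n} (h : v ∈ doubleChainDiagonal κ b)
    (h' : v ∈ doubleChainDiagonal κ' b') : κ = κ' ∧ b = b' := by
  obtain ⟨r, hr, rfl⟩ := Sym2.mem_map.1 h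
  obtain ⟨r', hr', e⟩ := Sym2.mem_map.1 h'
  simp only [Prod.mk.injEq] at e
  obtain ⟨hside, hlevel, rfl⟩ := e
  obtain rfl : κ' = κ := Prod.ext hside hlevel
  exact ⟨rfl, eq_of_mem_crossingPair hr hr'⟩

lemma mk_eq_doubleChainDiagonal {κ : Bool × Fin (n + 2)} {b : Bool} {u w : DoubleChainVertex n}
    (hu : u.1 = κ.1) (hw : w.1 = κ.1) (hul : (chainIndex u).1 = κ.2) (hwl : (chainIndex w).1 = κ.2)
    (h : s((chainIndex u).2, (chainIndex w).2) = crossingPair κ.2 b) :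
    s(u, w) = doubleChainDiagonal κ b := by
  rw [doubleChainDiagonal, ← h, Sym2.map_mk]
  exact congrArg₂ (s(·, ·)) (DoubleChainVertex.ext_chainIndex hu (Prod.ext hul rfl))
    (DoubleChainVertex.ext_chainIndex hw (Prod.ext hwl rfl))

lemma inChainTriangle_chainIndex (u : DoubleChainVertex n) :
    InChainTriangle n (chainPoint (chainIndex u).1 (chainIndex u).2) :=
  inChainTriangle_chainPoint (Nat.le_of_lt_succ u.2.1.isLt) _

lemma IsChainCorner.eq_corner {c : ℕ × Fin 4} (hc : IsChainCorner n c) :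
    chainPoint c.1 c.2 = chainPoint (n + 1) 0 ∨ chainPoint c.1 c.2 = chainPoint (n + 1) 1 ∨
      chainPoint c.1 c.2 = chainPoint n 0 := by
  rcases hc with rfl | rfl | rfl <;> simp

section Separation

variable {u w u' w' : DoubleChainVertex n}

lemma separated_or_crossing_of_chainCell (h : ChainCell (chainIndex u) (chainIndex w))
    (h' : ChainCell (chainIndex u') (chainIndex w')) (hw : w.1 = u.1) (hu' : u'.1 = u.1)
    (hw' : w'.1 = u.1) (h₁ : u ≠ u') (h₂ : u ≠ w') (h₃ : w ≠ u') (h₄ : w ≠ w') :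
    Separated (doubleChainPoint u) (doubleChainPoint w) (doubleChainPoint u')
        (doubleChainPoint w') ∨
      (∃ κ b, s(u, w) = doubleChainDiagonal κ b ∧ s(u', w') = doubleChainDiagonal κ !b) ∧
        orient (doubleChainPoint u) (doubleChainPoint w) (doubleChainPoint u') ≠
          orient (doubleChainPoint u) (doubleChainPoint w) (doubleChainPoint w') := by
  have hD := orient_chainTriangle_ne_zero n
  have index_ne {v v' : DoubleChainVertex n} (hv : v.1 = u.1) (hv' : v'.1 = u.1) (hne : v ≠ v') :
      chainIndex v ≠ chainIndex v' := fun e =>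
    hne (DoubleChainVertex.ext_chainIndex (hv.trans hv'.symm) e)
  have hscale := scalesOrient_mirrorPlacement (chainPoint (n + 1) 0) (chainPoint (n + 1) 1)
    (chainPoint n 0) u.1
  have hk : (if u.1 then 2 else -2) * orient (chainPoint (n + 1) 0) (chainPoint (n + 1) 1)
      (chainPoint n 0) ^ 3 ≠ 0 := mul_ne_zero (by split <;> decide) (pow_ne_zero 3 hD)
  simp only [doubleChainPoint, hw, hu', hw']
  rcases separated_or_crossing h h' (index_ne rfl hu' h₁) (index_ne rfl hw' h₂)
    (index_ne hw hu' h₃) (index_ne hw hw' h₄) with hsep | ⟨⟨hlw, hlu', hlw', b, hb, hb'⟩, hne⟩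
  · exact .inl (hsep.map hk hscale)
  · refine .inr ⟨⟨(u.1, u.2.1), b, mk_eq_doubleChainDiagonal rfl hw rfl hlw hb,
      mk_eq_doubleChainDiagonal hu' hw' hlu' hlw' hb'⟩, ?_⟩
    · rw [hscale, hscale]
      exact fun e => hne (mul_left_cancel₀ hk e)

lemma chainIndex_ne_of_ne_mirror (hw : w.1 = !u.1) (hindex : chainIndex w = chainIndex u)
    (hu' : u ≠ u') (hw' : w ≠ u') : chainIndex u' ≠ chainIndex u := by
  intro e
  by_cases hside : u.1 = u'.1
  · exact hu' (DoubleChainVertex.ext_chainIndex hside e.symm)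
  · refine hw' (DoubleChainVertex.ext_chainIndex ?_ (hindex.trans e.symm))
    grind

lemma separated_of_isChainCorner (hw : w.1 = !u.1) (hindex : chainIndex w = chainIndex u)
    (hcorner : IsChainCorner n (chainIndex u)) (hw' : w'.1 = u'.1) (h₁ : u ≠ u') (h₂ : u ≠ w')
    (h₃ : w ≠ u') (h₄ : w ≠ w') :
    Separated (doubleChainPoint u) (doubleChainPoint w) (doubleChainPoint u')
      (doubleChainPoint w') := by
  have hne := chainIndex_ne_of_ne_mirror hw hindex h₁ h₃
  have hne' := chainIndex_ne_of_ne_mirror hw hindex h₂ h₄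
  simp only [doubleChainPoint, hw, hindex, hw']
  exact (inChainTriangle_chainIndex u').separated_mirrorPlacement_corner
    (orient_chainTriangle_ne_zero n) (inChainTriangle_chainIndex w') hcorner.eq_corner
    (chainPoint_ne hne) (chainPoint_ne hne') _ _

lemma separatedExcept_doubleChainCell (n : ℕ) :
    SeparatedExcept (DoubleChainCell (n := n)) doubleChainPoint doubleChainDiagonal := by
  intro u w u' w' h h' h₁ h₂ h₃ h₄
  rcases h with ⟨hw, h⟩ | ⟨hw, hindex, hcorner⟩ <;>
    rcases h' with ⟨hw', h'⟩ | ⟨hw', hindex', hcorner'⟩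
  · by_cases hside : u'.1 = u.1
    · exact separated_or_crossing_of_chainCell h h' hw hside (hw'.trans hside) h₁ h₂ h₃ h₄
    · left
      simp only [doubleChainPoint, hw, hw']
      exact (inChainTriangle_chainIndex u).separated_mirrorPlacement_of_ne_side
        (orient_chainTriangle_ne_zero n) (inChainTriangle_chainIndex w)
        (inChainTriangle_chainIndex u') (inChainTriangle_chainIndex w') (Ne.symm hside)
  · exact .inl (separated_of_isChainCorner hw' hindex' hcorner' hw h₁.symm h₃.symm h₂.symm
      h₄.symm).symm
  · exact .inl (separated_of_isChainCorner hw hindex hcorner hw' h₁ h₂ h₃ h₄)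
  · left
    have hne := chainIndex_ne_of_ne_mirror hw hindex h₁ h₃
    simp only [doubleChainPoint, hw, hindex, hw', hindex']
    exact separated_mirrorPlacement_corners (orient_chainTriangle_ne_zero n) hcorner.eq_corner
      hcorner'.eq_corner (chainPoint_ne hne.symm) _ _

end Separation

theorem isICPlanarDrawing_doubleChainGraph (n : ℕ) :
    IsICPlanarDrawing (doubleChainGraph n) (latticePoint ∘ doubleChainPoint) :=
  (separatedExcept_doubleChainCell n).isICPlanarDrawing (fun _ => .inl ⟨rfl, .inl rfl⟩)
    (fun _ _ _ _ _ => eq_of_mem_doubleChainDiagonal)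

end DoubleChain

section CompleteFive

/-- The complete graph on five vertices with three isolated vertices. -/
def completeFiveGraph : SimpleGraph (Fin 8) := SimpleGraph.fromRel fun u w => u = w ∨ u < 5 ∧ w < 5

lemma isK5_completeFiveGraph : IsK5 completeFiveGraph (Fin.castLE (by decide)) := by
  intro i j hij
  refine ⟨fun e => hij (Fin.castLE_injective _ e), .inl (.inr ?_)⟩
  revert i j
  decide

/-- A lattice drawing of `completeFiveGraph`, in which the edges `02` and `13` cross and vertex `4`
is the apex of the outer triangle on the edge `01`. -/
def completeFivePoint : Fin 8 → ℤ × ℤ :=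
  ![(24, 0), (0, 24), (2, 8), (8, 2), (0, 0), (100, 101), (101, 103), (102, 107)]

theorem isICPlanarDrawing_completeFiveGraph :
    IsICPlanarDrawing completeFiveGraph (latticePoint ∘ completeFivePoint) := by
  have hcheck : ∀ u w u' w' : Fin 8, (u = w ∨ u < 5 ∧ w < 5) → (u' = w' ∨ u' < 5 ∧ w' < 5) →
      u ≠ u' → u ≠ w' → w ≠ u' → w ≠ w' →
      EvidentlySeparated (completeFivePoint u) (completeFivePoint w) (completeFivePoint u')
        (completeFivePoint w') ∨
      (∃ b : Bool, s(u, w) = (if b then s(0, 2) else s(1, 3)) ∧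
        s(u', w') = if !b then s(0, 2) else s(1, 3)) ∧
        orient (completeFivePoint u) (completeFivePoint w) (completeFivePoint u') ≠
          orient (completeFivePoint u) (completeFivePoint w) (completeFivePoint w') := by
    decide +kernel
  refine SeparatedExcept.isICPlanarDrawing (K := Unit)
    (χ := fun _ b => if b then s(0, 2) else s(1, 3)) ?_ (fun _ => .inl rfl) ?_
  · intro u w u' w' h h' h₁ h₂ h₃ h₄
    exact (hcheck u w u' w' h h' h₁ h₂ h₃ h₄).imp EvidentlySeparated.separated
      (And.imp_left fun hb => ⟨(), hb⟩)
  · decide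

end CompleteFive

end ExampleGraphs

lemma one_point_zero_nine_pow_le_two_pow (k : ℕ) : (1.09 : ℝ) ^ (8 * k) ≤ 2 ^ k := by
  rw [pow_mul]
  exact pow_le_pow_left₀ (by norm_num) (by norm_num) k

lemma one_le_dotAt_of_one_le_sqrt {P Q : ℝ × ℝ}
    (h : 1 ≤ Real.sqrt ((P.1 - Q.1) ^ 2 + (P.2 - Q.2) ^ 2)) : 1 ≤ dotAt P Q Q := by
  rw [Real.one_le_sqrt] at h
  simp only [dotAt]
  linarith

/-- IC-planar straight-line RAC drawings may require exponential area:
for every `k ≥ 1` there is an IC-planar graph with `8k` vertices such that every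
IC-planar straight-line RAC drawing with all edges of length at least `1` has a
bounding box of area at least `1.09 ^ (8k)`. -/
theorem icplanar_rac_exponential_area : ∀ k : ℕ, 1 ≤ k →
    ∃ (V : Type) (inst : Fintype V) (G : SimpleGraph V),
      @Fintype.card V inst = 8 * k ∧
      (∃ ρ : V → ℝ × ℝ, IsICPlanarDrawing G ρ) ∧
      ∀ ρ : V → ℝ × ℝ, IsICPlanarDrawing G ρ → IsRACDrawing G ρ →
        (∀ u v : V, G.Adj u v →
          1 ≤ Real.sqrt (((ρ u).1 - (ρ v).1) ^ 2 + ((ρ u).2 - (ρ v).2) ^ 2)) →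
        (1.09 : ℝ) ^ (8 * k) ≤
          (sSup (Set.range fun v => (ρ v).1) - sInf (Set.range fun v => (ρ v).1)) *
          (sSup (Set.range fun v => (ρ v).2) - sInf (Set.range fun v => (ρ v).2)) := by
  intro k hk
  obtain rfl | ⟨n, rfl⟩ : k = 1 ∨ ∃ n, k = n + 2 := by
    obtain _ | _ | n := k
    exacts [absurd hk (by decide), .inl rfl, .inr ⟨n, rfl⟩]
  · refine ⟨Fin 8, inferInstance, completeFiveGraph, rfl,
      ⟨_, isICPlanarDrawing_completeFiveGraph⟩, fun ρ hρ hrac hlen => ?_⟩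
    exact (one_point_zero_nine_pow_le_two_pow 1).trans <| (pow_one _).trans_le <|
      isK5_completeFiveGraph.two_le_boundingBox hρ hrac fun u v huv =>
        one_le_dotAt_of_one_le_sqrt (hlen u v huv)
  · refine ⟨DoubleChainVertex n, inferInstance, doubleChainGraph n, ?_,
      ⟨_, isICPlanarDrawing_doubleChainGraph n⟩, fun ρ hρ hrac hlen => ?_⟩
    · simp only [Fintype.card_prod, Fintype.card_bool, Fintype.card_fin]
      ring
    · exact (one_point_zero_nine_pow_le_two_pow (n + 2)).trans <|
        (isDoubleChain_doubleChainGraph n).two_pow_le_boundingBox hρ hrac fun u v huv =>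
          one_le_dotAt_of_one_le_sqrt (hlen u v huv)
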